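/- arXiv:2006.10624 — 11 statements merged into one kernel-verified Lean document; each statement's English description precedes it below -/
import Mathlib

section
/- Let Ψ: ℝ → [0,∞) be convex, superlinear (Ψ(s)/|s| → +∞ as |s| → +∞) with Ψ(0) = 0, and let α: [0,∞)×[0,∞) → [0,∞) be concave and continuous. Define Υ: [0,∞)×[0,∞)×ℝ → [0,+∞] by Υ(u,v,w) := α(u,v)·Ψ(w/α(u,v)) if α(u,v) > 0, Υ(u,v,w) := 0 if α(u,v) = 0 and w = 0, and Υ(u,v,w) := +∞ if α(u,v) = 0 and w ≠ 0. Then: (i) Υ is convex on [0,∞)×[0,∞)×ℝ, i.e. Υ(t·p + (1−t)·q) ≤ t·Υ(p) + (1−t)·Υ(q) for all p, q in the domain and t ∈ [0,1] (with the usual arithmetic in [0,+∞]); (ii) Υ is lower semicontinuous on [0,∞)×[0,∞)×ℝ; (iii) if Ψ is in addition strictly convex, then for every (u,v) with α(u,v) > 0 the map w ↦ Υ(u,v,w) is strictly convex; (iv) if α is positively 1-homogeneous (α(λu,λv) = λα(u,v) for all λ ≥ 0), then Υ is positively 1-homogeneous: Υ(λu,λv,λw) = λ·Υ(u,v,w)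 for all λ > 0. -/
open Filter Set
open scoped ENNReal

/-- The perspective-type function `Υ(u,v,w) = α(u,v)·Ψ(w/α(u,v))`, extended by
`0` when `α(u,v) = 0` and `w = 0`, and by `+∞` when `α(u,v) = 0` and `w ≠ 0`. -/
noncomputable def Upsilon (Ψ : ℝ → ℝ) (α : ℝ → ℝ → ℝ) (u v w : ℝ) : ℝ≥0∞ :=
  if 0 < α u v then ENNReal.ofReal (α u v * Ψ (w / α u v))
  else if w = 0 then 0 else ⊤

lemma ups_fin (Ψ : ℝ → ℝ) (α : ℝ → ℝ → ℝ) (u v w : ℝ) (h0 : 0 ≤ α u v)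
    (h : Upsilon Ψ α u v w ≠ ⊤) :
    Upsilon Ψ α u v w = ENNReal.ofReal (α u v * Ψ (w / α u v)) ∧
      α u v * (w / α u v) = w := by
  unfold Upsilon at *
  split_ifs at * with h1 h2
  · exact ⟨rfl, by field_simp⟩
  · have : α u v = 0 := le_antisymm (not_lt.1 h1) h0
    simp [this, h2]
  · exact absurd rfl h

lemma ups_sub (Ψ : ℝ → ℝ) (hΨconv : ConvexOn ℝ Set.univ Ψ) (hΨzero : Ψ 0 = 0)
    (c d x y : ℝ) (hc : 0 ≤ c) (hd : 0 ≤ d) (hcd : c + d ≤ 1) :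
    Ψ (c * x + d * y) ≤ c * Ψ x + d * Ψ y := by
  rcases (add_nonneg hc hd).eq_or_lt with h | h
  · have h1 : c = 0 := by linarith
    have h2 : d = 0 := by linarith
    simp [h1, h2, hΨzero]
  · have h1 := hΨconv.2 (mem_univ x) (mem_univ y) 
      (show 0 ≤ c / (c + d) by positivity) (show 0 ≤ d / (c + d) by positivity) (by field_simp)
    have h2 := hΨconv.2 (mem_univ (c / (c + d) * x + d / (c + d) * y)) (mem_univ 0)
      h.le (sub_nonneg.2 hcd) (by ring)
    simp only [smul_eq_mul, hΨzero, mul_zero, add_zero] at h1 h2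
    have e : (c + d) * (c / (c + d) * x + d / (c + d) * y) = c * x + d * y := by field_simp
    have e2 : (c + d) * (c / (c + d) * Ψ x + d / (c + d) * Ψ y) = c * Ψ x + d * Ψ y := by
      field_simp
    rw [e] at h2
    have := mul_le_mul_of_nonneg_left h1 h.le
    linarith

theorem upsilon_properties
    (Ψ : ℝ → ℝ) (α : ℝ → ℝ → ℝ)
    (hΨconv : ConvexOn ℝ Set.univ Ψ)
    (hΨnonneg : ∀ s : ℝ, 0 ≤ Ψ s)
    (hΨzero : Ψ 0 = 0)
    (hΨsuper_top : Tendsto (fun s : ℝ => Ψ s / |s|) atTop atTop)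
    (hΨsuper_bot : Tendsto (fun s : ℝ => Ψ s / |s|) atBot atTop)
    (hαconc : ConcaveOn ℝ (Set.Ici (0:ℝ) ×ˢ Set.Ici (0:ℝ)) (fun p => α p.1 p.2))
    (hαcont : ContinuousOn (fun p : ℝ × ℝ => α p.1 p.2) (Set.Ici (0:ℝ) ×ˢ Set.Ici (0:ℝ)))
    (hαnonneg : ∀ u v : ℝ, 0 ≤ u → 0 ≤ v → 0 ≤ α u v) :
    -- (i) convexity of Υ on [0,∞)×[0,∞)×ℝ
    (∀ u₁ v₁ w₁ u₂ v₂ w₂ t : ℝ, 0 ≤ u₁ → 0 ≤ v₁ → 0 ≤ u₂ → 0 ≤ v₂ →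
        0 ≤ t → t ≤ 1 →
        Upsilon Ψ α (t * u₁ + (1 - t) * u₂) (t * v₁ + (1 - t) * v₂)
            (t * w₁ + (1 - t) * w₂)
          ≤ ENNReal.ofReal t * Upsilon Ψ α u₁ v₁ w₁
            + ENNReal.ofReal (1 - t) * Upsilon Ψ α u₂ v₂ w₂) ∧
    -- (ii) lower semicontinuity on [0,∞)×[0,∞)×ℝ
    LowerSemicontinuousOn (fun p : ℝ × ℝ × ℝ => Upsilon Ψ α p.1 p.2.1 p.2.2)
      {p : ℝ × ℝ × ℝ | 0 ≤ p.1 ∧ 0 ≤ p.2.1} ∧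
    -- (iii) strict convexity in `w` when `Ψ` is strictly convex and `α(u,v) > 0`
    (StrictConvexOn ℝ Set.univ Ψ →
      ∀ u v : ℝ, 0 ≤ u → 0 ≤ v → 0 < α u v →
        ∀ w₁ w₂ t : ℝ, w₁ ≠ w₂ → 0 < t → t < 1 →
          Upsilon Ψ α u v (t * w₁ + (1 - t) * w₂)
            < ENNReal.ofReal t * Upsilon Ψ α u v w₁
              + ENNReal.ofReal (1 - t) * Upsilon Ψ α u v w₂) ∧
    -- (iv) positive 1-homogeneity when α is positively 1-homogeneous
    ((∀ lam u v : ℝ, 0 ≤ lam → 0 ≤ u → 0 ≤ v → α (lam * u) (lam * v) = lam * α u v) →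
      ∀ lam u v w : ℝ, 0 < lam → 0 ≤ u → 0 ≤ v →
        Upsilon Ψ α (lam * u) (lam * v) (lam * w) = ENNReal.ofReal lam * Upsilon Ψ α u v w) := by
  have hΨc : Continuous Ψ := by
    have := hΨconv.continuousOn_interior
    rwa [interior_univ, continuousOn_univ] at this
  refine ⟨?_, ?_, ?_, ?_⟩
  · intro u₁ v₁ w₁ u₂ v₂ w₂ t hu1 hv1 hu2 hv2 ht0 ht1
    rcases ht0.eq_or_lt with rfl | ht0'
    · simp
    rcases ht1.eq_or_lt with rfl | ht1'
    · simp
    have hs : 0 < 1 - t := by linarith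
    by_cases hf1 : Upsilon Ψ α u₁ v₁ w₁ = ⊤
    · rw [hf1, ENNReal.mul_top (by simpa using ht0')]; simp
    by_cases hf2 : Upsilon Ψ α u₂ v₂ w₂ = ⊤
    · rw [hf2, ENNReal.mul_top (by simpa using ht1')]; simp
    have ha1 := hαnonneg u₁ v₁ hu1 hv1
    have ha2 := hαnonneg u₂ v₂ hu2 hv2
    obtain ⟨e1, k1⟩ := ups_fin Ψ α u₁ v₁ w₁ ha1 hf1
    obtain ⟨e2, k2⟩ := ups_fin Ψ α u₂ v₂ w₂ ha2 hf2
    have hc := hαconc.2 (x := (u₁, v₁)) (y := (u₂, v₂)) ⟨hu1, hv1⟩ ⟨hu2, hv2⟩ ht0 hs.le (by ring)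
    simp only [smul_eq_mul, Prod.smul_mk, Prod.mk_add_mk] at hc
    rw [e1, e2, ← ENNReal.ofReal_mul ht0, ← ENNReal.ofReal_mul hs.le,
      ← ENNReal.ofReal_add (by have := hΨnonneg (w₁ / α u₁ v₁); positivity)
        (mul_nonneg hs.le (mul_nonneg ha2 (hΨnonneg _)))]
    unfold Upsilon
    generalize α (t * u₁ + (1 - t) * u₂) (t * v₁ + (1 - t) * v₂) = a at *
    generalize w₁ / α u₁ v₁ = x at *
    generalize w₂ / α u₂ v₂ = y at *
    generalize α u₁ v₁ = a1 at *
    generalize α u₂ v₂ = a2 at *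
    have m1 : 0 ≤ t * a1 := by positivity
    have m2 : 0 ≤ (1 - t) * a2 := by positivity
    split_ifs with h1 h2
    · apply ENNReal.ofReal_le_ofReal
      have := ups_sub Ψ hΨconv hΨzero (t * a1 / a) ((1 - t) * a2 / a) x y (by positivity)
        (by positivity) (by rw [← add_div]; exact (div_le_one h1).2 hc)
      have e : (t * w₁ + (1 - t) * w₂) / a = t * a1 / a * x + (1 - t) * a2 / a * y := by
        rw [← k1, ← k2]; field_simp
      rw [e]
      refine (mul_le_mul_of_nonneg_left this h1.le).trans (le_of_eq ?_)
      field_simp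
    · simp
    · exfalso
      apply h2
      have q1 : t * a1 = 0 := by linarith
      have q2 : (1 - t) * a2 = 0 := by linarith
      rw [← k1, ← k2, ← mul_assoc, ← mul_assoc, q1, q2]; simp
  · rintro ⟨u, v, w⟩ ⟨hu, hv⟩
    simp only at hu hv
    have hT : Tendsto (fun p : ℝ × ℝ × ℝ => α p.1 p.2.1)
        (nhdsWithin (u, v, w) {p : ℝ × ℝ × ℝ | 0 ≤ p.1 ∧ 0 ≤ p.2.1}) (nhds (α u v)) := by
      have h1 : ContinuousWithinAt (fun p : ℝ × ℝ × ℝ => (p.1, p.2.1))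
        {p : ℝ × ℝ × ℝ | 0 ≤ p.1 ∧ 0 ≤ p.2.1} (u, v, w) := by fun_prop
      have h2 := hαcont (u, v) ⟨hu, hv⟩
      exact ContinuousWithinAt.comp (g := fun p : ℝ × ℝ => α p.1 p.2)
        (f := fun p : ℝ × ℝ × ℝ => (p.1, p.2.1)) h2 h1 (fun p hp => hp)
    have hW : Tendsto (fun p : ℝ × ℝ × ℝ => p.2.2)
        (nhdsWithin (u, v, w) {p : ℝ × ℝ × ℝ | 0 ≤ p.1 ∧ 0 ≤ p.2.1}) (nhds w) := by
      have h1 : ContinuousWithinAt (fun p : ℝ × ℝ × ℝ => p.2.2)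
        {p : ℝ × ℝ × ℝ | 0 ≤ p.1 ∧ 0 ≤ p.2.1} (u, v, w) := by fun_prop
      exact h1
    intro y hy
    rcases (hαnonneg u v hu hv).eq_or_lt with h | h
    · by_cases hw : w = 0
      · simp [Upsilon, ← h, hw] at hy
      · have hyt : y ≠ ⊤ := by
          rintro rfl
          simp at hy
        have hw' : 0 < |w| := abs_pos.2 hw
        set M : ℝ := (y.toReal + 1) / (|w| / 2) with hM
        obtain ⟨R1, hR1⟩ := eventually_atTop.1 (hΨsuper_top.eventually_ge_atTop M)
        obtain ⟨R2, hR2⟩ := eventually_atBot.1 (hΨsuper_bot.eventually_ge_atTop M)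
        set R := max R1 (-R2) ⊔ 1 with hR
        have hRpos : 0 < R := lt_of_lt_of_le one_pos (le_max_right _ _)
        have hRR1 : R1 ≤ R := (le_max_left _ _).trans (le_max_left _ _)
        have hRR2 : -R2 ≤ R := (le_max_right _ _).trans (le_max_left _ _)
        have key : ∀ s : ℝ, R ≤ |s| → M * |s| ≤ Ψ s := by
          intro s hs
          have hsp : 0 < |s| := lt_of_lt_of_le hRpos hs
          rw [← le_div_iff₀ hsp]
          rcases le_abs'.1 hs with h' | h'
          · exact hR2 s (by linarith)
          · exact hR1 s (by linarith)
        rw [← h] at hT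
        filter_upwards [hT.eventually_lt_const (show 0 < |w| / 2 / R by positivity),
          hW.abs.eventually_const_lt (show |w| / 2 < |w| by linarith)] with p hp1 hp2
        unfold Upsilon
        have hp3 : p.2.2 ≠ 0 := by
          intro h0; rw [h0, abs_zero] at hp2; linarith
        rw [if_neg hp3]
        split_ifs with h1
        · rw [gt_iff_lt, ENNReal.lt_ofReal_iff_toReal_lt hyt]
          have hab : |p.2.2 / α p.1 p.2.1| = |p.2.2| / α p.1 p.2.1 := by
            rw [abs_div, abs_of_pos h1]
          have hk := key (p.2.2 / α p.1 p.2.1) (by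
            rw [hab, le_div_iff₀ h1]
            rw [lt_div_iff₀ hRpos] at hp1
            linarith)
          rw [hab] at hk
          have h2 := mul_le_mul_of_nonneg_left hk h1.le
          have h3 : α p.1 p.2.1 * (M * (|p.2.2| / α p.1 p.2.1)) = M * |p.2.2| := by
            field_simp
          have hMp : 0 < M := by
            have : 0 ≤ y.toReal := ENNReal.toReal_nonneg
            positivity
          have h4 : M * (|w| / 2) = y.toReal + 1 := by
            rw [hM]; field_simp
          have h5 := mul_lt_mul_of_pos_left hp2 hMp
          linarith
        · exact hyt.lt_top
    · have hlim : Tendsto (fun p : ℝ × ℝ × ℝ =>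
          ENNReal.ofReal (α p.1 p.2.1 * Ψ (p.2.2 / α p.1 p.2.1)))
          (nhdsWithin (u, v, w) {p : ℝ × ℝ × ℝ | 0 ≤ p.1 ∧ 0 ≤ p.2.1})
          (nhds (ENNReal.ofReal (α u v * Ψ (w / α u v)))) :=
        ENNReal.tendsto_ofReal (hT.mul ((hΨc.tendsto _).comp (hW.div hT h.ne')))
      simp only [Upsilon, if_pos h] at hy
      filter_upwards [hlim.eventually_const_lt hy, hT.eventually_const_lt h] with p hp1 hp2
      simp only [Upsilon, if_pos hp2]
      exact hp1
  · intro hs u v hu hv ha w₁ w₂ t hw ht0 ht1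
    have hs' : 0 < 1 - t := by linarith
    simp only [Upsilon, if_pos ha]
    have n1 := hΨnonneg (w₁ / α u v)
    have n2 := hΨnonneg (w₂ / α u v)
    rw [← ENNReal.ofReal_mul ht0.le, ← ENNReal.ofReal_mul hs'.le,
      ← ENNReal.ofReal_add (by positivity) (by positivity)]
    have h1 := hs.2 (mem_univ (w₁ / α u v)) (mem_univ (w₂ / α u v))
      (fun h => hw ((div_left_inj' ha.ne').1 h)) ht0 hs' (by ring)
    simp only [smul_eq_mul] at h1
    have e : (t * w₁ + (1 - t) * w₂) / α u v = t * (w₁ / α u v) + (1 - t) * (w₂ / α u v) := by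
      ring
    have h2 := mul_lt_mul_of_pos_left h1 ha
    rw [← e] at h2
    have h3 : α u v * Ψ ((t * w₁ + (1 - t) * w₂) / α u v) <
      t * (α u v * Ψ (w₁ / α u v)) + (1 - t) * (α u v * Ψ (w₂ / α u v)) := by linarith
    exact (ENNReal.ofReal_lt_ofReal_iff
      (lt_of_le_of_lt (mul_nonneg ha.le (hΨnonneg _)) h3)).2 h3
  · intro hh lam u v w hl hu hv
    unfold Upsilon
    rw [hh lam u v hl.le hu hv]
    by_cases ha : 0 < α u v
    · rw [if_pos ha, if_pos (mul_pos hl ha), ← ENNReal.ofReal_mul hl.le,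
        mul_div_mul_left _ _ hl.ne', mul_assoc]
    · rw [if_neg ha, if_neg (fun h => ha (pos_of_mul_pos_right h hl.le))]
      by_cases hw : w = 0
      · simp [hw]
      · rw [if_neg hw, if_neg (mul_ne_zero hl.ne' hw), ENNReal.mul_top (by simpa using hl)]
end

section
/- Let f: [0,∞) → [0,∞) be continuous and nondecreasing with f(r) → +∞ as r → +∞, and let f₀ ≥ 0 be such that there exist c > 0 and δ > 0 with f(r) − f₀ ≥ c·r for every r ∈ (0,δ) (i.e. liminf_{r↓0} (f(r) − f₀)/r > 0). Then for every g₀ ∈ [0, f₀] there exists a function g: ℝ → ℝ of class C^∞ that is concave and nonnegative on [0,∞), satisfies g(r) ≤ f(r) for every r ≥ 0, g(0) = g₀, and g(r) → +∞ as r → +∞. -/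
open Filter

theorem smooth_aux (b : ℕ → ℝ) (hb : ∀ n, 0 < b n) (hs : Summable fun n => 1 / b n) :
    (∀ r : ℝ, Summable fun n => 1 - Real.exp (-(r / b n))) ∧
    ContDiff ℝ (⊤ : ℕ∞) (fun r : ℝ => ∑' n, (1 - Real.exp (-(r / b n)))) := by
  have key : ∀ (R : ℝ) (n : ℕ) (z : ℂ), ‖z‖ ≤ R →
      ‖1 - Complex.exp (-(z / (b n : ℂ)))‖ ≤ 1 / b n * (R * Real.exp (R * ∑' n, 1 / b n)) := by
    intro R n z hz
    have h1 := Complex.norm_exp_sub_sum_le_norm_mul_exp (-(z / (b n : ℂ))) 1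
    have h2 : ‖-(z / (b n : ℂ))‖ = ‖z‖ * (1 / b n) := by
      rw [norm_neg, norm_div, Complex.norm_real, Real.norm_of_nonneg (hb n).le]; ring
    have hp : 0 < 1 / b n := one_div_pos.mpr (hb n)
    have h3 : 1 / b n ≤ ∑' n, 1 / b n := hs.le_tsum n (fun j _ => (one_div_pos.mpr (hb j)).le)
    have hR : 0 ≤ R := (norm_nonneg z).trans hz
    rw [norm_sub_rev]
    simp only [Finset.range_one, Finset.sum_singleton, pow_zero, Nat.factorial_zero, Nat.cast_one, div_one, pow_one, h2] at h1
    calc _ ≤ _ := h1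
      _ ≤ (R * (1 / b n)) * Real.exp (R * ∑' n, 1 / b n) := by
        gcongr
      _ = _ := by ring
  have hsum : ∀ R : ℝ, Summable fun n => 1 / b n * (R * Real.exp (R * ∑' n, 1 / b n)) :=
    fun R => hs.mul_right _
  have hcs : ∀ z : ℂ, Summable fun n => 1 - Complex.exp (-(z / (b n : ℂ))) := fun z =>
    Summable.of_norm_bounded (hsum ‖z‖) (fun n => key _ n z le_rfl)
  have hdiff : Differentiable ℂ (fun z : ℂ => ∑' n, (1 - Complex.exp (-(z / (b n : ℂ))))) := by
    intro z
    have := Complex.differentiableOn_tsum_of_summable_norm (U := Metric.ball (0:ℂ) (‖z‖ + 1))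
      (F := fun n (z : ℂ) => 1 - Complex.exp (-(z / (b n : ℂ)))) (hsum (‖z‖ + 1))
      (fun i => by fun_prop) Metric.isOpen_ball
      (fun i w hw => key _ i w (by simpa using (mem_ball_zero_iff.mp hw).le))
    exact this.differentiableAt (Metric.isOpen_ball.mem_nhds (by simp))
  have hre : ∀ (r : ℝ) n, 1 - Complex.exp (-((r : ℂ) / (b n : ℂ)))
      = ((1 - Real.exp (-(r / b n)) : ℝ) : ℂ) := by
    intro r n; push_cast; rfl
  refine ⟨fun r => ?_, ?_⟩
  · have := hcs r
    simp only [hre] at this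
    exact Complex.summable_ofReal.mp this
  · have h := (hdiff.contDiff (n := ((⊤ : ℕ∞) : WithTop ℕ∞))).real_of_complex
    have e : (fun r : ℝ => ∑' n, (1 - Real.exp (-(r / b n)))) =
        fun r : ℝ => (∑' n, (1 - Complex.exp (-((r : ℂ) / (b n : ℂ))))).re := by
      funext r
      rw [tsum_congr (hre r), ← Complex.ofReal_tsum, Complex.ofReal_re]
    rw [e]
    exact h

theorem seq_aux (R : ℕ → ℝ) (b₀ : ℝ) : ∃ b : ℕ → ℝ, b 0 = b₀ ∧
    ∀ n, 2 * b n ≤ b (n+1) ∧ 2 * R n ≤ b (n+1) := by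
  refine ⟨fun n => Nat.rec b₀ (fun n x => max (2 * x) (2 * R n)) n, rfl, fun n => ⟨?_, ?_⟩⟩
  · exact le_max_left _ _
  · exact le_max_right _ _

theorem concave_aux (β : ℝ) : ConcaveOn ℝ (Set.Ici 0) (fun r : ℝ => 1 - Real.exp (-(r / β))) := by
  refine ⟨convex_Ici 0, ?_⟩
  intro x _ y _ s t hs ht hst
  have := convexOn_exp.2 (Set.mem_univ (-(x / β))) (Set.mem_univ (-(y / β))) hs ht hst
  simp only [smul_eq_mul] at this ⊢
  have e : -((s * x + t * y) / β) = s * -(x / β) + t * -(y / β) := by ring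
  rw [e]
  nlinarith

/-- A smooth concave nonnegative minorant `g` of a continuous nondecreasing function
`f` that diverges at infinity, with prescribed value `g(0) = g₀ ∈ [0, f₀]`,
where `f` has positive slope above `f₀` near `0`. -/
theorem smooth_concave_minorant
    (f : ℝ → ℝ) (f₀ : ℝ)
    (hf_cont : ContinuousOn f (Set.Ici (0:ℝ)))
    (hf_mono : MonotoneOn f (Set.Ici (0:ℝ)))
    (hf_nonneg : ∀ r : ℝ, 0 ≤ r → 0 ≤ f r)
    (hf_top : Tendsto f atTop atTop)
    (hf₀ : 0 ≤ f₀)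
    (hslope : ∃ c : ℝ, 0 < c ∧ ∃ δ : ℝ, 0 < δ ∧
      ∀ r : ℝ, 0 < r → r < δ → c * r ≤ f r - f₀) :
    ∀ g₀ : ℝ, 0 ≤ g₀ → g₀ ≤ f₀ →
      ∃ g : ℝ → ℝ, ContDiff ℝ (⊤ : ℕ∞) g ∧ ConcaveOn ℝ (Set.Ici 0) g ∧
        (∀ r : ℝ, 0 ≤ r → 0 ≤ g r) ∧ (∀ r : ℝ, 0 ≤ r → g r ≤ f r) ∧
        g 0 = g₀ ∧ Tendsto g atTop atTop := by
  intro g₀ hg₀ hgf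
  obtain ⟨c, hc, δ, hδ, hsl⟩ := hslope
  have hf0 : f₀ ≤ f 0 := by
    have h1 : Tendsto f (nhdsWithin 0 (Set.Ioi 0)) (nhds (f 0)) :=
      (hf_cont 0 Set.self_mem_Ici).mono_left (nhdsWithin_mono _ Set.Ioi_subset_Ici_self)
    refine ge_of_tendsto h1 ?_
    filter_upwards [Ioo_mem_nhdsGT hδ] with r hr
    have := hsl r hr.1 hr.2
    have := mul_pos hc hr.1
    linarith
  set b₀ := δ / 2 with hb₀
  have hb₀p : 0 < b₀ := by positivity
  set a := c * b₀ / 2 with ha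
  have hap : 0 < a := by positivity
  have hR : ∀ n : ℕ, ∃ R : ℝ, ∀ r, R ≤ r → a * (n + 3) + g₀ ≤ f r := by
    intro n
    exact eventually_atTop.mp (hf_top.eventually_ge_atTop _)
  choose R hR using hR
  obtain ⟨b, hb0, hb⟩ := seq_aux R b₀
  have hbge : ∀ n, b₀ * 2 ^ n ≤ b n := by
    intro n
    induction n with
    | zero => simp [hb0]
    | succ n ih => have := (hb n).1; rw [pow_succ]; linarith
  have hbp : ∀ n, 0 < b n := fun n => lt_of_lt_of_le (by positivity) (hbge n)
  have hs : Summable fun n => 1 / b n := by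
    refine Summable.of_nonneg_of_le (fun n => (one_div_pos.mpr (hbp n)).le) (fun n => ?_)
      ((summable_geometric_two).mul_left (1 / b₀))
    calc 1 / b n ≤ 1 / (b₀ * 2 ^ n) := one_div_le_one_div_of_le (by positivity) (hbge n)
      _ = _ := by rw [one_div_pow]; field_simp
  obtain ⟨hsm, hcd⟩ := smooth_aux b hbp hs
  have hterm0 : ∀ r, 0 ≤ r → ∀ n, 0 ≤ 1 - Real.exp (-(r / b n)) := by
    intro r hr n
    have : Real.exp (-(r / b n)) ≤ 1 :=
      Real.exp_le_one_iff.mpr (neg_nonpos.mpr (div_nonneg hr (hbp n).le))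
    linarith
  have hterm1 : ∀ r n, 1 - Real.exp (-(r / b n)) ≤ min 1 (r / b n) := by
    intro r n
    refine le_min ?_ ?_
    · linarith [Real.exp_pos (-(r / b n))]
    · linarith [Real.add_one_le_exp (-(r / b n))]
  have hP : ∀ r, 0 ≤ r → ∀ n, a * (∑ k ∈ Finset.range (n+1), min 1 (r / b k) + min 1 (r / b n))
      ≤ f r - g₀ := by
    intro r hr n
    induction n with
    | zero =>
      simp only [zero_add, Finset.range_one, Finset.sum_singleton, hb0]
      rcases hr.eq_or_lt with rfl | hr'
      · simp; linarith
      rcases le_total r b₀ with h | h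
      · have h1 := hsl r hr' (by linarith)
        have h2 : a * (min 1 (r / b₀) + min 1 (r / b₀)) ≤ a * (r / b₀ + r / b₀) := by
          gcongr <;> exact min_le_right _ _
        have h3 : a * (r / b₀ + r / b₀) = c * r := by rw [ha]; field_simp; ring
        linarith
      · have h1 := hsl b₀ hb₀p (by linarith)
        have h2 : a * (min 1 (r / b₀) + min 1 (r / b₀)) ≤ a * (1 + 1) := by
          gcongr <;> exact min_le_left _ _
        have h3 : f b₀ ≤ f r := hf_mono hb₀p.le hr h
        linarith
    | succ n ih =>
      rcases le_total r (b (n+1) / 2) with h | h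
      · refine le_trans ?_ ih
        rw [Finset.sum_range_succ _ (n+1), add_assoc]
        gcongr
        have hq := hbp (n+1)
        have h1 : r / b (n+1) ≤ 1 / 2 := by rw [div_le_iff₀ hq]; linarith
        have h2 : 2 * (r / b (n+1)) ≤ r / b n := by
          rw [← mul_div_assoc, div_le_div_iff₀ hq (hbp n)]
          nlinarith [(hb n).1]
        have h3 := min_le_right 1 (r / b (n+1))
        refine le_min ?_ ?_ <;> linarith
      · have h1 := hR n r (by linarith [(hb n).2])
        have h2 : ∑ k ∈ Finset.range (n+1+1), min 1 (r / b k) ≤ n + 2 := by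
          refine (Finset.sum_le_sum (fun k _ => min_le_left _ _)).trans ?_
          simp; linarith
        have h3 := min_le_left 1 (r / b (n+1))
        have : a * (∑ k ∈ Finset.range (n+1+1), min 1 (r / b k) + min 1 (r / b (n+1)))
          ≤ a * (n + 3) := by
          apply mul_le_mul_of_nonneg_left _ hap.le
          linarith
        linarith
  refine ⟨fun r => g₀ + a * ∑' n, (1 - Real.exp (-(r / b n))), contDiff_const.add
    (contDiff_const.mul hcd), ?_, ?_, ?_, by simp, ?_⟩
  · refine ⟨convex_Ici 0, ?_⟩
    intro x hx y hy s t hs' ht hst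
    have h : s * (∑' n, (1 - Real.exp (-(x / b n)))) + t * (∑' n, (1 - Real.exp (-(y / b n))))
        ≤ ∑' n, (1 - Real.exp (-((s * x + t * y) / b n))) := by
      rw [← tsum_mul_left, ← tsum_mul_left,
        ← ((hsm x).mul_left s).tsum_add ((hsm y).mul_left t)]
      exact (((hsm x).mul_left s).add ((hsm y).mul_left t)).tsum_le_tsum
        (fun n => (concave_aux (b n)).2 hx hy hs' ht hst) (hsm _)
    simp only [smul_eq_mul]
    have h' := mul_le_mul_of_nonneg_left h hap.le
    have e : g₀ = s * g₀ + t * g₀ := by rw [← add_mul, hst, one_mul]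
    linarith
  · intro r hr
    exact add_nonneg hg₀ (mul_nonneg hap.le (tsum_nonneg (hterm0 r hr)))
  · intro r hr
    have : ∑' n, (1 - Real.exp (-(r / b n))) ≤ (f r - g₀) / a := by
      refine Real.tsum_le_of_sum_range_le (hterm0 r hr) (fun n => ?_)
      rw [le_div_iff₀ hap, mul_comm]
      refine le_trans ?_ (hP r hr n)
      gcongr
      rw [Finset.sum_range_succ, add_assoc]
      refine (Finset.sum_le_sum (fun k _ => hterm1 r k)).trans ?_
      have : 0 ≤ min 1 (r / b n) := le_min zero_le_one (div_nonneg hr (hbp n).le)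
      linarith
    rw [le_div_iff₀ hap] at this
    show g₀ + a * _ ≤ f r
    linarith
  · refine tendsto_atTop_add_const_left _ _ (Tendsto.const_mul_atTop hap ?_)
    refine tendsto_atTop.mpr (fun M => ?_)
    obtain ⟨n, hn⟩ := exists_nat_gt M
    have h1 : Tendsto (fun r : ℝ => ∑ k ∈ Finset.range n, (1 - Real.exp (-(r / b k)))) atTop
        (nhds (∑ k ∈ Finset.range n, (1 - 0))) := by
      refine tendsto_finsetSum _ (fun k _ => tendsto_const_nhds.sub ?_)
      exact Real.tendsto_exp_neg_atTop_nhds_zero.comp (tendsto_id.atTop_div_const (hbp k))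
    have h2 := h1.eventually_const_lt (u := M) (by simpa using hn)
    filter_upwards [h2, eventually_ge_atTop 0] with r hr hr0
    exact hr.le.trans ((hsm r).sum_le_tsum _ (fun k _ => hterm0 r hr0 k))
end

section
/- Let Ψ*: ℝ → ℝ be convex, differentiable, even, nonnegative, with Ψ*(0) = 0 and superlinear. Let α: [0,∞)×[0,∞) → [0,∞) be continuous, concave, symmetric (α(u,v) = α(v,u)), not identically zero, and satisfy lim_{r→∞} α(r,1)/r = 0. Let β: [0,∞) → [0,∞) be convex and superlinear, and assume there exists β₀' > 0 such that β(s) − β(r) ≥ β₀'·(s − r) for all 0 ≤ r ≤ s. Then there exists a function ω: [0,∞) → [0,∞) of class C^∞, convex and superlinear, such that ω(r) ≤ β(r) for every r ≥ 0 and Ψ*(ω'(s) − ω'(r))·α(s,r) ≤ r + s for all r, s ≥ 0. -/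
open Filter

lemma exists_slow_h (T : ℕ → ℝ) (h0 : 1 ≤ T 0) (hT : ∀ n, 2 * T n + 1 ≤ T (n+1))
    (a : ℝ) (ha : 0 < a) :
    ∃ h : ℝ → ℝ, ContDiff ℝ (⊤ : ℕ∞) h ∧ Monotone h ∧
      (∀ (N : ℕ) (s : ℝ), s ≤ T N → h s ≤ a * N) ∧
      (∀ (N : ℕ) (s : ℝ), (∀ n < N, 2 * T n ≤ s) → a * N ≤ h s) := by
  have hTn : ∀ n : ℕ, (n : ℝ) + 1 ≤ T n := by
    intro n
    induction n with
    | zero => simpa using h0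
    | succ k ih =>
      have := hT k
      have : (0:ℝ) ≤ k := Nat.cast_nonneg k
      push_cast
      linarith
  have hpos : ∀ n : ℕ, 0 < T n := fun n => by
    have : (0:ℝ) ≤ n := Nat.cast_nonneg n
    linarith [hTn n]
  have hmono : Monotone T := monotone_nat_of_le_succ fun n => by
    linarith [hT n, hpos n]
  let S : ℕ → ℝ → ℝ := fun M s => a * ∑ n ∈ Finset.range M, Real.smoothTransition (s / T n - 1)
  have hSle : ∀ (N M : ℕ) (s : ℝ), N ≤ M → s ≤ T N → S M s = S N s := by
    intro N M s hNM hs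
    have : ∑ n ∈ Finset.range N, Real.smoothTransition (s / T n - 1)
        = ∑ n ∈ Finset.range M, Real.smoothTransition (s / T n - 1) := by
      apply Finset.sum_subset (Finset.range_mono hNM)
      intro n _ hn
      have hn' : N ≤ n := by simpa using hn
      apply Real.smoothTransition.zero_of_nonpos
      have : s / T n ≤ 1 := (div_le_one (hpos n)).2 (hs.trans (hmono hn'))
      linarith
    simp only [S]
    rw [this]
  have hSeq : ∀ (N M : ℕ) (s : ℝ), s ≤ T N → s ≤ T M → S M s = S N s := by
    intro N M s h1 h2
    rcases le_total N M with h | h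
    · exact hSle N M s h h1
    · exact (hSle M N s h h2).symm
  have hceil : ∀ s : ℝ, s ≤ T ⌈s⌉₊ := fun s => by
    linarith [Nat.le_ceil s, hTn ⌈s⌉₊]
  have hSmono : ∀ M, Monotone (S M) := by
    intro M r s hrs
    apply mul_le_mul_of_nonneg_left _ ha.le
    apply Finset.sum_le_sum
    intro n _
    apply Real.smoothTransition.monotone
    have := div_le_div_of_nonneg_right hrs (hpos n).le
    linarith
  refine ⟨fun s => S ⌈s⌉₊ s, ?_, ?_, ?_, ?_⟩
  · rw [contDiff_iff_contDiffAt]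
    intro s
    have hsm : ContDiff ℝ (⊤ : ℕ∞) (S (⌈s⌉₊)) := by
      apply contDiff_const.mul
      apply ContDiff.sum
      intro n _
      exact Real.smoothTransition.contDiff.comp ((contDiff_id.div_const _).sub contDiff_const)
    apply hsm.contDiffAt.congr_of_eventuallyEq
    have : s < T ⌈s⌉₊ := by linarith [Nat.le_ceil s, hTn ⌈s⌉₊]
    filter_upwards [eventually_lt_nhds this] with x hx
    exact hSeq _ _ _ hx.le (hceil x)
  · intro r s hrs
    have : S ⌈r⌉₊ r = S ⌈s⌉₊ r := hSeq _ _ _ (hrs.trans (hceil s)) (hceil r)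
    simp only [this]
    exact hSmono _ hrs
  · intro N s hs
    have : S ⌈s⌉₊ s = S N s := hSeq _ _ _ hs (hceil s)
    simp only [this]
    apply mul_le_mul_of_nonneg_left _ ha.le
    calc _ ≤ ∑ n ∈ Finset.range N, (1:ℝ) := Finset.sum_le_sum fun n _ => Real.smoothTransition.le_one _
      _ = N := by simp
  · intro N s hs
    have : S ⌈s⌉₊ s = S (max N ⌈s⌉₊) s :=
      hSeq _ _ _ ((hceil s).trans (hmono (le_max_right _ _))) (hceil s)
    simp only [this]
    apply mul_le_mul_of_nonneg_left _ ha.le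
    calc (N:ℝ) = ∑ n ∈ Finset.range N, (1:ℝ) := by simp
      _ ≤ ∑ n ∈ Finset.range N, Real.smoothTransition (s / T n - 1) := by
        apply Finset.sum_le_sum
        intro n hn
        rw [Real.smoothTransition.one_of_one_le]
        have := (le_div_iff₀ (hpos n)).2 (hs n (Finset.mem_range.1 hn))
        linarith
      _ ≤ _ := Finset.sum_le_sum_of_subset_of_nonneg (Finset.range_mono (le_max_left _ _))
        fun n _ _ => Real.smoothTransition.nonneg _

lemma exists_omega (h : ℝ → ℝ) (hc : ContDiff ℝ (⊤ : ℕ∞) h) (hm : Monotone h)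
    (hn : ∀ s, 0 ≤ h s) (ht : Tendsto h atTop atTop) :
    ∃ ω : ℝ → ℝ, ContDiff ℝ (⊤ : ℕ∞) ω ∧ ConvexOn ℝ (Set.Ici 0) ω ∧
      (∀ r : ℝ, 0 ≤ r → 0 ≤ ω r) ∧
      Tendsto (fun r : ℝ => ω r / r) atTop atTop ∧
      (∀ r : ℝ, 0 ≤ r → ω r ≤ h r * r) ∧ deriv ω = h := by
  have hcont := hc.continuous
  have hd : ∀ s, HasDerivAt (fun s => ∫ x in (0:ℝ)..s, h x) (h s) s := fun s =>
    intervalIntegral.integral_hasDerivAt_right (hcont.intervalIntegrable _ _)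
      hcont.stronglyMeasurable.stronglyMeasurableAtFilter hcont.continuousAt
  set ω : ℝ → ℝ := fun s => ∫ x in (0:ℝ)..s, h x with hω
  have hdω : deriv ω = h := funext fun s => (hd s).deriv
  have hdiff : Differentiable ℝ ω := fun s => (hd s).differentiableAt
  have hω0 : ω 0 = 0 := by simp [hω]
  have hωnn : ∀ r : ℝ, 0 ≤ r → 0 ≤ ω r := fun r hr =>
    intervalIntegral.integral_nonneg hr fun x _ => hn x
  have hlow : ∀ x y : ℝ, x ≤ y → h x * (y - x) ≤ ω y - ω x := by
    intro x y hxy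
    have := intervalIntegral.integral_mono_on (μ := MeasureTheory.volume) (f := fun _ => h x) (g := h) hxy
      (by simp) (hcont.intervalIntegrable _ _) (fun z hz => hm hz.1)
    have h2 := intervalIntegral.integral_interval_sub_left (hcont.intervalIntegrable 0 y) (hcont.intervalIntegrable (μ := MeasureTheory.volume) 0 x)
    simp only [hω, h2]
    simpa [mul_comm] using this
  refine ⟨ω, ?_, ?_, hωnn, ?_, ?_, hdω⟩
  · rw [contDiff_infty_iff_deriv, hdω]
    exact ⟨hdiff, hc⟩
  · apply MonotoneOn.convexOn_of_deriv (convex_Ici 0) hdiff.continuous.continuousOn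
      hdiff.differentiableOn
    rw [hdω]
    exact hm.monotoneOn _
  · have h2 : Tendsto (fun r : ℝ => h (r / 2) / 2) atTop atTop :=
      (ht.comp (tendsto_id.atTop_div_const (by norm_num))).atTop_div_const (by norm_num)
    apply tendsto_atTop_mono' _ _ h2
    filter_upwards [eventually_gt_atTop 0] with r hr
    rw [le_div_iff₀ hr]
    have := hlow (r/2) r (by linarith)
    have := hωnn (r/2) (by linarith)
    nlinarith
  · intro r hr
    have := intervalIntegral.integral_mono_on (μ := MeasureTheory.volume) (g := fun _ => h r) (f := h) hr
      (hcont.intervalIntegrable _ _) (by simp) (fun z hz => hm hz.2)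
    simpa [mul_comm] using this

/-- Slowly increasing superlinear entropies: existence of a smooth convex superlinear
minorant `ω` of `β` such that `Ψ*(ω'(s) − ω'(r))·α(s,r) ≤ r + s`. -/
theorem slowly_increasing_entropy
    (Ψstar : ℝ → ℝ) (α : ℝ → ℝ → ℝ) (β : ℝ → ℝ)
    (hΨconv : ConvexOn ℝ Set.univ Ψstar)
    (hΨdiff : Differentiable ℝ Ψstar)
    (hΨeven : ∀ ξ : ℝ, Ψstar (-ξ) = Ψstar ξ)
    (hΨnonneg : ∀ ξ : ℝ, 0 ≤ Ψstar ξ)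
    (hΨzero : Ψstar 0 = 0)
    (hΨsuper_top : Tendsto (fun ξ : ℝ => Ψstar ξ / |ξ|) atTop atTop)
    (hΨsuper_bot : Tendsto (fun ξ : ℝ => Ψstar ξ / |ξ|) atBot atTop)
    (hαcont : ContinuousOn (fun p : ℝ × ℝ => α p.1 p.2) (Set.Ici (0:ℝ) ×ˢ Set.Ici (0:ℝ)))
    (hαconc : ConcaveOn ℝ (Set.Ici (0:ℝ) ×ˢ Set.Ici (0:ℝ)) (fun p => α p.1 p.2))
    (hαsymm : ∀ u v : ℝ, 0 ≤ u → 0 ≤ v → α u v = α v u)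
    (hαnonneg : ∀ u v : ℝ, 0 ≤ u → 0 ≤ v → 0 ≤ α u v)
    (hαne : ∃ u v : ℝ, 0 ≤ u ∧ 0 ≤ v ∧ α u v ≠ 0)
    (hαrec : Tendsto (fun r : ℝ => α r 1 / r) atTop (nhds 0))
    (hβconv : ConvexOn ℝ (Set.Ici 0) β)
    (hβnonneg : ∀ r : ℝ, 0 ≤ r → 0 ≤ β r)
    (hβsuper : Tendsto (fun r : ℝ => β r / r) atTop atTop)
    (hβslope : ∃ β₀' : ℝ, 0 < β₀' ∧
      ∀ r s : ℝ, 0 ≤ r → r ≤ s → β₀' * (s - r) ≤ β s - β r) :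
    ∃ ω : ℝ → ℝ, ContDiff ℝ (⊤ : ℕ∞) ω ∧ ConvexOn ℝ (Set.Ici 0) ω ∧
      (∀ r : ℝ, 0 ≤ r → 0 ≤ ω r) ∧
      Tendsto (fun r : ℝ => ω r / r) atTop atTop ∧
      (∀ r : ℝ, 0 ≤ r → ω r ≤ β r) ∧
      (∀ r s : ℝ, 0 ≤ r → 0 ≤ s →
        Ψstar (deriv ω s - deriv ω r) * α s r ≤ r + s) := by
  obtain ⟨b, hb, hbs⟩ := hβslope
  have hΨmono : ∀ x y : ℝ, 0 ≤ x → x ≤ y → Ψstar x ≤ Ψstar y := by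
    intro x y hx hxy
    rcases hx.eq_or_lt with rfl | hx
    · rw [hΨzero]; exact hΨnonneg y
    have hy : 0 < y := hx.trans_le hxy
    have h1 : x / y ≤ 1 := (div_le_one hy).2 hxy
    have h0 : 0 ≤ x / y := by positivity
    have := hΨconv.2 (Set.mem_univ (0:ℝ)) (Set.mem_univ y) (sub_nonneg.2 h1) h0 (by ring)
    simp only [smul_eq_mul, mul_zero, zero_add, hΨzero, div_mul_cancel₀ _ hy.ne'] at this
    nlinarith [hΨnonneg y]
  have hαmono : ∀ s r r' : ℝ, 0 ≤ s → 0 ≤ r → r ≤ r' → α s r ≤ α s r' := by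
    intro s r r' hs hr hrr
    by_contra! hlt
    have hr'0 : 0 ≤ r' := hr.trans hrr
    have hf' := hαnonneg s r' hs hr'0
    have hf : 0 < α s r := hf'.trans_lt hlt
    set t := (α s r - α s r') / (2 * α s r) with htd
    have htp : 0 < t := div_pos (by linarith) (by linarith)
    have ht1 : t ≤ 1 := (div_le_one (by linarith)).2 (by linarith)
    have htf : t * α s r = (α s r - α s r') / 2 := by rw [htd]; field_simp
    have hR : 0 ≤ r + (r' - r) / t := add_nonneg hr (div_nonneg (by linarith) htp.le)
    have := hαconc.2 (x := (s, r)) (y := (s, r + (r' - r) / t)) ⟨hs, hr⟩ ⟨hs, hR⟩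
      (sub_nonneg.2 ht1) htp.le (by ring)
    have e1 : (1 - t) * s + t * s = s := by ring
    have e2 : (1 - t) * r + t * (r + (r' - r) / t) = r' := by field_simp; ring
    simp only [Prod.fst_add, Prod.smul_fst, Prod.snd_add, Prod.smul_snd, smul_eq_mul, e1, e2] at this
    have h3 := mul_nonneg htp.le (hαnonneg s _ hs hR)
    nlinarith
  have hαscale : ∀ l u v : ℝ, 1 ≤ l → 0 ≤ u → 0 ≤ v → α (l * u) (l * v) ≤ l * α u v := by
    intro l u v hl hu hv
    have hl0 : 0 < l := by linarith
    have h1 : l⁻¹ ≤ 1 := inv_le_one_of_one_le₀ hl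
    have := hαconc.2 (x := (0, 0)) (y := (l * u, l * v)) ⟨le_refl (0:ℝ), le_refl (0:ℝ)⟩
      ⟨mul_nonneg hl0.le hu, mul_nonneg hl0.le hv⟩ (sub_nonneg.2 h1) (inv_nonneg.2 hl0.le) (by ring)
    simp only [Prod.fst_add, Prod.smul_fst, Prod.snd_add, Prod.smul_snd, smul_eq_mul, mul_zero,
      zero_add, inv_mul_cancel_left₀ hl0.ne'] at this
    have h3 := mul_nonneg (sub_nonneg.2 h1) (hαnonneg 0 0 le_rfl le_rfl)
    have h4 : l⁻¹ * α (l * u) (l * v) ≤ α u v := by linarith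
    rwa [inv_mul_le_iff₀ hl0] at h4
  have hα11 := hαnonneg 1 1 zero_le_one zero_le_one
  have hK : 0 ≤ Ψstar 1 * α 1 1 := mul_nonneg (hΨnonneg 1) hα11
  obtain ⟨a, ha, hab, haΨ⟩ : ∃ a : ℝ, 0 < a ∧ a ≤ b ∧ Ψstar a * α 1 1 ≤ 1 := by
    refine ⟨min b (1 / (Ψstar 1 * α 1 1 + 1)), lt_min hb (by positivity), min_le_left _ _, ?_⟩
    set a := min b (1 / (Ψstar 1 * α 1 1 + 1)) with had
    have ha : 0 < a := lt_min hb (by positivity)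
    have h2 : a ≤ 1 / (Ψstar 1 * α 1 1 + 1) := min_le_right _ _
    rw [le_div_iff₀ (by positivity)] at h2
    have ha1 : a ≤ 1 := by nlinarith
    have := hΨconv.2 (Set.mem_univ (0:ℝ)) (Set.mem_univ 1) (sub_nonneg.2 ha1) ha.le (by ring)
    simp only [smul_eq_mul, mul_zero, zero_add, hΨzero, mul_one] at this
    nlinarith [mul_le_mul_of_nonneg_right this hα11]
  have hstep : ∀ (n : ℕ) (t : ℝ), ∃ t' : ℝ, 1 ≤ t → (2 * t + 1 ≤ t' ∧
      ∀ s, t' ≤ s → Ψstar (a * (n + 2)) * α s (2 * t) ≤ s ∧ a * (n + 2) * s ≤ β s) := by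
    intro n t
    by_cases ht : 1 ≤ t
    swap
    · exact ⟨0, fun h => absurd h ht⟩
    have hC := hΨnonneg (a * (n + 2))
    have h1 : ∀ᶠ s : ℝ in atTop, a * (n + 2) * s ≤ β s := by
      filter_upwards [hβsuper.eventually_ge_atTop (a * (n + 2)), eventually_gt_atTop 0] with s h1 h2
      rwa [le_div_iff₀ h2] at h1
    have h2 : ∀ᶠ r : ℝ in atTop, Ψstar (a * (n + 2)) * α r 1 ≤ r := by
      have : Tendsto (fun r : ℝ => Ψstar (a * (n + 2)) * (α r 1 / r)) atTop (nhds 0) := by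
        simpa using hαrec.const_mul (Ψstar (a * (n + 2)))
      filter_upwards [this.eventually_lt_const zero_lt_one, eventually_gt_atTop 0] with r h1 h2
      rw [← mul_div_assoc, div_lt_one h2] at h1
      exact h1.le
    have h3 : ∀ᶠ s : ℝ in atTop, Ψstar (a * (n + 2)) * α s (2 * t) ≤ s := by
      have hdiv : Tendsto (fun s : ℝ => s / (2 * t)) atTop atTop :=
        tendsto_id.atTop_div_const (by linarith)
      filter_upwards [hdiv.eventually h2, eventually_ge_atTop 0] with s hs hs0
      have := hαscale (2 * t) (s / (2 * t)) 1 (by linarith) (by positivity) zero_le_one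
      rw [mul_div_cancel₀ _ (by linarith : 2 * t ≠ 0), mul_one] at this
      rw [le_div_iff₀ (by linarith)] at hs
      nlinarith [mul_le_mul_of_nonneg_left this hC]
    obtain ⟨t', ht'⟩ := eventually_atTop.1 (h3.and h1)
    exact ⟨max t' (2 * t + 1), fun _ => ⟨le_max_right _ _, fun s hs => ht' s ((le_max_left _ _).trans hs)⟩⟩
  choose F hF using hstep
  let T : ℕ → ℝ := fun n => Nat.rec 1 (fun k t => F k t) n
  have hT0 : T 0 = 1 := rfl
  have hTs : ∀ n, T (n + 1) = F n (T n) := fun n => rfl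
  have hT1 : ∀ n, 1 ≤ T n := by
    intro n
    induction n with
    | zero => exact hT0.ge
    | succ k ih => rw [hTs]; linarith [(hF k (T k) ih).1]
  have hT2 : ∀ n, 2 * T n + 1 ≤ T (n + 1) := fun n => (hF n (T n) (hT1 n)).1
  have hTmono : Monotone T := monotone_nat_of_le_succ fun n => by linarith [hT2 n, hT1 n]
  have hTn : ∀ n : ℕ, (n : ℝ) ≤ T n := by
    intro n
    induction n with
    | zero => simp [hT0]
    | succ k ih => push_cast; linarith [hT2 k, hT1 k]
  obtain ⟨h, hsm, hm, hup, hlo⟩ := exists_slow_h T hT0.ge hT2 a ha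
  have hn : ∀ s, 0 ≤ h s := fun s => by simpa using hlo 0 s (by simp)
  have htop : Tendsto h atTop atTop := by
    apply tendsto_atTop_atTop_of_monotone hm
    intro y
    obtain ⟨N, hN⟩ := exists_nat_ge (y / a)
    rw [div_le_iff₀ ha] at hN
    refine ⟨2 * T N, le_trans (by linarith) (hlo N _ fun n hn => ?_)⟩
    linarith [hTmono hn.le]
  have hidx : ∀ s : ℝ, T 0 < s → ∃ l : ℕ, T l < s ∧ s ≤ T (l + 1) := by
    intro s hs
    by_contra! hcon
    have hall : ∀ n, T n < s := by
      intro n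
      induction n with
      | zero => exact hs
      | succ k ih => exact hcon k ih
    exact absurd (hall ⌈s⌉₊) (not_lt.2 ((Nat.le_ceil s).trans (hTn _)))
  obtain ⟨ω, hω1, hω2, hω3, hω4, hω5, hω6⟩ := exists_omega h hsm hm hn htop
  refine ⟨ω, hω1, hω2, hω3, hω4, ?_, ?_⟩
  · intro r hr
    refine (hω5 r hr).trans ?_
    rcases le_or_gt r (T 0) with h1 | h1
    · have := hup 0 r h1
      have h0 : h r = 0 := le_antisymm (by simpa using this) (hn r)
      rw [h0, zero_mul]; exact hβnonneg r hr
    · obtain ⟨l, hl1, hl2⟩ := hidx r h1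
      have hh := mul_le_mul_of_nonneg_right (hup (l + 1) r hl2) hr
      refine hh.trans ?_
      rcases l with _ | l
      · have := hbs 0 r le_rfl hr
        have := hβnonneg 0 le_rfl
        have := mul_le_mul_of_nonneg_right hab hr
        push_cast
        linarith
      · have := ((hF l (T l) (hT1 l)).2 r (by rw [← hTs]; exact hl1.le)).2
        push_cast
        linarith
  · rw [hω6]
    have key : ∀ r s : ℝ, 0 ≤ r → r ≤ s → Ψstar (h s - h r) * α s r ≤ s := by
      intro r s hr hrs
      have hs : 0 ≤ s := hr.trans hrs
      have hd : 0 ≤ h s - h r := sub_nonneg.2 (hm hrs)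
      rcases le_or_gt s (T 0) with h1 | h1
      · have h2 : h s ≤ 0 := by simpa using hup 0 s h1
        have h3 : h s - h r = 0 := by linarith [hn r]
        rw [h3, hΨzero, zero_mul]; exact hs
      obtain ⟨l, hl1, hl2⟩ := hidx s h1
      have hhs := hup (l + 1) s hl2
      have hnear : h s - h r ≤ a → Ψstar (h s - h r) * α s r ≤ s := by
        intro hle
        have h4 := hαscale s 1 1 (by linarith) zero_le_one zero_le_one
        rw [mul_one] at h4
        have h5 := (hαmono s r s hs hr hrs).trans h4
        calc Ψstar (h s - h r) * α s r ≤ Ψstar a * (s * α 1 1) :=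
              mul_le_mul (hΨmono _ _ hd hle) h5 (hαnonneg s r hs hr) (hΨnonneg a)
          _ = (Ψstar a * α 1 1) * s := by ring
          _ ≤ 1 * s := mul_le_mul_of_nonneg_right haΨ hs
          _ = s := one_mul s
      rcases l with _ | l
      · apply hnear
        push_cast at hhs
        linarith [hn r]
      · push_cast at hhs
        rcases le_or_gt (2 * T l) r with h6 | h6
        · apply hnear
          have := hlo (l + 1) r (fun n hn => by linarith [hTmono (Nat.lt_succ_iff.1 hn)])
          push_cast at this
          linarith
        · have h7 := ((hF l (T l) (hT1 l)).2 s (by rw [← hTs]; exact hl1.le)).1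
          refine le_trans ?_ h7
          apply mul_le_mul _ (hαmono _ _ _ hs hr h6.le) (hαnonneg s r hs hr) (hΨnonneg _)
          apply hΨmono _ _ hd
          linarith [hn r]
    intro r s hr hs
    rcases le_total r s with hrs | hrs
    · linarith [key r s hr hrs]
    · have := key s r hs hrs
      rw [← hΨeven, neg_sub, hαsymm s r hs hr]
      linarith
end

section
/- Let X and Y be measurable spaces, and let κ be a bounded measurable kernel from X to Y: for every x ∈ X, κ(x,·) is a finite nonnegative measure on Y, for every measurable B ⊆ Y the map x ↦ κ(x,B) is measurable, and sup_{x∈X} κ(x,Y) < +∞. For a finite nonnegative measure μ on X let κ_μ be the measure on X×Y determined by κ_μ(A×B) = ∫_A κ(x,B) μ(dx). If (μₙ) is a sequence of finite nonnegative measures on X converging setwise to a finite measure μ, i.e. μₙ(B) → μ(B) for every measurable B ⊆ X, then κ_{μₙ} converges setwise to κ_μ: κ_{μₙ}(C) → κ_μ(C) for every measurable C ⊆ X×Y. -/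
open MeasureTheory ProbabilityTheory Filter

/-- Setwise convergence of measures is preserved by composition with a bounded
measurable kernel: if `μₙ → μ` setwise then `μₙ ⊗ₘ κ → μ ⊗ₘ κ` setwise. -/
theorem kernel_comp_setwise_convergence
    {X Y : Type*} [MeasurableSpace X] [MeasurableSpace Y]
    (κ : Kernel X Y) [IsFiniteKernel κ]
    (μ : ℕ → Measure X) (μlim : Measure X)
    [∀ n, IsFiniteMeasure (μ n)] [IsFiniteMeasure μlim]
    (hsetwise : ∀ B : Set X, MeasurableSet B →
      Tendsto (fun n => μ n B) atTop (nhds (μlim B))) :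
    ∀ C : Set (X × Y), MeasurableSet C →
      Tendsto (fun n => (μ n ⊗ₘ κ) C) atTop (nhds ((μlim ⊗ₘ κ) C)) := by
  intro C hC
  obtain ⟨K, hK, hKb⟩ := IsFiniteKernel.exists_univ_le (κ := κ)
  let f : X → ℝ := fun a => (κ a (Prod.mk a ⁻¹' C)).toReal
  have hfm : Measurable f := (Kernel.measurable_kernel_prodMk_left hC).ennreal_toReal
  have hfK : ∀ a, f a ≤ K.toReal := fun a =>
    ENNReal.toReal_mono hK.ne ((measure_mono (Set.subset_univ _)).trans (hKb a))
  have key : ∀ (ν : Measure X) [IsFiniteMeasure ν],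
      (ν ⊗ₘ κ) C = ∫⁻ t in Set.Ioi (0 : ℝ), ν {a | t ≤ f a} := by
    intro ν _
    rw [Measure.compProd_apply hC, ← lintegral_eq_lintegral_meas_le ν
      (Eventually.of_forall fun a => ENNReal.toReal_nonneg) hfm.aemeasurable]
    exact lintegral_congr fun a => (ENNReal.ofReal_toReal (measure_ne_top _ _)).symm
  simp_rw [key]
  have hM : ∀ᶠ n in atTop, μ n Set.univ < μlim Set.univ + 1 :=
    (hsetwise _ MeasurableSet.univ).eventually_lt_const
      (ENNReal.lt_add_right (measure_ne_top _ _) one_ne_zero)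
  refine tendsto_lintegral_filter_of_dominated_convergence
    ((Set.Iic K.toReal).indicator fun _ => μlim Set.univ + 1) ?_ ?_ ?_ ?_
  · refine Eventually.of_forall fun n => ?_
    have : Antitone fun t : ℝ => μ n {a | t ≤ f a} :=
      fun s t hst => measure_mono fun a ha => le_trans hst ha
    exact this.measurable
  · filter_upwards [hM] with n hn
    refine Eventually.of_forall fun t => ?_
    by_cases ht : t ≤ K.toReal
    · rw [Set.indicator_of_mem (by exact ht)]
      exact (measure_mono (Set.subset_univ _)).trans hn.le
    · have : {a | t ≤ f a} = ∅ := by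
        ext a
        simpa using (hfK a).trans_lt (not_le.mp ht)
      simp [this]
  · rw [lintegral_indicator_const measurableSet_Iic, Measure.restrict_apply measurableSet_Iic,
      Set.inter_comm, Set.Ioi_inter_Iic]
    exact ENNReal.mul_ne_top (by simp) (by simp)
  · exact Eventually.of_forall fun t => hsetwise _ (measurableSet_le measurable_const hfm)
end

section
/- Let X and Y be Polish spaces (separable completely metrizable topological spaces) with their Borel σ-algebras, and let κ be a bounded measurable kernel from X to Y (each κ(x,·) a finite measure, x ↦ κ(x,B) Borel measurable for each Borel B, sup_x κ(x,Y) < ∞) satisfying the weak Feller property: the map x ↦ κ(x,·) is continuous from X into the finite measures on Y equipped with the weak topology in duality with bounded continuous functions. For a finite nonnegative measure μ on X let κ_μ(dx dy) = μ(dx)κ(x,dy). If finite nonnegative measures μₙ converge weakly to μ (∫ f dμₙ → ∫ f dμ for every bounded continuous f: X → ℝ), then κ_{μₙ} converges weakly to κ_μ on X×Y (∫∫ g dκ_{μₙ} → ∫∫ g dκ_μ for every bounded continuous g: X×Y → ℝ). -/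
open MeasureTheory ProbabilityTheory Filter

lemma feller_aux
    {X Y : Type*}
    [TopologicalSpace X] [PolishSpace X] [MeasurableSpace X] [BorelSpace X]
    [TopologicalSpace Y] [PolishSpace Y] [MeasurableSpace Y] [BorelSpace Y]
    (κ : Kernel X Y) [IsFiniteKernel κ]
    (hFeller : ∀ g : BoundedContinuousFunction Y ℝ,
      Continuous fun x => ∫ y, g y ∂(κ x))
    (g : BoundedContinuousFunction (X × Y) ℝ) :
    Continuous fun x => ∫ y, g (x, y) ∂(κ x) := by
  let K : X → FiniteMeasure Y := fun x => ⟨κ x, inferInstance⟩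
  have hK : Continuous K :=
    continuous_iff_continuousAt.2 fun x =>
      FiniteMeasure.tendsto_iff_forall_integral_tendsto.2 fun f => (hFeller f).tendsto x
  have hmass : Continuous fun x => ((K x).mass : ℝ) :=
    NNReal.continuous_coe.comp (FiniteMeasure.continuous_mass.comp hK)
  have hmass' : ∀ x, (κ x).real Set.univ = ((K x).mass : ℝ) := fun x => rfl
  have hbd : ∀ x, ‖∫ y, g (x, y) ∂(κ x)‖ ≤ ‖g‖ * ((K x).mass : ℝ) := fun x => by
    rw [← hmass']
    exact norm_integral_le_of_norm_le_const (Eventually.of_forall fun y => g.norm_coe_le_norm _)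
  refine continuous_iff_continuousAt.2 fun x0 => ?_
  by_cases h0 : K x0 = 0
  · have hz : κ x0 = 0 := congrArg Subtype.val h0
    have h1 : Tendsto (fun x => ‖g‖ * ((K x).mass : ℝ)) (nhds x0) (nhds 0) := by
      have := (hmass.tendsto x0).const_mul ‖g‖
      simpa [h0] using this
    have := squeeze_zero_norm hbd h1
    simpa [ContinuousAt, hz] using this
  · have : Nonempty Y := by
      by_contra h
      rw [not_nonempty_iff] at h
      exact h0 (Subtype.ext (Measure.eq_zero_of_isEmpty _))
    have hn : Tendsto (fun x => (K x).normalize) (nhds x0) (nhds (K x0).normalize) :=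
      FiniteMeasure.tendsto_normalize_of_tendsto (hK.tendsto x0) h0
    have hp := (ProbabilityMeasure.continuous_prod (α := X) (β := Y)).tendsto
        (diracProba x0, (K x0).normalize) |>.comp
        (((continuous_diracProba (X := X)).tendsto x0).prodMk_nhds hn)
    have hi := (ProbabilityMeasure.tendsto_iff_forall_integral_tendsto.1 hp) g
    have hm := (hmass.tendsto x0).mul hi
    have key : ∀ x, ((K x).mass : ℝ) * ∫ p, g p ∂(((diracProba x).prod (K x).normalize :
        ProbabilityMeasure (X × Y)) : Measure (X × Y)) = ∫ y, g (x, y) ∂(κ x) := by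
      intro x
      have e1 : κ x = (K x).mass • ((K x).normalize : Measure Y) := by
        have := congrArg (fun m : FiniteMeasure Y => (m : Measure Y))
          (K x).self_eq_mass_smul_normalize
        simp only [FiniteMeasure.toMeasure_smul] at this
        exact this
      rw [ProbabilityMeasure.toMeasure_prod, integral_prod _ (g.integrable _)]
      conv_rhs => rw [e1]
      rw [integral_smul_nnreal_measure]
      simp only [diracProba, ProbabilityMeasure.coe_mk]
      rw [integral_dirac]
      rfl
    have := (tendsto_congr key).1 (hm.congr fun x => rfl)
    rw [key x0] at this
    exact this

/-- Weak convergence of measures (in duality with bounded continuous functions) is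
preserved by composition with a bounded kernel satisfying the weak Feller property. -/
theorem kernel_comp_weak_convergence
    {X Y : Type*}
    [TopologicalSpace X] [PolishSpace X] [MeasurableSpace X] [BorelSpace X]
    [TopologicalSpace Y] [PolishSpace Y] [MeasurableSpace Y] [BorelSpace Y]
    (κ : Kernel X Y) [IsFiniteKernel κ]
    (hFeller : ∀ g : BoundedContinuousFunction Y ℝ,
      Continuous fun x => ∫ y, g y ∂(κ x))
    (μ : ℕ → Measure X) (μlim : Measure X)
    [∀ n, IsFiniteMeasure (μ n)] [IsFiniteMeasure μlim]
    (hweak : ∀ f : BoundedContinuousFunction X ℝ,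
      Tendsto (fun n => ∫ x, f x ∂(μ n)) atTop (nhds (∫ x, f x ∂μlim))) :
    ∀ g : BoundedContinuousFunction (X × Y) ℝ,
      Tendsto (fun n => ∫ p, g p ∂(μ n ⊗ₘ κ)) atTop
        (nhds (∫ p, g p ∂(μlim ⊗ₘ κ))) := by
  intro g
  have hb : ∀ x, ‖∫ y, g (x, y) ∂(κ x)‖ ≤ ‖g‖ * κ.bound.toReal := fun x => by
    refine (norm_integral_le_of_norm_le_const
      (Eventually.of_forall fun y => g.norm_coe_le_norm (x, y))).trans ?_
    refine mul_le_mul_of_nonneg_left ?_ (norm_nonneg _)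
    exact ENNReal.toReal_mono κ.bound_ne_top (κ.measure_le_bound x _)
  have h := hweak (BoundedContinuousFunction.ofNormedAddCommGroup _
    (feller_aux κ hFeller g) _ hb)
  simp only [Measure.integral_compProd (g.integrable _)]
  exact h
end

section
/- Let V be a measurable space, π a finite nonnegative measure on V, κ a bounded measurable kernel from V to itself with ‖κ_V‖_∞ := sup_x κ(x,V) < ∞, θ(dx dy) := π(dx)κ(x,dy), and assume detailed balance (θ symmetric under the swap (x,y) ↦ (y,x)). Let G: V×V×ℝ×ℝ → ℝ be jointly measurable, continuous in (u,v), satisfy |G(x,y,u,v)| ≤ M(1+|u|+|v|), the skew-symmetry G(x,y,u,v) = −G(y,x,v,u), and the ℓ-dissipativity condition: for some ℓ ≥ 0, u ≤ u' implies G(x,y,u',v) − G(x,y,u,v) ≤ ℓ(u'−u) for all (x,y) and all u,u',v. Define 𝐆[u](x) := ∫_V G(x,y,u(x),u(y)) κ(x,dy) for π-integrable u. Then for all π-integrable u₁, u₂: V → ℝ, with 𝔰(r) := 1 for r > 0 and 𝔰(r) := −1 for r ≤ 0, one has ∫_V 𝔰(u₁−u₂)·(𝐆[u₁]−𝐆[u₂])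 dπ ≤ 2ℓ‖κ_V‖_∞ ∫_V |u₁−u₂| dπ, and consequently for every h > 0: ∫_V |(u₁−u₂) − h(𝐆[u₁]−𝐆[u₂])| dπ ≥ (1 − 2ℓ‖κ_V‖_∞ h) ∫_V |u₁−u₂| dπ. -/
open MeasureTheory ProbabilityTheory Filter
open scoped ENNReal

theorem aux_int {V : Type*} [MeasurableSpace V]
    (π : Measure V) [IsFiniteMeasure π]
    (κ : Kernel V V) [IsFiniteKernel κ]
    (K : ℝ) (hK0 : 0 ≤ K) (hK : ∀ x, κ x Set.univ ≤ ENNReal.ofReal K)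
    (f : V → ℝ) (hfm : Measurable f) (hf : Integrable f π) :
    Integrable (fun p : V × V => f p.1) (π ⊗ₘ κ) ∧
      ∫ p, |f p.1| ∂(π ⊗ₘ κ) ≤ K * ∫ x, |f x| ∂π := by
  have hKr : ∀ x, (κ x).real Set.univ ≤ K := fun x =>
    ENNReal.toReal_le_of_le_ofReal hK0 (hK x)
  have hmr : Measurable fun x => (κ x).real Set.univ :=
    (κ.measurable_coe MeasurableSet.univ).ennreal_toReal
  have hmul : Integrable (fun x => (κ x).real Set.univ * |f x|) π := by
    refine Integrable.mono' (hf.abs.const_mul K) (hmr.mul hfm.abs).aestronglyMeasurable ?_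
    filter_upwards with x
    rw [Real.norm_eq_abs, abs_of_nonneg (by positivity)]
    exact mul_le_mul_of_nonneg_right (hKr x) (abs_nonneg _)
  have h1 : Integrable (fun p : V × V => f p.1) (π ⊗ₘ κ) := by
    refine (Measure.integrable_compProd_iff (f := fun p : V × V => f p.1)
      (hfm.comp measurable_fst).aestronglyMeasurable).2 ?_
    refine ⟨Eventually.of_forall fun x => integrable_const (f x), ?_⟩
    simpa using hmul
  refine ⟨h1, ?_⟩
  rw [Measure.integral_compProd h1.abs, ← integral_const_mul]
  refine integral_mono (by simpa using hmul) (hf.abs.const_mul K) fun x => ?_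
  simpa using mul_le_mul_of_nonneg_right (hKr x) (abs_nonneg (f x))

/-- Dissipativity of the nonlocal operator `𝐆[u](x) = ∫ G(x,y,u(x),u(y)) κ(x,dy)`
in `L¹(V,π)`, for a skew-symmetric, `ℓ`-dissipative field `G`. -/
theorem nonlocal_operator_dissipative
    {V : Type*} [MeasurableSpace V]
    (π : Measure V) [IsFiniteMeasure π]
    (κ : Kernel V V) [IsFiniteKernel κ]
    (K : ℝ) (hK0 : 0 ≤ K) (hK : ∀ x, κ x Set.univ ≤ ENNReal.ofReal K)
    (hdb : (π ⊗ₘ κ).map Prod.swap = π ⊗ₘ κ)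
    (M : ℝ) (hM : 0 < M)
    (G : V → V → ℝ → ℝ → ℝ)
    (hGmeas : Measurable fun p : (V × V) × ℝ × ℝ => G p.1.1 p.1.2 p.2.1 p.2.2)
    (hGcont : ∀ x y : V, Continuous fun q : ℝ × ℝ => G x y q.1 q.2)
    (hGbound : ∀ (x y : V) (a b : ℝ), |G x y a b| ≤ M * (1 + |a| + |b|))
    (hGskew : ∀ (x y : V) (a b : ℝ), G x y a b = - G y x b a)
    (ℓ : ℝ) (hℓ : 0 ≤ ℓ)
    (hGdiss : ∀ (x y : V) (a a' b : ℝ), a ≤ a' →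
      G x y a' b - G x y a b ≤ ℓ * (a' - a))
    (u₁ u₂ : V → ℝ)
    (h₁meas : Measurable u₁) (h₁int : Integrable u₁ π)
    (h₂meas : Measurable u₂) (h₂int : Integrable u₂ π) :
    (∫ x, (if 0 < u₁ x - u₂ x then (1:ℝ) else -1) *
        ((∫ y, G x y (u₁ x) (u₁ y) ∂(κ x)) - (∫ y, G x y (u₂ x) (u₂ y) ∂(κ x))) ∂π
      ≤ 2 * ℓ * K * ∫ x, |u₁ x - u₂ x| ∂π) ∧
    (∀ h : ℝ, 0 < h →
      (1 - 2 * ℓ * K * h) * (∫ x, |u₁ x - u₂ x| ∂π)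
        ≤ ∫ x, |(u₁ x - u₂ x)
            - h * ((∫ y, G x y (u₁ x) (u₁ y) ∂(κ x))
                    - (∫ y, G x y (u₂ x) (u₂ y) ∂(κ x)))| ∂π) := by
  set θ := π ⊗ₘ κ with hθ
  have swapInt : ∀ g : V × V → ℝ, Measurable g → Integrable g θ →
      Integrable (fun p => g p.swap) θ := by
    intro g hg hi
    have : Integrable g (θ.map Prod.swap) := by rw [hdb]; exact hi
    exact (integrable_map_measure hg.aestronglyMeasurable measurable_swap.aemeasurable).1 this
  have swapEq : ∀ g : V × V → ℝ, Measurable g → ∫ p, g p.swap ∂θ = ∫ p, g p ∂θ := by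
    intro g hg
    conv_rhs => rw [← hdb]
    exact (integral_map measurable_swap.aemeasurable hg.aestronglyMeasurable).symm
  have gm : ∀ u : V → ℝ, Measurable u →
      Measurable (fun p : V × V => G p.1 p.2 (u p.1) (u p.2)) := by
    intro u hu
    exact hGmeas.comp (measurable_id.prodMk
      ((hu.comp measurable_fst).prodMk (hu.comp measurable_snd)))
  have gi : ∀ u : V → ℝ, Measurable u → Integrable u π →
      Integrable (fun p : V × V => G p.1 p.2 (u p.1) (u p.2)) θ := by
    intro u hu hi
    have a1 := (aux_int π κ K hK0 hK u hu hi).1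
    have a2 : Integrable (fun p : V × V => u p.2) θ :=
      swapInt (fun p => u p.1) (hu.comp measurable_fst) a1
    refine Integrable.mono' ((((integrable_const (1:ℝ)).add a1.abs).add a2.abs).const_mul M)
      (gm u hu).aestronglyMeasurable (Eventually.of_forall fun p => ?_)
    exact hGbound _ _ _ _
  set w : V → ℝ := fun x => u₁ x - u₂ x with hw
  have wm : Measurable w := h₁meas.sub h₂meas
  have wi : Integrable w π := h₁int.sub h₂int
  set s : V → ℝ := fun x => if 0 < u₁ x - u₂ x then (1:ℝ) else -1 with hs
  have sm : Measurable s :=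
    Measurable.ite (measurableSet_lt measurable_const wm) measurable_const measurable_const
  have sabs : ∀ x, |s x| = 1 := by
    intro x; simp only [hs]; split_ifs <;> simp
  set F : V × V → ℝ := fun p => G p.1 p.2 (u₁ p.1) (u₁ p.2) - G p.1 p.2 (u₂ p.1) (u₂ p.2) with hF
  have Fm : Measurable F := (gm u₁ h₁meas).sub (gm u₂ h₂meas)
  have i1 := gi u₁ h₁meas h₁int
  have i2 := gi u₂ h₂meas h₂int
  have Fi : Integrable F θ := i1.sub i2
  have Fskew : ∀ p : V × V, F p.swap = - F p := by
    intro p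
    simp only [hF, Prod.fst_swap, Prod.snd_swap]
    rw [hGskew p.2 p.1, hGskew p.2 p.1 (u₂ p.2)]; ring
  have sFm : Measurable (fun p : V × V => s p.1 * F p) := (sm.comp measurable_fst).mul Fm
  have sFi : Integrable (fun p : V × V => s p.1 * F p) θ := by
    refine Integrable.mono' Fi.abs sFm.aestronglyMeasurable (Eventually.of_forall fun p => ?_)
    simp [abs_mul, sabs]
  set D : V → ℝ := fun x => (∫ y, G x y (u₁ x) (u₁ y) ∂(κ x)) - (∫ y, G x y (u₂ x) (u₂ y) ∂(κ x))
    with hD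
  have ic : ∀ g : V × V → ℝ, Integrable g θ → Integrable (fun x => ∫ y, g (x, y) ∂(κ x)) π := by
    intro g hg
    rw [hθ, Measure.compProd] at hg
    simpa using hg.integral_compProd
  have Di : Integrable D π := (ic _ i1).sub (ic _ i2)
  have e1 := ((Measure.integrable_compProd_iff (gm u₁ h₁meas).aestronglyMeasurable).1 i1).1
  have e2 := ((Measure.integrable_compProd_iff (gm u₂ h₂meas).aestronglyMeasurable).1 i2).1
  have hI : ∫ x, s x * D x ∂π = ∫ p, s p.1 * F p ∂θ := by
    rw [hθ, Measure.integral_compProd sFi]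
    refine integral_congr_ae ?_
    filter_upwards [e1, e2] with x h1 h2
    simp only [hD, hF]
    rw [integral_const_mul, integral_sub h1 h2]
  obtain ⟨w1, wle⟩ := aux_int π κ K hK0 hK w wm wi
  have wam : Measurable (fun p : V × V => |w p.1|) := (wm.comp measurable_fst).abs
  have w2 : Integrable (fun p : V × V => |w p.2|) θ := swapInt (fun p => |w p.1|) wam w1.abs
  have w2e : ∫ p, |w p.2| ∂θ = ∫ p, |w p.1| ∂θ := swapEq (fun p => |w p.1|) wam
  have sFi2 : Integrable (fun p : V × V => s p.2 * F p.swap) θ := swapInt _ sFm sFi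
  have sFe2 : ∫ p, s p.2 * F p.swap ∂θ = ∫ p, s p.1 * F p ∂θ := swapEq _ sFm
  have pt : ∀ p : V × V, s p.1 * F p + s p.2 * F p.swap ≤ 2 * ℓ * (|w p.1| + |w p.2|) := by
    have key : ∀ x y, 0 < w x → w y ≤ 0 → F (x, y) ≤ ℓ * (|w x| + |w y|) := by
      intro x y hx hy
      rw [abs_of_pos hx, abs_of_nonpos hy]
      simp only [hw, hF] at *
      have a := hGdiss x y (u₂ x) (u₁ x) (u₁ y) (by linarith)
      have b := hGdiss y x (u₁ y) (u₂ y) (u₂ x) (by linarith)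
      rw [hGskew y x, hGskew y x (u₁ y)] at b
      linarith
    rintro ⟨x, y⟩
    rw [Fskew]
    have nn : 0 ≤ ℓ * (|w x| + |w y|) := by positivity
    by_cases hx : 0 < w x <;> by_cases hy : 0 < w y
    · have a : s x = 1 := if_pos hx
      have b : s y = 1 := if_pos hy
      simp only [a, b]; linarith
    · have a : s x = 1 := if_pos hx
      have b : s y = -1 := if_neg hy
      have := key x y hx (not_lt.1 hy)
      simp only [a, b]; linarith
    · have a : s x = -1 := if_neg hx
      have b : s y = 1 := if_pos hy
      have := key y x hy (not_lt.1 hx)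
      have e := Fskew (x, y)
      simp only [Prod.swap_prod_mk] at e
      simp only [a, b]; linarith
    · have a : s x = -1 := if_neg hx
      have b : s y = -1 := if_neg hy
      simp only [a, b]; linarith
  have main : ∫ x, s x * D x ∂π ≤ 2 * ℓ * K * ∫ x, |w x| ∂π := by
    have h := integral_mono (sFi.add sFi2) ((w1.abs.add w2).const_mul (2 * ℓ)) pt
    have l : ∫ p, ((fun p : V × V => s p.1 * F p) + fun p : V × V => s p.2 * F p.swap) p ∂θ
        = 2 * ∫ p, s p.1 * F p ∂θ := by
      rw [integral_add' sFi sFi2, sFe2]; ring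
    have r : ∫ p, 2 * ℓ * ((fun p : V × V => |w p.1|) + fun p : V × V => |w p.2|) p ∂θ
        = 4 * ℓ * ∫ p, |w p.1| ∂θ := by
      rw [integral_const_mul, integral_add' w1.abs w2, w2e]; ring
    have h' : 2 * ∫ p, s p.1 * F p ∂θ ≤ 4 * ℓ * ∫ p, |w p.1| ∂θ := by
      rw [← l, ← r]; exact h
    have := mul_le_mul_of_nonneg_left wle hℓ
    rw [hI]; linarith
  refine ⟨main, fun h hh => ?_⟩
  have sDi : Integrable (fun x => s x * D x) π := by
    refine Integrable.mono' Di.abs (sm.aestronglyMeasurable.mul Di.aestronglyMeasurable)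
      (Eventually.of_forall fun p => ?_)
    simp [abs_mul, sabs]
  have h3 : ∫ x, (|w x| - h * (s x * D x)) ∂π ≤ ∫ x, |w x - h * D x| ∂π := by
    refine integral_mono (wi.abs.sub (sDi.const_mul h)) (wi.sub (Di.const_mul h)).abs fun x => ?_
    have sw : s x * w x = |w x| := by
      by_cases hx : 0 < w x
      · have a : s x = 1 := if_pos hx
        rw [a, abs_of_pos hx, one_mul]
      · have a : s x = -1 := if_neg hx
        rw [a, abs_of_nonpos (not_lt.1 hx)]; ring
    have := le_abs_self (s x * (w x - h * D x))
    rw [abs_mul, sabs, one_mul] at this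
    simp only [← sw]
    linarith
  rw [integral_sub wi.abs (sDi.const_mul h), integral_const_mul] at h3
  have := mul_le_mul_of_nonneg_left main hh.le
  change (1 - 2 * ℓ * K * h) * (∫ x, |w x| ∂π) ≤ ∫ x, |w x - h * D x| ∂π
  linarith
end

section
/- Let V be a measurable space, π a finite nonnegative measure on V, κ a bounded measurable kernel from V to itself with ‖κ_V‖_∞ := sup_x κ(x,V) < ∞, θ(dx dy) := π(dx)κ(x,dy), and assume detailed balance (θ symmetric under the swap (x,y) ↦ (y,x)). Let G: V×V×ℝ×ℝ → ℝ be jointly measurable, continuous in (u,v) for each fixed (x,y), with |G(x,y,u,v)| ≤ M(1+|u|+|v|). If uₙ → u in L¹(V,π), then ∬_{V×V} |G(x,y,uₙ(x),uₙ(y)) − G(x,y,u(x),u(y))| θ(dx dy) → 0 as n → ∞; in particular the operator 𝐆[w](x) := ∫_V G(x,y,w(x),w(y)) κ(x,dy) is continuous from L¹(V,π) to L¹(V,π). -/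
open MeasureTheory ProbabilityTheory Filter
open scoped ENNReal

theorem nlo_aux
    {V : Type*} [MeasurableSpace V]
    (π : Measure V) [IsFiniteMeasure π]
    (θ : Measure (V × V)) [IsFiniteMeasure θ]
    (K : ℝ)
    (h1 : θ.map Prod.fst ≤ ENNReal.ofReal K • π)
    (h2 : θ.map Prod.snd ≤ ENNReal.ofReal K • π)
    (M : ℝ) (hM : 0 < M)
    (G : V → V → ℝ → ℝ → ℝ)
    (hGmeas : Measurable fun p : (V × V) × ℝ × ℝ => G p.1.1 p.1.2 p.2.1 p.2.2)
    (hGcont : ∀ x y : V, Continuous fun q : ℝ × ℝ => G x y q.1 q.2)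
    (hGbound : ∀ (x y : V) (a b : ℝ), |G x y a b| ≤ M * (1 + |a| + |b|))
    (u : ℕ → V → ℝ) (ulim : V → ℝ)
    (humeas : ∀ n, Measurable (u n))
    (hlimmeas : Measurable ulim) (hlimint : Integrable ulim π)
    (hconv : Tendsto (fun n => ∫⁻ x, ‖u n x - ulim x‖ₑ ∂π) atTop (nhds 0))
    (hae : ∀ᵐ x ∂π, Tendsto (fun n => u n x) atTop (nhds (ulim x))) :
    Tendsto (fun n => ∫⁻ p : V × V,
        ENNReal.ofReal |G p.1 p.2 (u n p.1) (u n p.2)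
          - G p.1 p.2 (ulim p.1) (ulim p.2)| ∂θ) atTop (nhds 0) := by
  have q1 : θ.map Prod.fst ≪ π :=
    (Measure.absolutelyContinuous_of_le h1).trans (Measure.smul_absolutelyContinuous)
  have q2 : θ.map Prod.snd ≪ π :=
    (Measure.absolutelyContinuous_of_le h2).trans (Measure.smul_absolutelyContinuous)
  have a1 : ∀ᵐ p ∂θ, Tendsto (fun n => u n p.1) atTop (nhds (ulim p.1)) :=
    ae_of_ae_map measurable_fst.aemeasurable (q1.ae_le hae)
  have a2 : ∀ᵐ p ∂θ, Tendsto (fun n => u n p.2) atTop (nhds (ulim p.2)) :=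
    ae_of_ae_map measurable_snd.aemeasurable (q2.ae_le hae)
  have l1 : ∀ g : V → ℝ≥0∞, Measurable g →
      ∫⁻ p, g p.1 ∂θ ≤ ENNReal.ofReal K * ∫⁻ x, g x ∂π := by
    intro g hg
    rw [← lintegral_map hg measurable_fst]
    exact (lintegral_mono' h1 le_rfl).trans (by rw [lintegral_smul_measure, smul_eq_mul])
  have l2 : ∀ g : V → ℝ≥0∞, Measurable g →
      ∫⁻ p, g p.2 ∂θ ≤ ENNReal.ofReal K * ∫⁻ x, g x ∂π := by
    intro g hg
    rw [← lintegral_map hg measurable_snd]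
    exact (lintegral_mono' h2 le_rfl).trans (by rw [lintegral_smul_measure, smul_eq_mul])
  have mG : ∀ w : V → ℝ, Measurable w →
      Measurable fun p : V × V => G p.1 p.2 (w p.1) (w p.2) := fun w hw =>
    hGmeas.comp (measurable_id.prodMk
      ((hw.comp measurable_fst).prodMk (hw.comp measurable_snd)))
  set f : ℕ → V × V → ℝ≥0∞ := fun n p => ENNReal.ofReal |G p.1 p.2 (u n p.1) (u n p.2)
          - G p.1 p.2 (ulim p.1) (ulim p.2)| with hf
  have mf : ∀ n, Measurable (f n) := fun n => by
    have := ((mG _ (humeas n)).sub (mG _ hlimmeas)).norm.ennreal_ofReal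
    simpa [hf, Real.norm_eq_abs] using this
  set b : V × V → ℝ≥0∞ := fun p =>
    ENNReal.ofReal (2 * M) * (1 + ‖ulim p.1‖ₑ + ‖ulim p.2‖ₑ) with hb
  set e : ℕ → V × V → ℝ≥0∞ := fun n p =>
    ENNReal.ofReal M * (‖u n p.1 - ulim p.1‖ₑ + ‖u n p.2 - ulim p.2‖ₑ) with he
  have me : ∀ n, Measurable (e n) := fun n => by
    have := humeas n
    simp only [he]; fun_prop
  have mb : Measurable b := by simp only [hb]; fun_prop
  have hfe : ∀ n p, f n p ≤ b p + e n p := by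
    intro n p
    simp only [hf, hb, he, Real.enorm_eq_ofReal_abs]
    rw [← ENNReal.ofReal_one, ← ENNReal.ofReal_add (by positivity) (by positivity),
      ← ENNReal.ofReal_add (by positivity) (by positivity), 
      ← ENNReal.ofReal_add (by positivity) (by positivity),
      ← ENNReal.ofReal_mul (by positivity), ← ENNReal.ofReal_mul (by positivity),
      ← ENNReal.ofReal_add (by positivity) (by positivity)]
    apply ENNReal.ofReal_le_ofReal
    have t1 := hGbound p.1 p.2 (u n p.1) (u n p.2)
    have t2 := hGbound p.1 p.2 (ulim p.1) (ulim p.2)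
    have t3 := abs_sub (G p.1 p.2 (u n p.1) (u n p.2)) (G p.1 p.2 (ulim p.1) (ulim p.2))
    have t4 : |u n p.1| ≤ |u n p.1 - ulim p.1| + |ulim p.1| := by
      simpa using abs_add_le (u n p.1 - ulim p.1) (ulim p.1)
    have t5 : |u n p.2| ≤ |u n p.2 - ulim p.2| + |ulim p.2| := by
      simpa using abs_add_le (u n p.2 - ulim p.2) (ulim p.2)
    nlinarith [mul_le_mul_of_nonneg_left t4 hM.le, mul_le_mul_of_nonneg_left t5 hM.le]
  have hlim : ∫⁻ x, ‖ulim x‖ₑ ∂π ≠ ∞ := hlimint.2.ne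
  have hbfin : ∫⁻ p, b p ∂θ ≠ ∞ := by
    simp only [hb]
    rw [lintegral_const_mul _ (by fun_prop), lintegral_add_left (by fun_prop),
      lintegral_add_left (by fun_prop)]
    refine ENNReal.mul_ne_top ENNReal.ofReal_ne_top (ENNReal.add_ne_top.2
      ⟨ENNReal.add_ne_top.2 ⟨by simp, ?_⟩, ?_⟩)
    · exact ne_top_of_le_ne_top (ENNReal.mul_ne_top ENNReal.ofReal_ne_top hlim)
        (l1 (fun x => ‖ulim x‖ₑ) (by fun_prop))
    · exact ne_top_of_le_ne_top (ENNReal.mul_ne_top ENNReal.ofReal_ne_top hlim)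
        (l2 (fun x => ‖ulim x‖ₑ) (by fun_prop))
  have hetend : Tendsto (fun n => ∫⁻ p, e n p ∂θ) atTop (nhds 0) := by
    have hup : ∀ n, ∫⁻ p, e n p ∂θ ≤ (ENNReal.ofReal M * (2 * ENNReal.ofReal K)) *
        ∫⁻ x, ‖u n x - ulim x‖ₑ ∂π := by
      intro n
      have := humeas n
      simp only [he]
      rw [lintegral_const_mul _ (by fun_prop), lintegral_add_left (by fun_prop), mul_assoc,
        mul_assoc, two_mul]
      gcongr
      · exact l1 (fun x => ‖u n x - ulim x‖ₑ) (by fun_prop)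
      · exact l2 (fun x => ‖u n x - ulim x‖ₑ) (by fun_prop)
    have := ENNReal.Tendsto.const_mul (a := ENNReal.ofReal M * (2 * ENNReal.ofReal K)) hconv
      (Or.inr (by finiteness))
    rw [mul_zero] at this
    exact tendsto_of_tendsto_of_tendsto_of_le_of_le tendsto_const_nhds this
      (fun _ => zero_le) hup
  have hmin : Tendsto (fun n => ∫⁻ p, min (f n p) (b p) ∂θ) atTop (nhds 0) := by
    have := tendsto_lintegral_of_dominated_convergence (μ := θ)
      (F := fun n p => min (f n p) (b p)) (f := fun _ => 0) b (fun n => (mf n).min mb)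
      (fun n => Eventually.of_forall fun p => min_le_right _ _) hbfin ?_
    · simpa using this
    filter_upwards [a1, a2] with p h1 h2
    have hc := ((hGcont p.1 p.2).tendsto (ulim p.1, ulim p.2)).comp (h1.prodMk_nhds h2)
    have hz : Tendsto (fun n => f n p) atTop (nhds 0) := by
      have := ENNReal.tendsto_ofReal ((hc.sub_const (G p.1 p.2 (ulim p.1) (ulim p.2))).abs)
      simpa [hf, Function.comp_def] using this
    exact tendsto_of_tendsto_of_tendsto_of_le_of_le tendsto_const_nhds hz
      (fun _ => zero_le) (fun n => min_le_left _ _)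
  have hsum := hmin.add hetend
  rw [add_zero] at hsum
  refine tendsto_of_tendsto_of_tendsto_of_le_of_le tendsto_const_nhds hsum
      (fun _ => zero_le) (fun n => ?_)
  show ∫⁻ p, f n p ∂θ ≤ _
  rw [← lintegral_add_right _ (me n)]
  refine lintegral_mono fun p => ?_
  rw [min_add]
  exact le_min le_self_add (hfe n p)

/-- `L¹`-continuity of the nonlocal operator: if `uₙ → u` in `L¹(V,π)` then
`∬ |G(x,y,uₙ(x),uₙ(y)) − G(x,y,u(x),u(y))| dθ → 0`, and in particular
`𝐆[uₙ] → 𝐆[u]` in `L¹(V,π)`. -/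
theorem nonlocal_operator_L1_continuous
    {V : Type*} [MeasurableSpace V]
    (π : Measure V) [IsFiniteMeasure π]
    (κ : Kernel V V) [IsFiniteKernel κ]
    (K : ℝ) (hK0 : 0 ≤ K) (hK : ∀ x, κ x Set.univ ≤ ENNReal.ofReal K)
    (hdb : (π ⊗ₘ κ).map Prod.swap = π ⊗ₘ κ)
    (M : ℝ) (hM : 0 < M)
    (G : V → V → ℝ → ℝ → ℝ)
    (hGmeas : Measurable fun p : (V × V) × ℝ × ℝ => G p.1.1 p.1.2 p.2.1 p.2.2)
    (hGcont : ∀ x y : V, Continuous fun q : ℝ × ℝ => G x y q.1 q.2)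
    (hGbound : ∀ (x y : V) (a b : ℝ), |G x y a b| ≤ M * (1 + |a| + |b|))
    (u : ℕ → V → ℝ) (ulim : V → ℝ)
    (humeas : ∀ n, Measurable (u n)) (huint : ∀ n, Integrable (u n) π)
    (hlimmeas : Measurable ulim) (hlimint : Integrable ulim π)
    (hconv : Tendsto (fun n => ∫ x, |u n x - ulim x| ∂π) atTop (nhds 0)) :
    Tendsto (fun n => ∫⁻ p : V × V,
        ENNReal.ofReal |G p.1 p.2 (u n p.1) (u n p.2)
          - G p.1 p.2 (ulim p.1) (ulim p.2)| ∂(π ⊗ₘ κ)) atTop (nhds 0) ∧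
    Tendsto (fun n => ∫ x, |(∫ y, G x y (u n x) (u n y) ∂(κ x))
        - (∫ y, G x y (ulim x) (ulim y) ∂(κ x))| ∂π) atTop (nhds 0) := by
  have : IsFiniteMeasure (π ⊗ₘ κ) := inferInstance
  have h1 : (π ⊗ₘ κ).map Prod.fst ≤ ENNReal.ofReal K • π := by
    refine Measure.le_iff.2 fun s hs => ?_
    rw [Measure.map_apply measurable_fst hs, Measure.compProd_apply (measurable_fst hs),
      Measure.smul_apply, smul_eq_mul, ← lintegral_indicator_const hs]
    refine lintegral_mono fun x => ?_
    by_cases hx : x ∈ s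
    · simpa [hx] using (measure_mono (Set.subset_univ _)).trans (hK x)
    · have : Prod.mk x ⁻¹' (Prod.fst ⁻¹' s) = (∅ : Set V) := by
        ext y; simp [hx]
      simp [this]
  have h2 : (π ⊗ₘ κ).map Prod.snd ≤ ENNReal.ofReal K • π := by
    refine le_trans (le_of_eq ?_) h1
    conv_rhs => rw [← hdb]
    rw [Measure.map_map measurable_fst measurable_swap]
    rfl
  have hd : ∀ n, Integrable (fun x => u n x - ulim x) π := fun n => (huint n).sub hlimint
  have hconv' : Tendsto (fun n => ∫⁻ x, ‖u n x - ulim x‖ₑ ∂π) atTop (nhds 0) := by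
    have := ENNReal.tendsto_ofReal hconv
    rw [ENNReal.ofReal_zero] at this
    refine this.congr fun n => ?_
    rw [← ofReal_integral_norm_eq_lintegral_enorm (hd n)]
    simp [Real.norm_eq_abs]
  have main : Tendsto (fun n => ∫⁻ p : V × V,
        ENNReal.ofReal |G p.1 p.2 (u n p.1) (u n p.2)
          - G p.1 p.2 (ulim p.1) (ulim p.2)| ∂(π ⊗ₘ κ)) atTop (nhds 0) := by
    refine tendsto_of_subseq_tendsto fun ns hns => ?_
    have hm : TendstoInMeasure π (fun n => u (ns n)) atTop ulim := by
      refine tendstoInMeasure_of_tendsto_eLpNorm (p := 1) one_ne_zero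
        (fun n => (humeas _).aestronglyMeasurable) hlimmeas.aestronglyMeasurable ?_
      simp only [eLpNorm_one_eq_lintegral_enorm]
      exact hconv'.comp hns
    obtain ⟨ms, hms, hae⟩ := hm.exists_seq_tendsto_ae
    exact ⟨ms, nlo_aux π (π ⊗ₘ κ) K h1 h2 M hM G hGmeas hGcont hGbound
      (fun k => u (ns (ms k))) ulim (fun k => humeas _) hlimmeas hlimint
      (hconv'.comp (hns.comp hms.tendsto_atTop)) hae⟩
  refine ⟨main, ?_⟩
  have mG : ∀ w : V → ℝ, Measurable w →
      Measurable fun p : V × V => G p.1 p.2 (w p.1) (w p.2) := fun w hw =>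
    hGmeas.comp (measurable_id.prodMk
      ((hw.comp measurable_fst).prodMk (hw.comp measurable_snd)))
  have iG : ∀ w : V → ℝ, Measurable w → Integrable w π →
      ∀ᵐ x ∂π, Integrable (fun y => G x y (w x) (w y)) (κ x) := by
    intro w hw hwi
    have i1 : Integrable (fun p : V × V => w p.1) (π ⊗ₘ κ) :=
      Integrable.comp_measurable
        ((hwi.smul_measure ENNReal.ofReal_ne_top).mono_measure h1) measurable_fst
    have i2 : Integrable (fun p : V × V => w p.2) (π ⊗ₘ κ) :=
      Integrable.comp_measurable
        ((hwi.smul_measure ENNReal.ofReal_ne_top).mono_measure h2) measurable_snd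
    have i3 : Integrable (fun p : V × V => G p.1 p.2 (w p.1) (w p.2)) (π ⊗ₘ κ) :=
      ((((integrable_const (1:ℝ)).add i1.abs).add i2.abs).const_mul M).mono'
        (mG w hw).aestronglyMeasurable (Eventually.of_forall fun p => hGbound _ _ _ _)
    exact ((Measure.integrable_compProd_iff i3.1).1 i3).1
  have mainR := (ENNReal.tendsto_toReal ENNReal.zero_ne_top).comp main
  have fin : ∀ᶠ n in atTop, (∫⁻ p : V × V,
        ENNReal.ofReal |G p.1 p.2 (u n p.1) (u n p.2)
          - G p.1 p.2 (ulim p.1) (ulim p.2)| ∂(π ⊗ₘ κ)) < ∞ :=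
    main.eventually_lt_const ENNReal.zero_lt_top
  refine tendsto_of_tendsto_of_tendsto_of_le_of_le' tendsto_const_nhds mainR
    (Eventually.of_forall fun n => integral_nonneg fun x => abs_nonneg _) ?_
  filter_upwards [fin] with n hn
  simp only [Function.comp]
  refine (ENNReal.ofReal_le_iff_le_toReal hn.ne).1 ?_
  have e0 := enorm_integral_le_lintegral_enorm (μ := π)
    (fun x => |(∫ y, G x y (u n x) (u n y) ∂(κ x)) - (∫ y, G x y (ulim x) (ulim y) ∂(κ x))|)
  rw [Real.enorm_of_nonneg (integral_nonneg fun x => abs_nonneg _)] at e0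
  refine e0.trans ?_
  rw [Measure.lintegral_compProd (by
    have := ((mG _ (humeas n)).sub (mG _ hlimmeas)).norm.ennreal_ofReal
    simpa [Real.norm_eq_abs] using this)]
  refine lintegral_mono_ae ?_
  filter_upwards [iG _ (humeas n) (huint n), iG _ hlimmeas hlimint] with x j1 j2
  rw [← integral_sub j1 j2]
  have := enorm_integral_le_lintegral_enorm (μ := κ x)
    (fun y => G x y (u n x) (u n y) - G x y (ulim x) (ulim y))
  simpa [Real.enorm_eq_ofReal_abs] using this
end

section
/- Let V, π, κ, θ be as in the kernel setting with detailed balance, and let G: V×V×ℝ×ℝ → ℝ be jointly measurable, continuous in (u,v), with |G(x,y,u,v)| ≤ M(1+|u|+|v|), skew-symmetric (G(x,y,u,v) = −G(y,x,v,u)), and ℓ-dissipative (u ≤ u' implies G(x,y,u',v) − G(x,y,u,v) ≤ ℓ(u'−u), for some ℓ ≥ 0). Let u be a pointwise solution of the Cauchy problem u̇ = 𝐆[u] on [0,∞). (1) If ū ∈ ℝ satisfies 0 = G(x,y,ū,ū) ≤ G(x,y,ū,v) for all (x,y) ∈ V×V and all v ≥ ū, and u₀ ≥ ū π-a.e.,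 then u_t ≥ ū π-a.e. for every t ≥ 0. (2) If ū ∈ ℝ satisfies 0 = G(x,y,ū,ū) ≥ G(x,y,ū,v) for all (x,y) ∈ V×V and all v ≤ ū, and u₀ ≤ ū π-a.e., then u_t ≤ ū π-a.e. for every t ≥ 0. -/
open MeasureTheory ProbabilityTheory Filter
open scoped ENNReal

/-- A pointwise solution of the Cauchy problem `u̇ = 𝐆[u]` on `[0,∞)`:
`u` is jointly measurable, `u_t` is `π`-integrable for every `t ≥ 0`, the time
derivative `𝐆[u_t](x) = ∫ G(x,y,u_t(x),u_t(y)) κ(x,dy)` is integrable on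
`(0,T] × V` for every `T > 0`, and for `π`-a.e. `x` the map `t ↦ u_t(x)` is
locally absolutely continuous with `(d/dt)u_t(x) = 𝐆[u_t](x)` a.e., expressed
in the equivalent integral form. -/
def IsPointwiseSolution {V : Type*} [MeasurableSpace V] (π : Measure V)
    (κ : Kernel V V) (G : V → V → ℝ → ℝ → ℝ) (u : ℝ → V → ℝ) : Prop :=
  Measurable (fun p : ℝ × V => u p.1 p.2) ∧
  (∀ t : ℝ, 0 ≤ t → Integrable (u t) π) ∧
  (∀ T : ℝ, 0 < T →
    ∫⁻ t in Set.Ioc (0:ℝ) T,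
      ∫⁻ x, ENNReal.ofReal |∫ y, G x y (u t x) (u t y) ∂(κ x)| ∂π < ⊤) ∧
  (∀ᵐ x ∂π, ∀ t : ℝ, 0 ≤ t →
    u t x = u 0 x + ∫ s in Set.Ioc (0:ℝ) t, ∫ y, G x y (u s x) (u s y) ∂(κ x))

theorem cp_posPart (f g : ℝ → ℝ) (c T : ℝ) (hT : 0 ≤ T)
    (hg : IntegrableOn g (Set.Ioc 0 T))
    (hf : ∀ t, 0 ≤ t → f t = f 0 + ∫ s in Set.Ioc (0:ℝ) t, g s) :
    max (c - f T) 0 = max (c - f 0) 0 +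
      ∫ s in Set.Ioc (0:ℝ) T, (if f s < c then - g s else 0) := by
  have hgi : IntervalIntegrable g volume 0 T := by
    rwa [intervalIntegrable_iff_integrableOn_Ioc_of_le hT]
  set F : ℝ → ℝ := fun t => f 0 + ∫ s in (0:ℝ)..t, g s with hF
  have hFf : ∀ t, 0 ≤ t → f t = F t := by
    intro t ht
    rw [hf t ht, hF]
    simp only [intervalIntegral.integral_of_le ht]
  set w : ℝ → ℝ := fun t => max (c - F t) 0 with hw
  have hI : AbsolutelyContinuousOnInterval (fun t => ∫ s in (0:ℝ)..t, g s) 0 T :=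
    hgi.absolutelyContinuousOnInterval_intervalIntegral (c := 0) (by simp)
  have hwac : AbsolutelyContinuousOnInterval w 0 T := by
    rw [absolutelyContinuousOnInterval_iff] at hI ⊢
    intro ε hε
    obtain ⟨δ, hδ, h⟩ := hI ε hε
    refine ⟨δ, hδ, fun E hE hlt => lt_of_le_of_lt (Finset.sum_le_sum fun i _ => ?_) (h E hE hlt)⟩
    simp only [hw, hF, Real.dist_eq]
    refine (abs_max_sub_max_le_abs _ _ _).trans (le_of_eq ?_)
    rw [abs_sub_comm]
    congr 1
    ring
  have hFTC := hwac.integral_deriv_eq_sub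
  have hae : ∀ᵐ s, s ∈ Set.uIoc 0 T → deriv w s = if f s < c then - g s else 0 := by
    filter_upwards [hwac.ae_differentiableAt, hgi.ae_hasDerivAt_integral] with s h1 h2 hs
    have hs' := Set.uIoc_subset_uIcc hs
    rw [Set.uIoc_of_le hT] at hs
    have hd := h1 hs'
    have hFd : HasDerivAt F (g s) s := (h2 hs' 0 (by simp)).const_add _
    rw [hFf s hs.1.le]
    split_ifs with hlt
    · have : w =ᶠ[nhds s] fun t => c - F t := by
        filter_upwards [hFd.continuousAt.eventually_lt continuousAt_const hlt] with t ht
        simp only [hw]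
        rw [max_eq_left]
        linarith
      rw [this.deriv_eq]
      exact (hFd.const_sub c).deriv
    · have hmin : IsLocalMin w s := by
        refine Eventually.of_forall fun t => ?_
        have : w s = 0 := by
          simp only [hw]
          rw [max_eq_right]
          linarith
        rw [this]
        exact le_max_right _ _
      exact hmin.deriv_eq_zero
  rw [intervalIntegral.integral_congr_ae hae, intervalIntegral.integral_of_le hT] at hFTC
  rw [hFf T hT, hFTC]
  simp [hw, hF]

theorem cp_gronwall (ψ : ℝ → ℝ) (K T : ℝ) (hT : 0 ≤ T) (hK : 0 ≤ K)
    (hψ : IntegrableOn ψ (Set.Ioc 0 T))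
    (h0 : ∀ t ∈ Set.Icc 0 T, 0 ≤ ∫ s in Set.Ioc 0 t, ψ s)
    (h1 : ∀ t ∈ Set.Ioc 0 T, ψ t ≤ K * ∫ s in Set.Ioc 0 t, ψ s) :
    ∫ s in Set.Ioc 0 T, ψ s = 0 := by
  have hψi : IntervalIntegrable ψ volume 0 T := by
    rwa [intervalIntegrable_iff_integrableOn_Ioc_of_le hT]
  set p : ℝ → ℝ := fun t => ∫ s in Set.Ioc 0 t, ψ s with hp
  have hpc : ContinuousOn p (Set.Icc 0 T) := by
    have := intervalIntegral.continuousOn_primitive (μ := volume) (f := ψ) (a := 0) (b := T)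
      (by rwa [integrableOn_Icc_iff_integrableOn_Ioc])
    exact this
  set q : ℝ → ℝ := Set.IccExtend hT (Set.domRestrict (Set.Icc 0 T) p) with hq
  have hqc : Continuous q := by
    exact (continuousOn_iff_continuous_domRestrict.1 hpc).Icc_extend'
  have hqp : ∀ t ∈ Set.Icc 0 T, q t = p t := by
    intro t ht
    simp [hq, Set.IccExtend_of_mem hT _ ht]
  set P : ℝ → ℝ := fun t => ∫ s in (0:ℝ)..t, q s with hP
  have hPd : ∀ t, HasDerivAt P (q t) t := fun t =>
    intervalIntegral.integral_hasDerivAt_right (hqc.intervalIntegrable _ _)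
      (hqc.stronglyMeasurableAtFilter _ _) hqc.continuousAt
  have hPn : ∀ t ∈ Set.Icc 0 T, 0 ≤ P t := by
    intro t ht
    refine intervalIntegral.integral_nonneg ht.1 fun s hs => ?_
    have hs' : s ∈ Set.Icc 0 T := ⟨hs.1, hs.2.trans ht.2⟩
    rw [hqp s hs']
    exact h0 s hs'
  have hle : ∀ t ∈ Set.Icc 0 T, p t ≤ K * P t := by
    intro t ht
    simp only [hP]
    rw [intervalIntegral.integral_of_le ht.1, ← integral_const_mul]
    refine setIntegral_mono_on (hψ.mono_set (Set.Ioc_subset_Ioc_right ht.2))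
      ((hqc.const_mul K).integrableOn_Ioc) measurableSet_Ioc fun s hs => ?_
    rw [hqp s ⟨hs.1.le, hs.2.trans ht.2⟩]
    exact h1 s ⟨hs.1, hs.2.trans ht.2⟩
  have hz := eq_zero_of_abs_deriv_le_mul_abs_self_of_eq_zero_right (f := P) (f' := q) (K := K)
    (a := 0) (b := T) (fun t _ => (hPd t).continuousAt.continuousWithinAt)
    (fun t _ => (hPd t).hasDerivWithinAt) (by simp [hP]) (by
      intro t ht
      have ht' := Set.Ico_subset_Icc_self ht
      rw [hqp t ht', Real.norm_of_nonneg (h0 t ht'), Real.norm_of_nonneg (hPn t ht')]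
      exact hle t ht')
  have hTm : T ∈ Set.Icc 0 T := ⟨hT, le_rfl⟩
  have a1 := hle T hTm
  rw [hz T hTm, mul_zero] at a1
  exact le_antisymm a1 (h0 T hTm)

theorem cp_flux {V : Type*} [MeasurableSpace V]
    (π : Measure V) [IsFiniteMeasure π]
    (κ : Kernel V V) [IsFiniteKernel κ]
    (hdb : (π ⊗ₘ κ).map Prod.swap = π ⊗ₘ κ)
    (M : ℝ)
    (G : V → V → ℝ → ℝ → ℝ)
    (hGmeas : Measurable fun p : (V × V) × ℝ × ℝ => G p.1.1 p.1.2 p.2.1 p.2.2)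
    (hGbound : ∀ (x y : V) (a b : ℝ), |G x y a b| ≤ M * (1 + |a| + |b|))
    (hGskew : ∀ (x y : V) (a b : ℝ), G x y a b = - G y x b a)
    (ℓ : ℝ) (hℓ : 0 ≤ ℓ)
    (hGdiss : ∀ (x y : V) (a a' b : ℝ), a ≤ a' →
      G x y a' b - G x y a b ≤ ℓ * (a' - a))
    (c : ℝ) (hc : ∀ (x y : V) (v : ℝ), c ≤ v → 0 ≤ G x y c v)
    (v : V → ℝ) (hvm : Measurable v) (hv : Integrable v π) :
    ∫ x, (if v x < c then - ∫ y, G x y (v x) (v y) ∂(κ x) else 0) ∂π ≤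
      (ℓ * κ.bound.toReal) * ∫ x, max (c - v x) 0 ∂π := by
  set θ := π ⊗ₘ κ with hθ
  have hreal : ∀ f : V → ℝ, Measurable f → Integrable f π →
      Integrable (fun x => (κ x).real Set.univ * f x) π := by
    intro f hfm hf
    refine (hf.norm.const_mul κ.bound.toReal).mono' ?_ (Eventually.of_forall fun x => ?_)
    · refine Measurable.aestronglyMeasurable ?_
      refine Measurable.mul ?_ hfm
      exact (κ.measurable_coe MeasurableSet.univ).ennreal_toReal
    · rw [norm_mul, Real.norm_of_nonneg measureReal_nonneg]
      gcongr
      exact ENNReal.toReal_mono κ.bound_ne_top (κ.measure_le_bound x _)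
  have hfst : ∀ f : V → ℝ, Measurable f → Integrable f π →
      Integrable (fun p : V × V => f p.1) θ := by
    intro f hfm hf
    have hm : AEStronglyMeasurable (fun p : V × V => f p.1) (π ⊗ₘ κ) :=
      (hfm.comp measurable_fst).aestronglyMeasurable
    rw [hθ, Measure.integrable_compProd_iff hm]
    refine ⟨Eventually.of_forall fun x => integrable_const (f x), ?_⟩
    simp only [integral_const, smul_eq_mul]
    exact hreal _ hfm.norm hf.norm
  have hswap : ∀ f : V × V → ℝ, Measurable f → ∫ p, f p.swap ∂θ = ∫ p, f p ∂θ := by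
    intro f hfm
    conv_rhs => rw [← hdb]
    rw [integral_map measurable_swap.aemeasurable hfm.aestronglyMeasurable]
  have hswapi : ∀ f : V × V → ℝ, Measurable f → Integrable f θ →
      Integrable (fun p => f p.swap) θ := by
    intro f hfm hf
    rw [← hdb] at hf
    exact (integrable_map_measure hfm.aestronglyMeasurable measurable_swap.aemeasurable).1 hf
  set w : V → ℝ := fun x => max (c - v x) 0 with hw
  have hwm : Measurable w := (measurable_const.sub hvm).max measurable_const
  have hwi : Integrable w π := ((integrable_const c).sub hv).pos_part
  have hw1 := hfst w hwm hwi
  have hw2 := hswapi _ (hwm.comp measurable_fst) hw1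
  have hv1 := hfst v hvm hv
  have hv2 := hswapi _ (hvm.comp measurable_fst) hv1
  have hG : Measurable fun p : V × V => G p.1 p.2 (v p.1) (v p.2) :=
    hGmeas.comp (measurable_id.prodMk
      ((hvm.comp measurable_fst).prodMk (hvm.comp measurable_snd)))
  set H : V × V → ℝ := fun p => if v p.1 < c then - G p.1 p.2 (v p.1) (v p.2) else 0 with hH
  have hHm : Measurable H := by
    refine Measurable.ite ?_ hG.neg measurable_const
    exact measurableSet_lt (hvm.comp measurable_fst) measurable_const
  have hHi : Integrable H θ := by
    have hb : Integrable (fun p : V × V => M * (1 + |v p.1| + |v p.2|)) θ :=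
      (((integrable_const 1).add hv1.abs).add hv2.abs).const_mul M
    refine hb.mono' hHm.aestronglyMeasurable (Eventually.of_forall fun p => ?_)
    have := hGbound p.1 p.2 (v p.1) (v p.2)
    simp only [hH]
    split_ifs
    · simpa using this
    · simpa using (abs_nonneg _).trans this
  have hHs := hswapi H hHm hHi
  have key : ∀ p : V × V, H p + H p.swap ≤ ℓ * (w p.1 + w p.2) := by
    rintro ⟨x, y⟩
    have wx : 0 ≤ w x := le_max_right _ _
    have wy : 0 ≤ w y := le_max_right _ _
    have one : ∀ x y : V, v x < c → c ≤ v y → - G x y (v x) (v y) ≤ ℓ * w x := by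
      intro x y hx hy
      have e1 := hGdiss x y (v x) c (v y) hx.le
      have e2 := hc x y (v y) hy
      have e3 : w x = c - v x := max_eq_left (by linarith)
      rw [e3]; linarith
    have lx := mul_nonneg hℓ wx
    have ly := mul_nonneg hℓ wy
    simp only [hH, Prod.swap_prod_mk, mul_add]
    by_cases hx : v x < c <;> by_cases hy : v y < c
    · rw [if_pos hx, if_pos hy, hGskew x y]; linarith
    · rw [if_pos hx, if_neg hy]
      have := one x y hx (not_lt.1 hy); linarith
    · rw [if_neg hx, if_pos hy]
      have := one y x hy (not_lt.1 hx); linarith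
    · rw [if_neg hx, if_neg hy]; linarith
  have hle := integral_mono (hHi.add hHs) ((hw1.add hw2).const_mul ℓ) key
  have e1 : ∫ p, (H p + H p.swap) ∂θ = 2 * ∫ p, H p ∂θ := by
    rw [integral_add hHi hHs, hswap H hHm]; ring
  have e2 : ∫ p : V × V, ℓ * (w p.1 + w p.2) ∂θ = 2 * (ℓ * ∫ p : V × V, w p.1 ∂θ) := by
    rw [integral_const_mul]
    have : ∫ p : V × V, (w p.1 + w p.2) ∂θ = ∫ p : V × V, w p.1 ∂θ + ∫ p : V × V, w p.2 ∂θ :=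
      integral_add hw1 hw2
    rw [this, ← hswap (fun p => w p.1) (hwm.comp measurable_fst)]
    simp only [Prod.fst_swap]; ring
  have e3 : ∫ p : V × V, w p.1 ∂θ ≤ κ.bound.toReal * ∫ x, w x ∂π := by
    rw [hθ, Measure.integral_compProd hw1, ← integral_const_mul]
    refine integral_mono ?_ (hwi.const_mul _) fun x => ?_
    · simpa only [integral_const, smul_eq_mul] using hreal w hwm hwi
    · simp only [integral_const, smul_eq_mul]
      refine mul_le_mul_of_nonneg_right ?_ (le_max_right _ _)
      exact ENNReal.toReal_mono κ.bound_ne_top (κ.measure_le_bound x _)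
  have e4 : ∫ p, H p ∂θ = ∫ x, (if v x < c then - ∫ y, G x y (v x) (v y) ∂(κ x) else 0) ∂π := by
    rw [hθ, Measure.integral_compProd hHi]
    refine integral_congr_ae (Eventually.of_forall fun x => ?_)
    simp only [hH]
    split_ifs
    · rw [integral_neg]
    · simp
  rw [← e4]
  have e5 := mul_le_mul_of_nonneg_left e3 hℓ
  have hle' : ∫ p, (H p + H p.swap) ∂θ ≤ ∫ p : V × V, ℓ * (w p.1 + w p.2) ∂θ := hle
  rw [e1, e2] at hle'
  rw [mul_assoc]
  linarith

theorem cp_lower {V : Type*} [MeasurableSpace V]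
    (π : Measure V) [IsFiniteMeasure π]
    (κ : Kernel V V) [IsFiniteKernel κ]
    (hdb : (π ⊗ₘ κ).map Prod.swap = π ⊗ₘ κ)
    (M : ℝ)
    (G : V → V → ℝ → ℝ → ℝ)
    (hGmeas : Measurable fun p : (V × V) × ℝ × ℝ => G p.1.1 p.1.2 p.2.1 p.2.2)
    (hGbound : ∀ (x y : V) (a b : ℝ), |G x y a b| ≤ M * (1 + |a| + |b|))
    (hGskew : ∀ (x y : V) (a b : ℝ), G x y a b = - G y x b a)
    (ℓ : ℝ) (hℓ : 0 ≤ ℓ)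
    (hGdiss : ∀ (x y : V) (a a' b : ℝ), a ≤ a' →
      G x y a' b - G x y a b ≤ ℓ * (a' - a))
    (u : ℝ → V → ℝ)
    (hu : IsPointwiseSolution π κ G u)
    (c : ℝ) (hc : ∀ (x y : V) (v : ℝ), c ≤ v → 0 ≤ G x y c v)
    (hu0 : ∀ᵐ x ∂π, c ≤ u 0 x) (T : ℝ) (hT : 0 ≤ T) :
    ∀ᵐ x ∂π, c ≤ u T x := by
  obtain ⟨hum, hui, hfin, hsol⟩ := hu
  rcases hT.eq_or_lt with rfl | hTpos
  · exact hu0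
  set g : ℝ × V → ℝ := fun p => ∫ y, G p.2 y (u p.1 p.2) (u p.1 y) ∂(κ p.2) with hg
  have hgm : Measurable g := by
    have h1 : Measurable fun q : (ℝ × V) × V => G q.1.2 q.2 (u q.1.1 q.1.2) (u q.1.1 q.2) := by
      have a1 : Measurable fun q : (ℝ × V) × V => u q.1.1 q.1.2 := hum.comp measurable_fst
      have a2 : Measurable fun q : (ℝ × V) × V => u q.1.1 q.2 :=
        hum.comp ((measurable_fst.comp measurable_fst).prodMk measurable_snd)
      exact hGmeas.comp (((measurable_snd.comp measurable_fst).prodMk measurable_snd).prodMk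
        (a1.prodMk a2))
    have := StronglyMeasurable.integral_kernel_prod_right' (κ := κ.comap Prod.snd measurable_snd)
      h1.stronglyMeasurable
    exact this.measurable
  set h : ℝ × V → ℝ := fun p => if u p.1 p.2 < c then - g p else 0 with hh
  have hhm : Measurable h :=
    Measurable.ite (measurableSet_lt hum measurable_const) hgm.neg measurable_const
  have hgi : Integrable g ((volume.restrict (Set.Ioc 0 T)).prod π) := by
    refine ⟨hgm.aestronglyMeasurable, ?_⟩
    rw [hasFiniteIntegral_iff_norm, lintegral_prod _ (by fun_prop)]
    exact hfin T hTpos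
  have hhi : Integrable h ((volume.restrict (Set.Ioc 0 T)).prod π) := by
    refine hgi.norm.mono' hhm.aestronglyMeasurable (Eventually.of_forall fun p => ?_)
    simp only [hh]
    split_ifs
    · rw [norm_neg]
    · simp
  set ψ : ℝ → ℝ := fun s => ∫ x, h (s, x) ∂π with hψ
  have hψi : IntegrableOn ψ (Set.Ioc 0 T) := hhi.integral_prod_left
  have hφ : ∀ t ∈ Set.Icc 0 T, ∫ x, max (c - u t x) 0 ∂π = ∫ s in Set.Ioc 0 t, ψ s := by
    intro t ht
    have hμ : (volume.restrict (Set.Ioc 0 t)).prod π ≤ (volume.restrict (Set.Ioc 0 T)).prod π :=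
      Measure.prod_mono (Measure.restrict_mono (Set.Ioc_subset_Ioc_right ht.2) le_rfl) le_rfl
    have hgt := hgi.mono_measure hμ
    have hht := hhi.mono_measure hμ
    simp only [hψ]
    rw [← integral_integral_swap (f := fun x s => h (s, x)) (μ := π) hht.swap]
    refine integral_congr_ae ?_
    filter_upwards [hsol, hu0, hgt.prod_left_ae] with x hx hx0 hxg
    have := cp_posPart (fun s => u s x) (fun s => g (s, x)) c t ht.1 hxg hx
    rw [this, max_eq_right (by linarith), zero_add]
  have hz := cp_gronwall ψ (ℓ * κ.bound.toReal) T hT (mul_nonneg hℓ ENNReal.toReal_nonneg) hψi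
    (fun t ht => by
      rw [← hφ t ht]
      exact integral_nonneg fun x => le_max_right _ _)
    (fun t ht => by
      rw [← hφ t (Set.Ioc_subset_Icc_self ht)]
      exact cp_flux π κ hdb M G hGmeas hGbound hGskew ℓ hℓ hGdiss c hc (u t)
        (hum.comp measurable_prodMk_left) (hui t ht.1.le))
  have hint : Integrable (fun x => max (c - u T x) 0) π :=
    ((integrable_const c).sub (hui T hT)).pos_part
  have hnn : 0 ≤ fun x => max (c - u T x) 0 := fun x => le_max_right _ _
  rw [← hφ T ⟨hT, le_rfl⟩, integral_eq_zero_iff_of_nonneg hnn hint] at hz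
  filter_upwards [hz] with x hx
  have : c - u T x ≤ 0 := (le_max_left _ _).trans hx.le
  linarith

/-- Comparison principles: values `ū` that are sub/super-equilibria of `G` are
propagated as a.e. lower/upper bounds of the solution. -/
theorem comparison_principles
    {V : Type*} [MeasurableSpace V]
    (π : Measure V) [IsFiniteMeasure π]
    (κ : Kernel V V) [IsFiniteKernel κ]
    (hdb : (π ⊗ₘ κ).map Prod.swap = π ⊗ₘ κ)
    (M : ℝ) (hM : 0 < M)
    (G : V → V → ℝ → ℝ → ℝ)
    (hGmeas : Measurable fun p : (V × V) × ℝ × ℝ => G p.1.1 p.1.2 p.2.1 p.2.2)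
    (hGcont : ∀ x y : V, Continuous fun q : ℝ × ℝ => G x y q.1 q.2)
    (hGbound : ∀ (x y : V) (a b : ℝ), |G x y a b| ≤ M * (1 + |a| + |b|))
    (hGskew : ∀ (x y : V) (a b : ℝ), G x y a b = - G y x b a)
    (ℓ : ℝ) (hℓ : 0 ≤ ℓ)
    (hGdiss : ∀ (x y : V) (a a' b : ℝ), a ≤ a' →
      G x y a' b - G x y a b ≤ ℓ * (a' - a))
    (u : ℝ → V → ℝ)
    (hu : IsPointwiseSolution π κ G u) :
    (∀ ubar : ℝ,
      (∀ x y : V, G x y ubar ubar = 0) →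
      (∀ (x y : V) (v : ℝ), ubar ≤ v → 0 ≤ G x y ubar v) →
      (∀ᵐ x ∂π, ubar ≤ u 0 x) →
      ∀ t : ℝ, 0 ≤ t → ∀ᵐ x ∂π, ubar ≤ u t x) ∧
    (∀ ubar : ℝ,
      (∀ x y : V, G x y ubar ubar = 0) →
      (∀ (x y : V) (v : ℝ), v ≤ ubar → G x y ubar v ≤ 0) →
      (∀ᵐ x ∂π, u 0 x ≤ ubar) →
      ∀ t : ℝ, 0 ≤ t → ∀ᵐ x ∂π, u t x ≤ ubar) := by
  refine ⟨fun c _ hc h0 t ht => cp_lower π κ hdb M G hGmeas hGbound hGskew ℓ hℓ hGdiss u hu c hc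
    h0 t ht, fun c _ hc h0 t ht => ?_⟩
  obtain ⟨hum, hui, hfin, hsol⟩ := hu
  have hm : Measurable fun p : (V × V) × ℝ × ℝ => - G p.1.1 p.1.2 (-p.2.1) (-p.2.2) := by
    have : Measurable fun p : (V × V) × ℝ × ℝ => (p.1, (-p.2.1, -p.2.2)) := by fun_prop
    exact (hGmeas.comp this).neg
  have := cp_lower π κ hdb M (fun x y a b => - G x y (-a) (-b)) hm
    (fun x y a b => by simpa using hGbound x y (-a) (-b))
    (fun x y a b => by rw [hGskew x y])
    ℓ hℓ (fun x y a a' b hab => by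
      have := hGdiss x y (-a') (-a) (-b) (by linarith)
      linarith)
    (fun t x => - u t x)
    ⟨hum.neg, fun t ht => (hui t ht).neg, fun T hT => by
      simpa only [neg_neg, integral_neg, abs_neg] using hfin T hT, by
      filter_upwards [hsol] with x hx t ht
      simp only [neg_neg, integral_neg]
      rw [hx t ht]; ring⟩
    (-c) (fun x y v hv => by
      have := hc x y (-v) (by linarith)
      rw [neg_neg]; linarith)
    (by filter_upwards [h0] with x hx; linarith) t ht
  filter_upwards [this] with x hx
  linarith
end

section
/- Let V, π, κ, θ be as in the kernel setting with detailed balance, and let G: V×V×ℝ×ℝ → ℝ be jointly measurable, continuous in (u,v), with |G(x,y,u,v)| ≤ M(1+|u|+|v|), skew-symmetric (G(x,y,u,v) = −G(y,x,v,u)), and ℓ-dissipative (u ≤ u' implies G(x,y,u',v) − G(x,y,u,v) ≤ ℓ(u'−u), for some ℓ ≥ 0). If u and v are two pointwise solutions of the Cauchy problem u̇ = 𝐆[u] on [0,∞), then for every t ≥ 0: ∫_V |u_t − v_t| dπ ≤ e^{2‖κ_V‖_∞ ℓ t} ∫_V |u₀ − v₀| dπ. -/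
open MeasureTheory ProbabilityTheory Filter
open scoped ENNReal

lemma abs_formula {w g : ℝ → ℝ} {T : ℝ} (hT : 0 ≤ T) (hg : IntegrableOn g (Set.Ioc 0 T))
    (hw : ∀ t ∈ Set.Icc 0 T, w t = w 0 + ∫ s in Set.Ioc (0:ℝ) t, g s) :
    |w T| = |w 0| + ∫ s in Set.Ioc (0:ℝ) T, Real.sign (w s) * g s := by
  have hgi : IntervalIntegrable g volume 0 T :=
    (intervalIntegrable_iff_integrableOn_Ioc_of_le hT).2 hg
  set W : ℝ → ℝ := fun t => w 0 + ∫ s in (0:ℝ)..t, g s with hW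
  have hWw : ∀ t ∈ Set.Icc 0 T, w t = W t := by
    intro t ht
    rw [hw t ht, hW]
    simp only
    rw [intervalIntegral.integral_of_le ht.1]
  have hac0 := hgi.absolutelyContinuousOnInterval_intervalIntegral (c := 0) (by simp)
  have hac : AbsolutelyContinuousOnInterval (fun t => |W t|) 0 T := by
    refine squeeze_zero (fun t ↦ ?_) (fun t ↦ ?_) hac0
    · exact Finset.sum_nonneg (fun i hi ↦ by positivity)
    · refine Finset.sum_le_sum fun i _ => ?_
      simp only [Real.dist_eq, hW]
      refine (abs_abs_sub_abs_le _ _).trans ?_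
      simp
  have h := hac.integral_deriv_eq_sub
  have h2 : ∫ s in (0:ℝ)..T, deriv (fun t => |W t|) s
      = ∫ s in (0:ℝ)..T, Real.sign (w s) * g s := by
    apply intervalIntegral.integral_congr_ae
    filter_upwards [hgi.ae_hasDerivAt_integral] with x hx hxm
    have hxm' : x ∈ Set.uIcc 0 T := Set.uIoc_subset_uIcc hxm
    have hd : HasDerivAt W (g x) x := by
      simpa [hW] using (hx hxm' 0 (by simp)).const_add (w 0)
    rw [hWw x (by rwa [Set.uIcc_of_le hT] at hxm')]
    rcases lt_trichotomy (W x) 0 with h0 | h0 | h0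
    · rw [Real.sign_of_neg h0]
      have : (fun t => |W t|) =ᶠ[nhds x] fun t => - W t := by
        filter_upwards [hd.continuousAt.eventually_lt continuousAt_const h0] with t ht
        exact abs_of_neg ht
      rw [this.deriv_eq, hd.fun_neg.deriv]; ring
    · rw [h0, Real.sign_zero, zero_mul]
      apply IsLocalMin.deriv_eq_zero
      refine Filter.Eventually.of_forall fun t => ?_
      simp [h0]
    · rw [Real.sign_of_pos h0]
      have : (fun t => |W t|) =ᶠ[nhds x] fun t => W t := by
        filter_upwards [continuousAt_const.eventually_lt hd.continuousAt h0] with t ht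
        exact abs_of_pos ht
      rw [this.deriv_eq, hd.deriv]; ring
  rw [h2, intervalIntegral.integral_of_le hT] at h
  rw [h, hWw T ⟨hT, le_rfl⟩, hWw 0 ⟨le_rfl, hT⟩]
  ring

lemma sign_ineq {V : Type*} (G : V → V → ℝ → ℝ → ℝ)
    (hGskew : ∀ (x y : V) (a b : ℝ), G x y a b = - G y x b a)
    (ℓ : ℝ) (hℓ : 0 ≤ ℓ)
    (hGdiss : ∀ (x y : V) (a a' b : ℝ), a ≤ a' →
      G x y a' b - G x y a b ≤ ℓ * (a' - a)) (x y : V) (a b c d : ℝ) :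
    (Real.sign (a - b) - Real.sign (c - d)) * (G x y a c - G x y b d)
      ≤ 2 * ℓ * (|a - b| + |c - d|) := by
  have key : ∀ a b c d, b ≤ a → c ≤ d → G x y a c - G x y b d ≤ ℓ * (|a - b| + |c - d|) := by
    intro a b c d h1 h2
    have e1 := hGdiss x y b a c h1
    have e2 := hGdiss y x c d b h2
    rw [hGskew y x d b, hGskew y x c b] at e2
    rw [abs_of_nonneg (by linarith), abs_of_nonpos (by linarith)]
    nlinarith
  have hR : 0 ≤ ℓ * (|a - b| + |c - d|) := by positivity
  have k1 := key a b c d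
  have k2 := key b a d c
  rw [abs_sub_comm b a, abs_sub_comm d c] at k2
  rcases lt_trichotomy (a - b) 0 with h0 | h0 | h0 <;>
  rcases lt_trichotomy (c - d) 0 with h1 | h1 | h1 <;>
  simp only [h0, h1, Real.sign_of_neg, Real.sign_of_pos, Real.sign_zero] <;>
  first
  | (have := k1 (by linarith) (by linarith); have := k2 (by linarith) (by linarith); simp only [h0, h1] at *; nlinarith)
  | (have := k1 (by linarith) (by linarith); simp only [h0, h1] at *; nlinarith)
  | (have := k2 (by linarith) (by linarith); simp only [h0, h1] at *; nlinarith)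
  | (simp only [h0, h1] at *; nlinarith)

lemma my_gronwall {f : ℝ → ℝ} {c T : ℝ} (hc : 0 ≤ c) (hT : 0 ≤ T)
    (hf : ContinuousOn f (Set.Icc 0 T))
    (h : ∀ t ∈ Set.Icc 0 T, f t ≤ f 0 + c * ∫ s in Set.Ioc (0:ℝ) t, f s) :
    f T ≤ Real.exp (c * T) * f 0 := by
  have hfi : IntervalIntegrable f volume 0 T := by
    apply ContinuousOn.intervalIntegrable; rwa [Set.uIcc_of_le hT]
  set Φ : ℝ → ℝ := fun t => ∫ s in (0:ℝ)..t, f s with hΦ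
  have hΦc : ContinuousOn Φ (Set.Icc 0 T) := by
    have := (hfi.absolutelyContinuousOnInterval_intervalIntegral (c := 0) (by simp)).continuousOn
    rwa [Set.uIcc_of_le hT] at this
  have h' : ∀ t ∈ Set.Icc 0 T, f t ≤ f 0 + c * Φ t := by
    intro t ht
    have := h t ht
    rwa [← intervalIntegral.integral_of_le ht.1] at this
  have hΦd : ∀ t ∈ Set.Ioo 0 T, HasDerivAt Φ (f t) t := by
    intro t ht
    have hnh : Set.Icc 0 T ∈ nhds t := Icc_mem_nhds ht.1 ht.2
    apply intervalIntegral.integral_hasDerivAt_right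
    · exact hfi.mono_set (by
        rw [Set.uIcc_of_le hT, Set.uIcc_of_le ht.1.le]; exact Set.Icc_subset_Icc_right ht.2.le)
    · exact ⟨Set.Icc 0 T, hnh, hf.aestronglyMeasurable measurableSet_Icc⟩
    · exact hf.continuousAt hnh
  set H : ℝ → ℝ := fun t => Real.exp (-(c * t)) * (f 0 + c * Φ t) with hH
  have hHd : ∀ t ∈ Set.Ioo 0 T, HasDerivAt H
      (Real.exp (-(c * t)) * (-c) * (f 0 + c * Φ t) + Real.exp (-(c * t)) * (c * f t)) t := by
    intro t ht
    have e1 : HasDerivAt (fun t => Real.exp (-(c * t))) (Real.exp (-(c * t)) * (-c)) t := by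
      have := ((hasDerivAt_id t).const_mul c).fun_neg.exp
      simpa using this
    exact e1.mul (((hΦd t ht).const_mul c).const_add (f 0))
  have hanti : AntitoneOn H (Set.Icc 0 T) := by
    apply antitoneOn_of_deriv_nonpos (convex_Icc 0 T)
    · apply ContinuousOn.mul
      · fun_prop
      · exact continuousOn_const.add (continuousOn_const.mul hΦc)
    · rw [interior_Icc]
      exact fun t ht => (hHd t ht).differentiableAt.differentiableWithinAt
    · rw [interior_Icc]
      intro t ht
      rw [(hHd t ht).deriv]
      have h1 := h' t (Set.Ioo_subset_Icc_self ht)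
      have h2 := Real.exp_pos (-(c * t))
      have h3 : 0 ≤ Real.exp (-(c * t)) * c * (f 0 + c * Φ t - f t) :=
        mul_nonneg (by positivity) (by linarith)
      nlinarith
  have hle := hanti ⟨le_rfl, hT⟩ ⟨hT, le_rfl⟩ hT
  have h0 : H 0 = f 0 := by simp [hH, hΦ]
  rw [h0] at hle
  have hTT := h' T ⟨hT, le_rfl⟩
  have : f 0 + c * Φ T = Real.exp (c * T) * H T := by
    simp only [hH]; rw [← mul_assoc, ← Real.exp_add]; simp
  rw [this] at hTT
  exact hTT.trans (by gcongr)

lemma measurable_rsign : Measurable Real.sign := by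
  unfold Real.sign
  exact Measurable.ite measurableSet_Iio measurable_const
    (Measurable.ite measurableSet_Ioi measurable_const measurable_const)

lemma abs_rsign_le (a : ℝ) : |Real.sign a| ≤ 1 := by
  rcases Real.sign_apply_eq a with h | h | h <;> rw [h] <;> simp

lemma integrable_fst_compProd {V : Type*} [MeasurableSpace V]
    (π : Measure V) [IsFiniteMeasure π] (κ : Kernel V V) [IsFiniteKernel κ]
    (K : ℝ) (hK0 : 0 ≤ K) (hK : ∀ x, κ x Set.univ ≤ ENNReal.ofReal K)
    {a : V → ℝ} (ham : Measurable a) (ha : Integrable a π) :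
    Integrable (fun p : V × V => a p.1) (π ⊗ₘ κ) ∧
    ∫ p, |a p.1| ∂(π ⊗ₘ κ) ≤ K * ∫ x, |a x| ∂π := by
  have hb : ∀ x, (κ x).real Set.univ ≤ K := fun x =>
    ENNReal.toReal_le_of_le_ofReal hK0 (hK x)
  have hm : Measurable (fun p : V × V => a p.1) := ham.comp measurable_fst
  have hint : Integrable (fun p : V × V => a p.1) (π ⊗ₘ κ) := by
    rw [Measure.integrable_compProd_iff hm.aestronglyMeasurable]
    refine ⟨Eventually.of_forall fun x => integrable_const (a x), ?_⟩
    refine (ha.abs.const_mul K).mono'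
      (hm.norm.stronglyMeasurable.integral_kernel_prod_right').aestronglyMeasurable ?_
    refine Eventually.of_forall fun x => ?_
    simp only [integral_const, smul_eq_mul, Real.norm_eq_abs, abs_mul, abs_abs,
      abs_of_nonneg measureReal_nonneg]
    exact mul_le_mul_of_nonneg_right (hb x) (abs_nonneg _)
  refine ⟨hint, ?_⟩
  rw [Measure.integral_compProd hint.abs, ← integral_const_mul]
  refine integral_mono ((Measure.integrable_compProd_iff hint.aestronglyMeasurable).1 hint).2 (ha.abs.const_mul K) fun x => ?_
  simp only [integral_const, smul_eq_mul]
  exact mul_le_mul_of_nonneg_right (hb x) (abs_nonneg _)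

lemma space_ineq
    {V : Type*} [MeasurableSpace V]
    (π : Measure V) [IsFiniteMeasure π]
    (κ : Kernel V V) [IsFiniteKernel κ]
    (K : ℝ) (hK0 : 0 ≤ K) (hK : ∀ x, κ x Set.univ ≤ ENNReal.ofReal K)
    (hdb : (π ⊗ₘ κ).map Prod.swap = π ⊗ₘ κ)
    (M : ℝ)
    (G : V → V → ℝ → ℝ → ℝ)
    (hGmeas : Measurable fun p : (V × V) × ℝ × ℝ => G p.1.1 p.1.2 p.2.1 p.2.2)
    (hGbound : ∀ (x y : V) (a b : ℝ), |G x y a b| ≤ M * (1 + |a| + |b|))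
    (hGskew : ∀ (x y : V) (a b : ℝ), G x y a b = - G y x b a)
    (ℓ : ℝ) (hℓ : 0 ≤ ℓ)
    (hGdiss : ∀ (x y : V) (a a' b : ℝ), a ≤ a' →
      G x y a' b - G x y a b ≤ ℓ * (a' - a))
    (a b : V → ℝ) (ham : Measurable a) (hbm : Measurable b)
    (ha : Integrable a π) (hb : Integrable b π) :
    ∫ x, Real.sign (a x - b x) *
      (∫ y, G x y (a x) (a y) ∂(κ x) - ∫ y, G x y (b x) (b y) ∂(κ x)) ∂π
      ≤ 2 * K * ℓ * ∫ x, |a x - b x| ∂π := by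
  have hsw : MeasurePreserving Prod.swap (π ⊗ₘ κ) (π ⊗ₘ κ) := ⟨measurable_swap, hdb⟩
  have hemb : MeasurableEmbedding (Prod.swap : V × V → V × V) :=
    (MeasurableEquiv.prodComm (α := V) (β := V)).measurableEmbedding
  have hswint : ∀ f : V × V → ℝ, ∫ p, f p.swap ∂(π ⊗ₘ κ) = ∫ p, f p ∂(π ⊗ₘ κ) :=
    fun f => hsw.integral_comp hemb f
  have hsnd : ∀ c : V → ℝ, Integrable (fun p : V × V => c p.1) (π ⊗ₘ κ) →
      Integrable (fun p : V × V => c p.2) (π ⊗ₘ κ) := fun c hc =>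
    (hsw.integrable_comp_emb hemb).2 hc
  have hGi : ∀ c : V → ℝ, Measurable c → Integrable c π →
      Integrable (fun p : V × V => G p.1 p.2 (c p.1) (c p.2)) (π ⊗ₘ κ) := by
    intro c hcm hc
    have h1 := (integrable_fst_compProd π κ K hK0 hK hcm hc).1
    have h2 := hsnd c h1
    have hm : Measurable (fun p : V × V => G p.1 p.2 (c p.1) (c p.2)) :=
      hGmeas.comp (f := fun p : V × V => (p, (c p.1, c p.2))) (by fun_prop)
    refine ((((integrable_const (1:ℝ)).add h1.abs).add h2.abs).const_mul M).mono'
      hm.aestronglyMeasurable (Eventually.of_forall fun p => ?_)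
    exact hGbound _ _ _ _
  have hA := hGi a ham ha
  have hB := hGi b hbm hb
  obtain ⟨hw1, hwK⟩ := integrable_fst_compProd π κ K hK0 hK (ham.sub hbm) (ha.sub hb)
  simp only [Pi.sub_apply] at hw1 hwK
  have hw2 := hsnd (fun x => a x - b x) hw1
  set D : V × V → ℝ := fun p => G p.1 p.2 (a p.1) (a p.2) - G p.1 p.2 (b p.1) (b p.2) with hD
  have hDi : Integrable D (π ⊗ₘ κ) := hA.sub hB
  have hs1m : Measurable (fun p : V × V => Real.sign (a p.1 - b p.1)) :=
    measurable_rsign.comp (by fun_prop)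
  have hs2m : Measurable (fun p : V × V => Real.sign (a p.2 - b p.2)) :=
    measurable_rsign.comp (by fun_prop)
  have hS1 : Integrable (fun p : V × V => Real.sign (a p.1 - b p.1) * D p) (π ⊗ₘ κ) :=
    hDi.bdd_mul hs1m.aestronglyMeasurable (c := 1) (Eventually.of_forall fun p => abs_rsign_le _)
  have hS2 : Integrable (fun p : V × V => Real.sign (a p.2 - b p.2) * D p) (π ⊗ₘ κ) :=
    hDi.bdd_mul hs2m.aestronglyMeasurable (c := 1) (Eventually.of_forall fun p => abs_rsign_le _)
  have e1 : ∫ x, Real.sign (a x - b x) *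
      (∫ y, G x y (a x) (a y) ∂(κ x) - ∫ y, G x y (b x) (b y) ∂(κ x)) ∂π
      = ∫ p, Real.sign (a p.1 - b p.1) * D p ∂(π ⊗ₘ κ) := by
    rw [Measure.integral_compProd hS1]
    apply integral_congr_ae
    filter_upwards [((Measure.integrable_compProd_iff hA.aestronglyMeasurable).1 hA).1,
      ((Measure.integrable_compProd_iff hB.aestronglyMeasurable).1 hB).1] with x h1 h2
    simp only [hD]
    rw [integral_const_mul, integral_sub h1 h2]
  have e2 : ∫ p, Real.sign (a p.1 - b p.1) * D p ∂(π ⊗ₘ κ)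
      = - ∫ p, Real.sign (a p.2 - b p.2) * D p ∂(π ⊗ₘ κ) := by
    rw [← hswint, ← integral_neg]
    congr 1
    funext p
    simp only [hD, Prod.fst_swap, Prod.snd_swap]
    rw [hGskew p.2 p.1, hGskew p.2 p.1]
    ring
  have e3 : ∫ p, (Real.sign (a p.1 - b p.1) * D p - Real.sign (a p.2 - b p.2) * D p) ∂(π ⊗ₘ κ)
      ≤ ∫ p : V × V, 2 * ℓ * (|a p.1 - b p.1| + |a p.2 - b p.2|) ∂(π ⊗ₘ κ) := by
    refine integral_mono (hS1.sub hS2) ((hw1.abs.add hw2.abs).const_mul _) fun p => ?_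
    have := sign_ineq G hGskew ℓ hℓ hGdiss p.1 p.2 (a p.1) (b p.1) (a p.2) (b p.2)
    simp only [hD]
    linarith
  rw [integral_sub hS1 hS2, integral_const_mul, integral_add hw1.abs hw2.abs] at e3
  have e4 : ∫ p : V × V, |a p.2 - b p.2| ∂(π ⊗ₘ κ) = ∫ p : V × V, |a p.1 - b p.1| ∂(π ⊗ₘ κ) :=
    hswint (fun p => |a p.1 - b p.1|)
  rw [e4] at e3
  rw [e1]
  have := mul_le_mul_of_nonneg_left hwK hℓ
  nlinarith

lemma sol_measurable {V : Type*} [MeasurableSpace V]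
    (κ : Kernel V V) [IsFiniteKernel κ] (G : V → V → ℝ → ℝ → ℝ)
    (hGmeas : Measurable fun p : (V × V) × ℝ × ℝ => G p.1.1 p.1.2 p.2.1 p.2.2)
    (u : ℝ → V → ℝ) (hu : Measurable (fun p : ℝ × V => u p.1 p.2)) :
    Measurable (fun p : ℝ × V => ∫ y, G p.2 y (u p.1 p.2) (u p.1 y) ∂(κ p.2)) := by
  have hm : Measurable (fun q : (ℝ × V) × V =>
      G q.1.2 q.2 (u q.1.1 q.1.2) (u q.1.1 q.2)) := by
    have h1 : Measurable (fun q : (ℝ × V) × V => u q.1.1 q.1.2) :=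
      hu.comp (measurable_fst)
    have h2 : Measurable (fun q : (ℝ × V) × V => u q.1.1 q.2) :=
      hu.comp (f := fun q : (ℝ × V) × V => (q.1.1, q.2)) (by fun_prop)
    exact hGmeas.comp (f := fun q : (ℝ × V) × V =>
      ((q.1.2, q.2), (u q.1.1 q.1.2, u q.1.1 q.2))) (by fun_prop)
  have := (hm.stronglyMeasurable.integral_kernel_prod_right'
    (κ := κ.comap (Prod.snd : ℝ × V → V) measurable_snd)).measurable
  simpa [Kernel.comap_apply] using this

lemma sol_integrable {V : Type*} [MeasurableSpace V]
    (π : Measure V) [IsFiniteMeasure π]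
    (κ : Kernel V V) [IsFiniteKernel κ] (G : V → V → ℝ → ℝ → ℝ)
    (hGmeas : Measurable fun p : (V × V) × ℝ × ℝ => G p.1.1 p.1.2 p.2.1 p.2.2)
    (u : ℝ → V → ℝ) (hu : IsPointwiseSolution π κ G u) (T : ℝ) (hT : 0 ≤ T) :
    Integrable (fun p : ℝ × V => ∫ y, G p.2 y (u p.1 p.2) (u p.1 y) ∂(κ p.2))
      ((volume.restrict (Set.Ioc 0 T)).prod π) := by
  have hm := sol_measurable κ G hGmeas u hu.1
  refine ⟨hm.aestronglyMeasurable, ?_⟩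
  have h := hu.2.2.1 (T + 1) (by linarith)
  rw [HasFiniteIntegral, lintegral_prod _ hm.enorm.aemeasurable]
  refine lt_of_le_of_lt ?_ h
  simp only [Real.enorm_eq_ofReal_abs]
  exact lintegral_mono_set (Set.Ioc_subset_Ioc_right (by linarith))

/-- `L¹`-stability with Gronwall rate `e^{2‖κ_V‖_∞ ℓ t}` for two pointwise solutions
of the Cauchy problem driven by a skew-symmetric, `ℓ`-dissipative field `G`. -/
theorem L1_stability_of_solutions
    {V : Type*} [MeasurableSpace V]
    (π : Measure V) [IsFiniteMeasure π]
    (κ : Kernel V V) [IsFiniteKernel κ]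
    (K : ℝ) (hK0 : 0 ≤ K) (hK : ∀ x, κ x Set.univ ≤ ENNReal.ofReal K)
    (hdb : (π ⊗ₘ κ).map Prod.swap = π ⊗ₘ κ)
    (M : ℝ) (hM : 0 < M)
    (G : V → V → ℝ → ℝ → ℝ)
    (hGmeas : Measurable fun p : (V × V) × ℝ × ℝ => G p.1.1 p.1.2 p.2.1 p.2.2)
    (hGcont : ∀ x y : V, Continuous fun q : ℝ × ℝ => G x y q.1 q.2)
    (hGbound : ∀ (x y : V) (a b : ℝ), |G x y a b| ≤ M * (1 + |a| + |b|))
    (hGskew : ∀ (x y : V) (a b : ℝ), G x y a b = - G y x b a)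
    (ℓ : ℝ) (hℓ : 0 ≤ ℓ)
    (hGdiss : ∀ (x y : V) (a a' b : ℝ), a ≤ a' →
      G x y a' b - G x y a b ≤ ℓ * (a' - a))
    (u v : ℝ → V → ℝ)
    (hu : IsPointwiseSolution π κ G u)
    (hv : IsPointwiseSolution π κ G v) :
    ∀ t : ℝ, 0 ≤ t →
      ∫ x, |u t x - v t x| ∂π
        ≤ Real.exp (2 * K * ℓ * t) * ∫ x, |u 0 x - v 0 x| ∂π := by
  intro T hT
  have hmu := sol_measurable κ G hGmeas u hu.1
  have hmv := sol_measurable κ G hGmeas v hv.1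
  have hiu := sol_integrable π κ G hGmeas u hu T hT
  have hiv := sol_integrable π κ G hGmeas v hv T hT
  set g : ℝ → V → ℝ := fun s x =>
    ∫ y, G x y (u s x) (u s y) ∂(κ x) - ∫ y, G x y (v s x) (v s y) ∂(κ x) with hg
  have hgi : Integrable (fun p : ℝ × V => g p.1 p.2) ((volume.restrict (Set.Ioc 0 T)).prod π) :=
    hiu.sub hiv
  have hut : ∀ t, Measurable (u t) := fun t => hu.1.comp measurable_prodMk_left
  have hvt : ∀ t, Measurable (v t) := fun t => hv.1.comp measurable_prodMk_left
  have hwi : ∀ t, 0 ≤ t → Integrable (fun x => |u t x - v t x|) π := fun t ht =>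
    ((hu.2.1 t ht).sub (hv.2.1 t ht)).abs
  -- pointwise facts
  have hpt : ∀ᵐ x ∂π, IntegrableOn (fun s => g s x) (Set.Ioc 0 T) ∧
      ∀ t ∈ Set.Icc 0 T, u t x - v t x = u 0 x - v 0 x + ∫ s in Set.Ioc (0:ℝ) t, g s x := by
    filter_upwards [hiu.prod_left_ae, hiv.prod_left_ae, hu.2.2.2, hv.2.2.2] with x h1 h2 h3 h4
    refine ⟨h1.sub h2, fun t ht => ?_⟩
    have hsub : Set.Ioc 0 t ⊆ Set.Ioc 0 T := Set.Ioc_subset_Ioc_right ht.2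
    have h1' : IntegrableOn (fun s => ∫ y, G x y (u s x) (u s y) ∂(κ x)) (Set.Ioc 0 t) :=
      IntegrableOn.mono_set h1 hsub
    have h2' : IntegrableOn (fun s => ∫ y, G x y (v s x) (v s y) ∂(κ x)) (Set.Ioc 0 t) :=
      IntegrableOn.mono_set h2 hsub
    rw [h3 t ht.1, h4 t ht.1, hg]
    simp only
    rw [integral_sub h1' h2']
    ring
  set f : ℝ → ℝ := fun t => ∫ x, |u t x - v t x| ∂π with hf
  have hfc : ContinuousOn f (Set.Icc 0 T) := by
    refine continuousOn_of_dominated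
      (bound := fun x => |u 0 x - v 0 x| + ∫ s in Set.Ioc (0:ℝ) T, |g s x|) ?_ ?_ ?_ ?_
    · exact fun t _ => ((hut t).sub (hvt t)).abs.aestronglyMeasurable
    · intro t ht
      filter_upwards [hpt] with x hx
      rw [Real.norm_eq_abs, abs_abs, hx.2 t ht]
      refine (abs_add_le _ _).trans ?_
      gcongr
      refine abs_integral_le_integral_abs.trans ?_
      exact setIntegral_mono_set hx.1.abs (Eventually.of_forall fun s => abs_nonneg _)
        (Set.Ioc_subset_Ioc_right ht.2).eventuallyLE
    · exact (hwi 0 le_rfl).add hgi.abs.integral_prod_right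
    · filter_upwards [hpt] with x hx
      have h1 := intervalIntegral.continuousOn_primitive
        ((integrableOn_Icc_iff_integrableOn_Ioc (by simp)).2 hx.1)
      exact ((continuousOn_const (c := u 0 x - v 0 x)).add h1).congr (fun t ht => hx.2 t ht) |>.abs
  refine my_gronwall (f := f) (by positivity) hT hfc fun t ht => ?_
  have hsub : Set.Ioc 0 t ⊆ Set.Ioc 0 T := Set.Ioc_subset_Ioc_right ht.2
  have hsm : Measurable (fun p : ℝ × V => Real.sign (u p.1 p.2 - v p.1 p.2)) :=
    measurable_rsign.comp (hu.1.sub hv.1)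
  have hgi' : Integrable (fun p : ℝ × V => g p.1 p.2) ((volume.restrict (Set.Ioc 0 t)).prod π) :=
    hgi.mono_measure (Measure.prod_mono (Measure.restrict_mono_set _ hsub) le_rfl)
  have hsi : Integrable (fun p : ℝ × V => Real.sign (u p.1 p.2 - v p.1 p.2) * g p.1 p.2)
      ((volume.restrict (Set.Ioc 0 t)).prod π) :=
    hgi'.bdd_mul hsm.aestronglyMeasurable (c := 1) (Eventually.of_forall fun p => abs_rsign_le _)
  have e1 : f t = f 0 + ∫ x, (∫ s in Set.Ioc (0:ℝ) t,
      Real.sign (u s x - v s x) * g s x) ∂π := by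
    simp only [hf]
    rw [← integral_add (hwi 0 le_rfl) hsi.integral_prod_right]
    apply integral_congr_ae
    filter_upwards [hpt] with x hx
    exact abs_formula (w := fun s => u s x - v s x) ht.1 (hx.1.mono_set hsub)
      fun s hs => hx.2 s ⟨hs.1, hs.2.trans ht.2⟩
  have e2 : ∫ x, (∫ s in Set.Ioc (0:ℝ) t, Real.sign (u s x - v s x) * g s x) ∂π
      = ∫ s in Set.Ioc (0:ℝ) t, ∫ x, Real.sign (u s x - v s x) * g s x ∂π :=
    (integral_integral_swap hsi).symm
  rw [e1, e2, ← integral_const_mul]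
  refine add_le_add le_rfl ?_
  refine setIntegral_mono_on hsi.integral_prod_left ?_ measurableSet_Ioc fun s hs => ?_
  · exact ((hfc.integrableOn_Icc).mono_set
      (Set.Ioc_subset_Icc_self.trans (Set.Icc_subset_Icc_right ht.2))).const_mul _
  · exact space_ineq π κ K hK0 hK hdb M G hGmeas hGbound hGskew ℓ hℓ hGdiss (u s) (v s)
      (hut s) (hvt s) (hu.2.1 s hs.1.le) (hv.2.1 s hs.1.le)
end

section
/- Let V be a measurable space, π a finite nonnegative measure on V, κ a bounded measurable kernel from V to itself with ‖κ_V‖_∞ := sup_x κ(x,V) < ∞, θ(dx dy) := π(dx)κ(x,dy), and assume detailed balance (θ symmetric under the swap (x,y) ↦ (y,x)). Let D: [0,∞)×[0,∞) → [0,+∞] be convex and lower semicontinuous. Let uₙ, u: V → [0,∞) be π-integrable functions such that ∫_B uₙ dπ → ∫_B u dπ for every measurable B ⊆ V (setwise convergence of the measures uₙ·π to u·π). Then ∬_{V×V} D(u(x),u(y)) θ(dx dy) ≤ liminf_{n→∞} ∬_{V×V} D(uₙ(x),uₙ(y)) θ(dx dy), where the integrals are taken in [0,+∞]. -/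
open MeasureTheory ProbabilityTheory Filter
open scoped ENNReal

lemma tendsto_bdd {V : Type*} [MeasurableSpace V]
    (π : Measure V) 
    (u : ℕ → V → ℝ) (ulim : V → ℝ)
    (hunonneg : ∀ n x, 0 ≤ u n x)
    (huint : ∀ n, Integrable (u n) π)
    (hlimnonneg : ∀ x, 0 ≤ ulim x)
    (hlimint : Integrable ulim π)
    (hsetwise : ∀ B : Set V, MeasurableSet B →
      Tendsto (fun n => ∫ x in B, u n x ∂π) atTop (nhds (∫ x in B, ulim x ∂π)))
    (g : V → ℝ) (hg : Measurable g) (hg0 : ∀ x, 0 ≤ g x) (C : ℝ) (hC : ∀ x, g x ≤ C) :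
    Tendsto (fun n => ∫ x, u n x * g x ∂π) atTop (nhds (∫ x, ulim x * g x ∂π)) := by
  have hU : Tendsto (fun n => ∫ x, u n x ∂π) atTop (nhds (∫ x, ulim x ∂π)) := by
    simpa using hsetwise Set.univ MeasurableSet.univ
  obtain ⟨M, hM⟩ := hU.bddAbove_range
  have hM1 : ∀ n, ∫ x, u n x ∂π ≤ M := fun n => hM ⟨n, rfl⟩
  have hM2 : ∫ x, ulim x ∂π ≤ M := le_of_tendsto' hU hM1
  have hM0 : 0 ≤ M := (integral_nonneg (hunonneg 0)).trans (hM1 0)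
  -- discretization
  let N : ℕ → V → ℕ := fun m x => ⌊(m:ℝ) * g x⌋₊
  have hN : ∀ m, Measurable (N m) := fun m => Nat.measurable_floor.comp (hg.const_mul _)
  have hNK : ∀ (m : ℕ) (x : V), N m x ∈ Finset.range (⌊(m:ℝ) * C⌋₊ + 1) := by
    intro m x
    rw [Finset.mem_range, Nat.lt_succ_iff]
    exact Nat.floor_le_floor (mul_le_mul_of_nonneg_left (hC x) (Nat.cast_nonneg m))
  have hdec : ∀ (m : ℕ) (w : V → ℝ), Integrable w π → 
      ∫ x, w x * ((N m x : ℝ) / m) ∂π = ∑ k ∈ Finset.range (⌊(m:ℝ) * C⌋₊ + 1),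
        ((k:ℝ) / m) * ∫ x in N m ⁻¹' {k}, w x ∂π := by
    intro m w hw
    have hms : ∀ k, MeasurableSet (N m ⁻¹' {k}) := fun k => hN m (MeasurableSet.singleton k)
    simp_rw [← integral_indicator (hms _), ← integral_const_mul]
    rw [← integral_finsetSum]
    · congr 1
      ext x
      rw [Finset.sum_eq_single_of_mem (N m x) (hNK m x)]
      · simp [mul_comm]
      · intro k _ hk
        rw [Set.indicator_of_notMem]
        · simp
        · simpa using hk.symm
    · intro k _
      exact (hw.indicator (hms k)).const_mul _
  have happ : ∀ (m : ℕ) (w : V → ℝ), 0 < m → Integrable w π → (∀ x, 0 ≤ w x) → ∫ x, w x ∂π ≤ M →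
      |∫ x, w x * g x ∂π - ∫ x, w x * ((N m x : ℝ) / m) ∂π| ≤ M / m := by
    intro m w hm hw hw0 hwM
    have hm' : (0:ℝ) < m := by exact_mod_cast hm
    have e1 : ∀ x, 0 ≤ g x - (N m x : ℝ) / m := by
      intro x
      rw [sub_nonneg, div_le_iff₀ hm', mul_comm]
      exact Nat.floor_le (mul_nonneg hm'.le (hg0 x))
    have e2 : ∀ x, g x - (N m x : ℝ) / m ≤ 1 / m := by
      intro x
      have := (Nat.lt_floor_add_one ((m:ℝ) * g x)).le
      rw [sub_le_iff_le_add, ← add_div, le_div_iff₀ hm', mul_comm, add_comm]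
      exact this
    have i1 : Integrable (fun x => w x * g x) π := by
      refine hw.mul_bdd (c := C) hg.aestronglyMeasurable (ae_of_all _ fun x => ?_)
      rw [Real.norm_of_nonneg (hg0 x)]; exact hC x
    have i2 : Integrable (fun x => w x * ((N m x : ℝ) / m)) π := by
      refine hw.mul_bdd (c := C) ?_ (ae_of_all _ fun x => ?_)
      · exact ((measurable_from_nat.comp (hN m)).div_const _).aestronglyMeasurable
      · rw [Real.norm_of_nonneg (by positivity)]; linarith [e1 x, hC x]
    rw [← integral_sub i1 i2, abs_of_nonneg]
    · calc _ ≤ ∫ x, w x * (1 / m) ∂π := by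
            refine integral_mono (i1.sub i2) (hw.mul_const _) fun x => ?_
            simp only [← mul_sub]
            exact mul_le_mul_of_nonneg_left (e2 x) (hw0 x)
        _ ≤ _ := by
            rw [integral_mul_const, mul_one_div]; gcongr
    · refine integral_nonneg fun x => ?_
      simp only [← mul_sub]
      exact mul_nonneg (hw0 x) (e1 x)
  have hconv : ∀ m, Tendsto (fun n => ∫ x, u n x * ((N m x : ℝ) / m) ∂π) atTop
      (nhds (∫ x, ulim x * ((N m x : ℝ) / m) ∂π)) := by
    intro m
    rw [hdec m _ hlimint]
    simp_rw [fun n => hdec m _ (huint n)]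
    exact tendsto_finsetSum _ fun k _ => (hsetwise _ (hN m (MeasurableSet.singleton k))).const_mul _
  rw [Metric.tendsto_atTop]
  intro ε hε
  obtain ⟨m, hm⟩ := exists_nat_gt (3 * M / ε)
  have hm0 : (0:ℝ) < m := lt_of_le_of_lt (by positivity) hm
  have hm1 : 0 < m := by exact_mod_cast hm0
  have hMm : M / m < ε / 3 := by
    rw [div_lt_iff₀ hε] at hm
    rw [div_lt_iff₀ hm0]; linarith
  obtain ⟨n0, hn0⟩ := Metric.tendsto_atTop.1 (hconv m) (ε/3) (by positivity)
  refine ⟨n0, fun n hn => ?_⟩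
  have h1 := hn0 n hn
  have h2 := happ m _ hm1 (huint n) (hunonneg n) (hM1 n)
  have h3 := happ m _ hm1 hlimint hlimnonneg hM2
  rw [Real.dist_eq] at *
  rw [abs_lt] at *
  rw [abs_le] at *
  constructor <;> linarith

lemma affine_exists (D : ℝ → ℝ → ℝ≥0∞)
    (hDconv : ∀ u v u' v' t : ℝ, 0 ≤ u → 0 ≤ v → 0 ≤ u' → 0 ≤ v' →
      0 ≤ t → t ≤ 1 →
      D (t * u + (1 - t) * u') (t * v + (1 - t) * v')
        ≤ ENNReal.ofReal t * D u v + ENNReal.ofReal (1 - t) * D u' v')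
    (hDlsc : LowerSemicontinuousOn (fun p : ℝ × ℝ => D p.1 p.2)
      (Set.Ici (0:ℝ) ×ˢ Set.Ici (0:ℝ))) (a b : ℝ) (ha : 0 ≤ a) (hb : 0 ≤ b) (r : ℝ) (hr : 0 ≤ r)
    (hrD : ENNReal.ofReal r < D a b) :
    ∃ α β γ : ℝ, (∀ x y, 0 ≤ x → 0 ≤ y → ENNReal.ofReal (α * x + β * y + γ) ≤ D x y) ∧
      r < α * a + β * b + γ := by
  let C : Set (ℝ × ℝ × ℝ) := {p | 0 ≤ p.1 ∧ 0 ≤ p.2.1 ∧ 0 ≤ p.2.2 ∧ D p.1 p.2.1 ≤ ENNReal.ofReal p.2.2}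
  have hCconv : Convex ℝ C := by
    rintro ⟨x, y, s⟩ ⟨hx, hy, hs, hD⟩ ⟨x', y', s'⟩ ⟨hx', hy', hs', hD'⟩ p q hp hq hpq
    obtain rfl : q = 1 - p := by linarith
    simp only at *
    refine ⟨?_, ?_, ?_, ?_⟩
    · simp only [Prod.fst_add, Prod.smul_fst, smul_eq_mul]; positivity
    · simp only [Prod.snd_add, Prod.fst_add, Prod.smul_fst, Prod.smul_snd, smul_eq_mul]; positivity
    · simp only [Prod.snd_add, Prod.smul_snd, smul_eq_mul]; positivity
    · simp only [Prod.snd_add, Prod.fst_add, Prod.smul_fst, Prod.smul_snd, smul_eq_mul]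
      refine (hDconv x y x' y' p hx hy hx' hy' hp (by linarith)).trans ?_
      rw [ENNReal.ofReal_add (by positivity) (by positivity), ENNReal.ofReal_mul hp,
        ENNReal.ofReal_mul hq]
      gcongr
  have hCclosed : IsClosed C := by
    rw [← isSeqClosed_iff_isClosed]
    rintro f ⟨x, y, s⟩ hf hlim
    have l1 : Tendsto (fun n => (f n).1) atTop (nhds x) := (continuous_fst.tendsto _).comp hlim
    have l2 : Tendsto (fun n => (f n).2.1) atTop (nhds y) :=
      ((continuous_fst.comp continuous_snd).tendsto _).comp hlim
    have l3 : Tendsto (fun n => (f n).2.2) atTop (nhds s) :=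
      ((continuous_snd.comp continuous_snd).tendsto _).comp hlim
    have hx : 0 ≤ x := ge_of_tendsto' l1 fun n => (hf n).1
    have hy : 0 ≤ y := ge_of_tendsto' l2 fun n => (hf n).2.1
    have hs : 0 ≤ s := ge_of_tendsto' l3 fun n => (hf n).2.2.1
    refine ⟨hx, hy, hs, ?_⟩
    by_contra hcon
    push Not at hcon
    obtain ⟨c, hc1, hc2⟩ := exists_between hcon
    have hev := hDlsc (x, y) ⟨hx, hy⟩ c hc2
    have hl : Tendsto (fun n => ((f n).1, (f n).2.1)) atTop
        (nhdsWithin (x, y) (Set.Ici (0:ℝ) ×ˢ Set.Ici (0:ℝ))) := by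
      refine tendsto_nhdsWithin_iff.2 ⟨l1.prodMk_nhds l2, Eventually.of_forall fun n => ?_⟩
      exact ⟨(hf n).1, (hf n).2.1⟩
    have h1 := hl.eventually hev
    have h2 := (ENNReal.tendsto_ofReal l3).eventually_lt_const hc1
    obtain ⟨n, hn1, hn2⟩ := (h1.and h2).exists
    exact absurd ((hf n).2.2.2) (not_le.2 (hn2.trans hn1))
  have hnot : (a, b, r) ∉ C := fun h => absurd h.2.2.2 (not_le.2 hrD)
  obtain ⟨F, c, hFc, hF⟩ := geometric_hahn_banach_point_closed hCconv hCclosed hnot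
  obtain ⟨α, β, γ, hFe⟩ : ∃ α β γ : ℝ, ∀ x y s, F (x, y, s) = α * x + β * y + γ * s := by
    refine ⟨F (1,0,0), F (0,1,0), F (0,0,1), fun x y s => ?_⟩
    have : (x, y, s) = x • ((1:ℝ),(0:ℝ),(0:ℝ)) + y • ((0:ℝ),(1:ℝ),(0:ℝ)) + s • ((0:ℝ),(0:ℝ),(1:ℝ)) := by
      simp
    rw [this, map_add, map_add, map_smul, map_smul, map_smul]
    simp only [smul_eq_mul]; ring
  rw [hFe] at hFc
  have hF' : ∀ x y s, 0 ≤ x → 0 ≤ y → 0 ≤ s → D x y ≤ ENNReal.ofReal s →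
      c < α * x + β * y + γ * s := by
    intro x y s hx hy hs h
    rw [← hFe]; exact hF _ ⟨hx, hy, hs, h⟩
  by_cases hemp : ∀ x y, 0 ≤ x → 0 ≤ y → D x y = ⊤
  · exact ⟨0, 0, r + 1, fun x y hx hy => by simp [hemp x y hx hy], by simp⟩
  push Not at hemp
  obtain ⟨x0, y0, hx0, hy0, hD0⟩ := hemp
  have hγ : 0 ≤ γ := by
    by_contra hneg
    push Not at hneg
    let K := α * x0 + β * y0 - c
    have := hF' x0 y0 ((D x0 y0).toReal + |K| / (-γ)) hx0 hy0 
      (add_nonneg ENNReal.toReal_nonneg (div_nonneg (abs_nonneg _) (by linarith))) (by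
        rw [← ENNReal.ofReal_toReal hD0]
        apply ENNReal.ofReal_le_ofReal
        rw [ENNReal.toReal_ofReal ENNReal.toReal_nonneg]
        have : 0 ≤ |K| / (-γ) := div_nonneg (abs_nonneg _) (by linarith)
        linarith)
    have e : γ * (|K| / (-γ)) = -|K| := by
      have hne : γ ≠ 0 := hneg.ne
      field_simp
    have e2 : γ * (D x0 y0).toReal ≤ 0 := mul_nonpos_of_nonpos_of_nonneg hneg.le ENNReal.toReal_nonneg
    have e3 : K ≤ |K| := le_abs_self K
    rw [mul_add, e] at this
    simp only [K] at *
    linarith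
  rcases hγ.eq_or_lt with h0 | hpos
  · subst h0
    simp only [zero_mul, add_zero] at hFc hF'
    let d := c - (α * a + β * b)
    have hd : 0 < d := by simp only [d]; linarith
    let M := (r + 1) / d
    have hM : 0 ≤ M := by positivity
    refine ⟨-(M * α), -(M * β), M * c, fun x y hx hy => ?_, ?_⟩
    · by_cases hD : D x y = ⊤
      · simp [hD]
      have := hF' x y _ hx hy ENNReal.toReal_nonneg (ENNReal.ofReal_toReal hD).ge
      rw [ENNReal.ofReal_of_nonpos]
      · simp
      · nlinarith
    · have : M * d = r + 1 := by simp only [M]; field_simp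
      simp only [d] at this
      linarith
  · refine ⟨-(α / γ), -(β / γ), c / γ, fun x y hx hy => ?_, ?_⟩
    · by_cases hD : D x y = ⊤
      · simp [hD]
      have := hF' x y _ hx hy ENNReal.toReal_nonneg (ENNReal.ofReal_toReal hD).ge
      rw [← ENNReal.ofReal_toReal hD]
      apply ENNReal.ofReal_le_ofReal
      have e : -(α / γ) * x + -(β / γ) * y + c / γ = (c - α * x - β * y) / γ := by ring
      rw [e, div_le_iff₀ hpos]; linarith
    · have e : -(α / γ) * a + -(β / γ) * b + c / γ = (c - α * a - β * b) / γ := by ring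
      rw [e, lt_div_iff₀ hpos]; linarith

lemma affine_seq (D : ℝ → ℝ → ℝ≥0∞)
    (hDconv : ∀ u v u' v' t : ℝ, 0 ≤ u → 0 ≤ v → 0 ≤ u' → 0 ≤ v' →
      0 ≤ t → t ≤ 1 →
      D (t * u + (1 - t) * u') (t * v + (1 - t) * v')
        ≤ ENNReal.ofReal t * D u v + ENNReal.ofReal (1 - t) * D u' v')
    (hDlsc : LowerSemicontinuousOn (fun p : ℝ × ℝ => D p.1 p.2)
      (Set.Ici (0:ℝ) ×ˢ Set.Ici (0:ℝ))) :
    ∃ f : ℕ → ℚ × ℚ × ℚ, ∀ x y, 0 ≤ x → 0 ≤ y →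
      D x y = ⨆ n, ENNReal.ofReal ((f n).1 * x + (f n).2.1 * y + (f n).2.2) := by
  let S : Set (ℚ × ℚ × ℚ) := {q | ∀ x y, 0 ≤ x → 0 ≤ y →
    ENNReal.ofReal (q.1 * x + q.2.1 * y + q.2.2) ≤ D x y}
  have hS : S.Nonempty := ⟨0, fun x y _ _ => by simp⟩
  obtain ⟨f, hf⟩ := S.to_countable.exists_eq_range hS
  refine ⟨f, fun x y hx hy => le_antisymm ?_ (iSup_le fun n => ?_)⟩
  · refine le_of_forall_lt fun r hr => ?_
    obtain ⟨r', h1, h2⟩ := exists_between hr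
    have hr' : r' ≠ ⊤ := h2.ne_top
    obtain ⟨α, β, γ, hl, hlt⟩ := affine_exists D hDconv hDlsc x y hx hy r'.toReal
      ENNReal.toReal_nonneg (by rwa [ENNReal.ofReal_toReal hr'])
    let δ := (α * x + β * y + γ - r'.toReal) / (x + y + 1)
    have hδ : 0 < δ := div_pos (by linarith) (by positivity)
    have hδe : δ * (x + y + 1) = α * x + β * y + γ - r'.toReal :=
      div_mul_cancel₀ _ (by positivity)
    obtain ⟨α', ha1, ha2⟩ := exists_rat_btwn (sub_lt_self α hδ)
    obtain ⟨β', hb1, hb2⟩ := exists_rat_btwn (sub_lt_self β hδ)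
    obtain ⟨γ', hc1, hc2⟩ := exists_rat_btwn (sub_lt_self γ hδ)
    have hmem : (α', β', γ') ∈ S := by
      intro x y hx hy
      refine le_trans (ENNReal.ofReal_le_ofReal ?_) (hl x y hx hy)
      simp only
      gcongr
    rw [hf] at hmem
    obtain ⟨n, hn⟩ := hmem
    refine lt_of_lt_of_le h1 (le_iSup_of_le n ?_)
    rw [hn, ← ENNReal.ofReal_toReal hr']
    apply ENNReal.ofReal_le_ofReal
    simp only
    nlinarith [mul_le_mul_of_nonneg_right ha1.le hx, mul_le_mul_of_nonneg_right hb1.le hy]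
  · have : f n ∈ S := hf ▸ ⟨n, rfl⟩
    exact this x y hx hy

lemma ENNReal_le_liminf_add (f g : ℕ → ℝ≥0∞) :
    liminf f atTop + liminf g atTop ≤ liminf (fun n => f n + g n) atTop := by
  simp only [liminf_eq_iSup_iInf_of_nat]
  rw [ENNReal.iSup_add_iSup_of_monotone]
  · refine iSup_mono fun n => le_iInf₂ fun i hi => ?_
    exact add_le_add (iInf₂_le i hi) (iInf₂_le i hi)
  · exact fun i j hij => le_iInf₂ fun k hk => iInf₂_le k (hij.trans hk)
  · exact fun i j hij => le_iInf₂ fun k hk => iInf₂_le k (hij.trans hk)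

lemma fst_tendsto {V : Type*} [MeasurableSpace V]
    (π : Measure V) [IsFiniteMeasure π]
    (κ : Kernel V V) [IsFiniteKernel κ]
    (w : V → ℝ) (hwm : Measurable w) (hw : Integrable w π) :
    Integrable (fun p : V × V => w p.1) (π ⊗ₘ κ) ∧
    ∀ A : Set (V × V), MeasurableSet A →
      ∫ p in A, w p.1 ∂(π ⊗ₘ κ) = ∫ x, w x * (κ x).real (Prod.mk x ⁻¹' A) ∂π := by
  have hi : Integrable (fun p : V × V => w p.1) (π ⊗ₘ κ) := by
    have hsm : AEStronglyMeasurable (fun p : V × V => w p.1) (π ⊗ₘ κ) :=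
      (hwm.comp measurable_fst).aestronglyMeasurable
    rw [Measure.integrable_compProd_iff hsm]
    refine ⟨ae_of_all _ fun x => integrable_const (w x), ?_⟩
    simp only [integral_const, smul_eq_mul]
    refine hw.norm.bdd_mul (c := κ.bound.toReal) ?_ (ae_of_all _ fun x => ?_)
    · exact (κ.measurable_coe MeasurableSet.univ).ennreal_toReal.aestronglyMeasurable
    · rw [Real.norm_of_nonneg measureReal_nonneg]
      exact ENNReal.toReal_mono κ.bound_ne_top (κ.measure_le_bound x _)
  refine ⟨hi, fun A hA => ?_⟩
  rw [← integral_indicator hA, Measure.integral_compProd (hi.indicator hA)]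
  congr 1
  ext x
  have : (fun y => A.indicator (fun p : V × V => w p.1) (x, y))
      = (Prod.mk x ⁻¹' A).indicator (fun _ => w x) := by
    ext y; by_cases h : (x, y) ∈ A
    · rw [Set.indicator_of_mem h, Set.indicator_of_mem (show y ∈ Prod.mk x ⁻¹' A from h)]
    · rw [Set.indicator_of_notMem h, Set.indicator_of_notMem (show y ∉ Prod.mk x ⁻¹' A from h)]
  rw [this, integral_indicator (measurable_prodMk_left hA), setIntegral_const, smul_eq_mul, mul_comm]

lemma liminf_aux {V : Type*} [MeasurableSpace V] (θ : Measure V)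
    (D : ℕ → V → ℝ≥0∞) (l : ℕ → ℕ → V → ℝ) (L : ℕ → V → ℝ)
    (hL : ∀ k, Measurable (L k)) 
    (hLi : ∀ k, Integrable (L k) θ) (hli : ∀ k n, Integrable (l k n) θ)
    (hle : ∀ k n p, ENNReal.ofReal (l k n p) ≤ D n p)
    (hconv : ∀ k (A : Set V), MeasurableSet A →
      Tendsto (fun n => ∫ p in A, l k n p ∂θ) atTop (nhds (∫ p in A, L k p ∂θ))) :
    ∫⁻ p, ⨆ k, ENNReal.ofReal (L k p) ∂θ ≤ liminf (fun n => ∫⁻ p, D n p ∂θ) atTop := by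
  have hbase : ∀ k (A : Set V), MeasurableSet A → ∫⁻ p in A, ENNReal.ofReal (L k p) ∂θ
      ≤ liminf (fun n => ∫⁻ p in A, D n p ∂θ) atTop := by
    intro k A hA
    have hB : MeasurableSet {p | 0 ≤ L k p} := measurableSet_le measurable_const (hL k)
    rw [← lintegral_inter_add_sdiff _ A hB]
    have hz : ∫⁻ p in A \ {p | 0 ≤ L k p}, ENNReal.ofReal (L k p) ∂θ = 0 := by
      rw [setLIntegral_congr_fun (g := fun _ => 0) (hA.diff hB), lintegral_zero]
      intro p hp
      exact ENNReal.ofReal_of_nonpos (not_le.1 hp.2).le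
    rw [hz, add_zero, ← ofReal_integral_eq_lintegral_ofReal (hLi k).integrableOn
      ((ae_restrict_iff' (hA.inter hB)).2 (ae_of_all _ fun p hp => hp.2))]
    rw [← (ENNReal.tendsto_ofReal (hconv k _ (hA.inter hB))).liminf_eq]
    refine liminf_le_liminf (Eventually.of_forall fun n => ?_)
    calc _ ≤ ENNReal.ofReal (∫ p in A ∩ {p | 0 ≤ L k p}, max (l k n p) 0 ∂θ) := by
          apply ENNReal.ofReal_le_ofReal
          exact integral_mono (hli k n).integrableOn (hli k n).integrableOn.pos_part
            fun p => le_max_left _ _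
      _ = ∫⁻ p in A ∩ {p | 0 ≤ L k p}, ENNReal.ofReal (max (l k n p) 0) ∂θ :=
          ofReal_integral_eq_lintegral_ofReal (hli k n).integrableOn.pos_part
            (ae_of_all _ fun p => le_max_right _ _)
      _ ≤ ∫⁻ p in A ∩ {p | 0 ≤ L k p}, D n p ∂θ := by
          refine lintegral_mono fun p => ?_
          simpa using hle k n p
      _ ≤ _ := lintegral_mono_set Set.inter_subset_left
  let G : ℕ → V → ℝ≥0∞ := fun N p => (partialSups fun k => ENNReal.ofReal (L k p)) N
  have hG0 : ∀ p, G 0 p = ENNReal.ofReal (L 0 p) := fun p => partialSups_zero _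
  have hGs : ∀ N p, G (N + 1) p = max (G N p) (ENNReal.ofReal (L (N + 1) p)) := 
    fun N p => partialSups_add_one _ _
  have hGm : ∀ N, Measurable (G N) := by
    intro N
    induction N with
    | zero => simp_rw [show G 0 = _ from funext hG0]; exact (hL 0).ennreal_ofReal
    | succ N ih => 
      rw [show G (N + 1) = _ from funext (hGs N)]
      exact ih.max (hL _).ennreal_ofReal
  have hfin : ∀ N (A : Set V), MeasurableSet A → ∫⁻ p in A, G N p ∂θ
      ≤ liminf (fun n => ∫⁻ p in A, D n p ∂θ) atTop := by
    intro N
    induction N with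
    | zero => intro A hA; simp_rw [hG0]; exact hbase 0 A hA
    | succ N ih =>
      intro A hA
      have hB : MeasurableSet {p | G N p ≤ ENNReal.ofReal (L (N + 1) p)} :=
        measurableSet_le (hGm N) (hL _).ennreal_ofReal
      rw [← lintegral_inter_add_sdiff _ A hB]
      rw [setLIntegral_congr_fun (g := fun p => ENNReal.ofReal (L (N + 1) p)) (hA.inter hB)
        (fun p hp => by simp only [hGs]; exact max_eq_right hp.2),
        setLIntegral_congr_fun (g := G N) (hA.diff hB)
        (fun p hp => by simp only [hGs]; exact max_eq_left (not_le.1 hp.2).le)]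
      refine (add_le_add (hbase _ _ (hA.inter hB)) (ih _ (hA.diff hB))).trans ?_
      simp_rw [fun n => (lintegral_inter_add_sdiff (μ := θ) (D n) A hB).symm]
      exact ENNReal_le_liminf_add _ _
  have hsup : ∀ p, ⨆ k, ENNReal.ofReal (L k p) = ⨆ N, G N p := fun p =>
    (iSup_partialSups_eq _).symm
  simp_rw [hsup]
  rw [lintegral_iSup hGm (fun i j hij p => (partialSups _).monotone hij)]
  refine iSup_le fun N => ?_
  simpa using hfin N Set.univ MeasurableSet.univ

/-- Lower semicontinuity of the Fisher-information-type functional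
`ρ = u·π ↦ ∬ D(u(x),u(y)) θ(dx dy)` with respect to setwise convergence of the
measures `uₙ·π`, for convex lower semicontinuous `D : [0,∞)² → [0,+∞]`. -/
theorem fisher_information_lsc
    {V : Type*} [MeasurableSpace V]
    (π : Measure V) [IsFiniteMeasure π]
    (κ : Kernel V V) [IsFiniteKernel κ]
    (hdb : (π ⊗ₘ κ).map Prod.swap = π ⊗ₘ κ)
    (D : ℝ → ℝ → ℝ≥0∞)
    (hDconv : ∀ u v u' v' t : ℝ, 0 ≤ u → 0 ≤ v → 0 ≤ u' → 0 ≤ v' →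
      0 ≤ t → t ≤ 1 →
      D (t * u + (1 - t) * u') (t * v + (1 - t) * v')
        ≤ ENNReal.ofReal t * D u v + ENNReal.ofReal (1 - t) * D u' v')
    (hDlsc : LowerSemicontinuousOn (fun p : ℝ × ℝ => D p.1 p.2)
      (Set.Ici (0:ℝ) ×ˢ Set.Ici (0:ℝ)))
    (u : ℕ → V → ℝ) (ulim : V → ℝ)
    (humeas : ∀ n, Measurable (u n)) (hunonneg : ∀ n x, 0 ≤ u n x)
    (huint : ∀ n, Integrable (u n) π)
    (hlimmeas : Measurable ulim) (hlimnonneg : ∀ x, 0 ≤ ulim x)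
    (hlimint : Integrable ulim π)
    (hsetwise : ∀ B : Set V, MeasurableSet B →
      Tendsto (fun n => ∫ x in B, u n x ∂π) atTop (nhds (∫ x in B, ulim x ∂π))) :
    ∫⁻ p : V × V, D (ulim p.1) (ulim p.2) ∂(π ⊗ₘ κ)
      ≤ liminf (fun n => ∫⁻ p : V × V, D (u n p.1) (u n p.2) ∂(π ⊗ₘ κ)) atTop := by
  obtain ⟨f, hf⟩ := affine_seq D hDconv hDlsc
  have hmp : MeasurePreserving (Prod.swap : V × V → V × V) (π ⊗ₘ κ) (π ⊗ₘ κ) :=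
    ⟨measurable_swap, hdb⟩
  have hfst : ∀ A : Set (V × V), MeasurableSet A →
      Tendsto (fun n => ∫ p in A, u n p.1 ∂(π ⊗ₘ κ)) atTop
        (nhds (∫ p in A, ulim p.1 ∂(π ⊗ₘ κ))) := by
    intro A hA
    rw [(fst_tendsto π κ ulim hlimmeas hlimint).2 A hA]
    simp_rw [fun n => (fst_tendsto π κ (u n) (humeas n) (huint n)).2 A hA]
    refine tendsto_bdd π u ulim hunonneg huint hlimnonneg hlimint hsetwise _ ?_
      (fun x => measureReal_nonneg) κ.bound.toReal ?_
    · exact (Kernel.measurable_kernel_prodMk_left hA).ennreal_toReal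
    · exact fun x => ENNReal.toReal_mono κ.bound_ne_top (κ.measure_le_bound x _)
  have hsi : ∀ w : V → ℝ, Measurable w → Integrable w π →
      Integrable (fun p : V × V => w p.2) (π ⊗ₘ κ) := fun w hwm hw =>
    hmp.integrable_comp_of_integrable (fst_tendsto π κ w hwm hw).1
  have hse : ∀ (w : V → ℝ) (A : Set (V × V)),
      ∫ p in A, w p.2 ∂(π ⊗ₘ κ) = ∫ p in Prod.swap ⁻¹' A, w p.1 ∂(π ⊗ₘ κ) := by
    intro w A
    exact (hmp.setIntegral_preimage_emb MeasurableEquiv.prodComm.measurableEmbedding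
      (fun p => w p.2) A).symm
  have hsnd : ∀ A : Set (V × V), MeasurableSet A →
      Tendsto (fun n => ∫ p in A, u n p.2 ∂(π ⊗ₘ κ)) atTop
        (nhds (∫ p in A, ulim p.2 ∂(π ⊗ₘ κ))) := by
    intro A hA
    simp_rw [hse]
    exact hfst _ (measurable_swap hA)
  have hint : ∀ (w : V → ℝ), Measurable w → Integrable w π → ∀ a b c : ℝ,
      Integrable (fun p : V × V => a * w p.1 + b * w p.2 + c) (π ⊗ₘ κ) := fun w hwm hw a b c =>
    (((fst_tendsto π κ w hwm hw).1.const_mul a).add ((hsi w hwm hw).const_mul b)).add (integrable_const c)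
  have hval : ∀ (w : V → ℝ), Measurable w → Integrable w π → ∀ (a b c : ℝ) (A : Set (V × V)),
      ∫ p in A, (a * w p.1 + b * w p.2 + c) ∂(π ⊗ₘ κ) =
        a * ∫ p in A, w p.1 ∂(π ⊗ₘ κ) + b * ∫ p in A, w p.2 ∂(π ⊗ₘ κ)
          + (π ⊗ₘ κ).real A * c := by
    intro w hwm hw a b c A
    have i1 := ((fst_tendsto π κ w hwm hw).1.const_mul a).integrableOn (s := A)
    have i2 := ((hsi w hwm hw).const_mul b).integrableOn (s := A)
    have i3 : IntegrableOn (fun p : V × V => a * w p.1 + b * w p.2) A (π ⊗ₘ κ) := i1.add i2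
    rw [integral_add i3 (integrable_const c), integral_add i1 i2, integral_const_mul,
      integral_const_mul, setIntegral_const, smul_eq_mul]
  simp_rw [fun p : V × V => hf _ _ (hlimnonneg p.1) (hlimnonneg p.2)]
  refine liminf_aux (π ⊗ₘ κ) (fun n p => D (u n p.1) (u n p.2))
    (fun k n p => (f k).1 * u n p.1 + (f k).2.1 * u n p.2 + (f k).2.2)
    (fun k p => (f k).1 * ulim p.1 + (f k).2.1 * ulim p.2 + (f k).2.2) ?_ ?_ ?_ ?_ ?_
  · intro k
    fun_prop
  · exact fun k => hint _ hlimmeas hlimint _ _ _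
  · exact fun k n => hint _ (humeas n) (huint n) _ _ _
  · intro k n p
    rw [hf _ _ (hunonneg n p.1) (hunonneg n p.2)]
    exact le_iSup (fun k => ENNReal.ofReal ((f k).1 * u n p.1 + (f k).2.1 * u n p.2 + (f k).2.2)) k
  · intro k A hA
    rw [hval _ hlimmeas hlimint]
    simp_rw [fun n => hval _ (humeas n) (huint n)]
    exact (((hfst A hA).const_mul _).add ((hsnd A hA).const_mul _)).add_const _
end

section
/- Let Y be a measurable space and let ψ: [0,∞) → [0,∞) be convex and lower semicontinuous, with recession slope ψ^∞ := lim_{t→∞} ψ(t)/t ∈ [0,+∞]. For finite nonnegative measures μ, ν on Y, writing μ = (dμ/dν)·ν + μ^⊥ for the Lebesgue decomposition of μ with respect to ν, define F_ψ(μ|ν) := ∫_Y ψ(dμ/dν) dν + ψ^∞ · μ^⊥(Y) ∈ [0,+∞] (with the convention (+∞)·0 = 0). If (μₙ), (νₙ) are sequences of finite nonnegative measures converging setwise to μ and ν respectively (i.e. μₙ(B) → μ(B) and νₙ(B) → ν(B) for every measurable B ⊆ Y), then F_ψ(μ|ν) ≤ liminf_{n→∞} F_ψ(μₙ|νₙ).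 -/
open MeasureTheory Filter
open scoped ENNReal

/-- The entropy-type functional `F_ψ(μ|ν) = ∫ ψ(dμ/dν) dν + ψ^∞·μ^⊥(Y)`, where
`dμ/dν` is the Radon–Nikodym density of the absolutely continuous part of `μ`
with respect to `ν`, `μ^⊥` is the singular part, and `ψinf ∈ [0,+∞]` is the
recession slope of `ψ` (with the convention `(+∞)·0 = 0`). -/
noncomputable def entFun {Y : Type*} [MeasurableSpace Y] (ψ : ℝ → ℝ)
    (ψinf : ℝ≥0∞) (μ ν : Measure Y) : ℝ≥0∞ :=
  (∫⁻ y, ENNReal.ofReal (ψ ((μ.rnDeriv ν y).toReal)) ∂ν)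
    + ψinf * (μ.singularPart ν) Set.univ

lemma aux_affine_nat (ψ : ℝ → ℝ)
    (hψconv : ConvexOn ℝ (Set.Ici 0) ψ)
    (hψlsc : LowerSemicontinuousOn ψ (Set.Ici 0)) :
    ∃ a b : ℕ → ℝ, (∀ i, ∀ t : ℝ, 0 ≤ t → a i * t + b i ≤ ψ t) ∧
      ∀ t : ℝ, 0 ≤ t → ENNReal.ofReal (ψ t) ≤ ⨆ i, ENNReal.ofReal (a i * t + b i) := by
  obtain ⟨l, c, h1, h2⟩ := hψconv.sSup_of_nat_affine_eq (𝕜 := ℝ) isClosed_Ici hψlsc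
  have hl : ∀ i t, l i 1 * t = l i t := by
    intro i t
    rw [mul_comm, ← smul_eq_mul, ← map_smul, smul_eq_mul, mul_one]
  refine ⟨fun i => l i 1, c, fun i t ht => ?_, fun t ht => ?_⟩
  · have := h1 i ⟨t, ht⟩
    simpa [hl] using this
  · have h3 := congrFun h2 ⟨t, ht⟩
    rw [iSup_apply] at h3
    simp only [hl]
    have h4 : ψ t = ⨆ i, (l i t + c i) := by simpa using h3.symm
    refine le_of_forall_lt fun x hx => ?_
    have hx1 : x ≠ ⊤ := hx.ne_top
    have hx2 : x.toReal < ψ t := (ENNReal.lt_ofReal_iff_toReal_lt hx1).1 hx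
    rw [h4] at hx2
    obtain ⟨i, hi⟩ := exists_lt_of_lt_ciSup hx2
    exact lt_of_lt_of_le ((ENNReal.lt_ofReal_iff_toReal_lt hx1).2 hi)
      (le_iSup (fun i => ENNReal.ofReal (l i t + c i)) i)

lemma aux_ofReal_integral_le {Y : Type*} [MeasurableSpace Y] (ν : Measure Y) (g : Y → ℝ)
    (hg : Integrable g ν) :
    ENNReal.ofReal (∫ y, g y ∂ν) ≤ ∫⁻ y, ENNReal.ofReal (g y) ∂ν := by
  rw [integral_eq_lintegral_pos_part_sub_lintegral_neg_part hg]
  refine (ENNReal.ofReal_le_ofReal (sub_le_self _ ENNReal.toReal_nonneg)).trans ?_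
  exact ENNReal.ofReal_toReal_le

lemma aux_decomp {Y : Type*} [MeasurableSpace Y] (μ ν : Measure Y)
    [IsFiniteMeasure μ] [IsFiniteMeasure ν] (a b : ℝ) (B : Set Y) (hB : MeasurableSet B) :
    a * μ.real B + b * ν.real B
      = (∫ y in B, (a * (μ.rnDeriv ν y).toReal + b) ∂ν) + a * (μ.singularPart ν).real B := by
  have h1 : μ.real B = (∫ y in B, (μ.rnDeriv ν y).toReal ∂ν) + (μ.singularPart ν).real B := by
    rw [Measure.setIntegral_toReal_rnDeriv_eq_withDensity' hB]
    conv_lhs => rw [← Measure.rnDeriv_add_singularPart μ ν]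
    rw [measureReal_add_apply]
  have hi : Integrable (fun y => (μ.rnDeriv ν y).toReal) (ν.restrict B) :=
    Measure.integrable_toReal_rnDeriv.restrict
  rw [integral_add (hi.const_mul a) (integrable_const b), integral_const_mul, h1]
  simp
  ring

lemma aux_affine_le {Y : Type*} [MeasurableSpace Y] (ψ : ℝ → ℝ) (ψinf : ℝ≥0∞) (μ ν : Measure Y)
    [IsFiniteMeasure μ] [IsFiniteMeasure ν] (a b : ℝ) (B : Set Y) (hB : MeasurableSet B)
    (hab : ∀ t : ℝ, 0 ≤ t → a * t + b ≤ ψ t) (ha : ENNReal.ofReal a ≤ ψinf) :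
    ENNReal.ofReal (a * μ.real B + b * ν.real B) ≤
      (∫⁻ y in B, ENNReal.ofReal (ψ ((μ.rnDeriv ν y).toReal)) ∂ν)
        + ψinf * (μ.singularPart ν) B := by
  rw [aux_decomp μ ν a b B hB]
  refine ENNReal.ofReal_add_le.trans (add_le_add ?_ ?_)
  · have hi : Integrable (fun y => (μ.rnDeriv ν y).toReal) (ν.restrict B) :=
      Measure.integrable_toReal_rnDeriv.restrict
    refine (aux_ofReal_integral_le _ _ ((hi.const_mul a).add (integrable_const b))).trans ?_
    exact lintegral_mono fun y => ENNReal.ofReal_le_ofReal (hab _ ENNReal.toReal_nonneg)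
  · rw [ENNReal.ofReal_mul' measureReal_nonneg, ofReal_measureReal]
    gcongr

lemma aux_slope (ψ : ℝ → ℝ) (ψinf : ℝ≥0∞)
    (hψinf : Tendsto (fun t : ℝ => ENNReal.ofReal (ψ t / t)) atTop (nhds ψinf))
    (a b : ℝ) (hab : ∀ t : ℝ, 0 ≤ t → a * t + b ≤ ψ t) : ENNReal.ofReal a ≤ ψinf := by
  have h1 : Tendsto (fun t : ℝ => ENNReal.ofReal (a + b / t)) atTop (nhds (ENNReal.ofReal a)) := by
    refine ENNReal.tendsto_ofReal ?_
    simpa using (tendsto_const_nhds (x := a)).add (tendsto_const_nhds.div_atTop tendsto_id)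
  refine le_of_tendsto_of_tendsto h1 hψinf ?_
  filter_upwards [eventually_gt_atTop 0] with t ht
  refine ENNReal.ofReal_le_ofReal ?_
  rw [le_div_iff₀ ht]
  have := hab t ht.le
  field_simp
  linarith

lemma aux_minorant (ψ : ℝ → ℝ) (hψnonneg : ∀ r : ℝ, 0 ≤ r → 0 ≤ ψ r) (ψinf : ℝ≥0∞)
    (hψinf : Tendsto (fun t : ℝ => ENNReal.ofReal (ψ t / t)) atTop (nhds ψinf))
    (c : ℝ≥0∞) (hc : c < ψinf) :
    ∃ b : ℝ, ∀ t : ℝ, 0 ≤ t → c.toReal * t + b ≤ ψ t := by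
  have h1 := hψinf.eventually (lt_mem_nhds hc)
  obtain ⟨T, hT⟩ := eventually_atTop.1 h1
  have hc0 : 0 ≤ c.toReal := ENNReal.toReal_nonneg
  refine ⟨-(c.toReal * max T 1), fun t ht => ?_⟩
  rcases le_total t (max T 1) with h | h
  · have := hψnonneg t ht
    have := mul_le_mul_of_nonneg_left h hc0
    linarith
  · have h2 := hT t ((le_max_left _ _).trans h)
    have ht1 : 0 < t := lt_of_lt_of_le one_pos ((le_max_right _ _).trans h)
    have h3 := (ENNReal.lt_ofReal_iff_toReal_lt hc.ne_top).1 h2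
    rw [lt_div_iff₀ ht1] at h3
    have : 0 ≤ c.toReal * max T 1 := mul_nonneg hc0 (by positivity)
    linarith

/-- A superadditive set function dominating the integrals of countably many densities
dominates the integral of their supremum. -/
lemma aux_sup {Y : Type*} [MeasurableSpace Y] (ν : Measure Y) (L : Set Y → ℝ≥0∞)
    (hL : ∀ A B : Set Y, MeasurableSet A → MeasurableSet B → Disjoint A B →
      L A + L B ≤ L (A ∪ B))
    (S : Set Y) (hS : MeasurableSet S)
    (g : ℕ → Y → ℝ≥0∞) (hg : ∀ i, Measurable (g i))
    (hgL : ∀ i, ∀ B ⊆ S, MeasurableSet B → ∫⁻ y in B, g i y ∂ν ≤ L B) :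
    ∫⁻ y in S, (⨆ i, g i y) ∂ν ≤ L S := by
  have hm : ∀ N, Measurable (partialSups g N) := by
    intro N
    induction N with
    | zero => simpa using hg 0
    | succ n ih => rw [partialSups_add_one]; exact ih.sup (hg _)
  have h : ∀ N, ∀ B ⊆ S, MeasurableSet B → ∫⁻ y in B, partialSups g N y ∂ν ≤ L B := by
    intro N
    induction N with
    | zero => simpa using hgL 0
    | succ n ih =>
      intro B hBS hB
      rw [partialSups_add_one]
      set C := {y | partialSups g n y < g (n + 1) y} with hC
      have hCm : MeasurableSet C := measurableSet_lt (hm n) (hg _)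
      rw [← lintegral_inter_add_sdiff _ B hCm]
      have e1 : ∫⁻ y in B ∩ C, (partialSups g n ⊔ g (n + 1)) y ∂ν
          = ∫⁻ y in B ∩ C, g (n + 1) y ∂ν := by
        refine setLIntegral_congr_fun (hB.inter hCm) fun y hy => ?_
        exact sup_eq_right.2 (le_of_lt hy.2)
      have e2 : ∫⁻ y in B \ C, (partialSups g n ⊔ g (n + 1)) y ∂ν
          = ∫⁻ y in B \ C, partialSups g n y ∂ν := by
        refine setLIntegral_congr_fun (hB.diff hCm) fun y hy => ?_
        exact sup_eq_left.2 (not_lt.1 hy.2)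
      rw [e1, e2]
      calc _ ≤ L (B ∩ C) + L (B \ C) :=
            add_le_add (hgL _ _ (Set.inter_subset_left.trans hBS) (hB.inter hCm))
              (ih _ (Set.sdiff_subset.trans hBS) (hB.diff hCm))
        _ ≤ L ((B ∩ C) ∪ (B \ C)) := hL _ _ (hB.inter hCm) (hB.diff hCm)
              (Set.disjoint_sdiff_inter.symm)
        _ = L B := by rw [Set.inter_union_sdiff]
  have e : ∀ y, (⨆ i, g i y) = ⨆ N, partialSups g N y := by
    intro y
    rw [← iSup_apply, ← iSup_partialSups_eq, iSup_apply]
  simp_rw [e]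
  rw [lintegral_iSup hm (fun i j hij => (partialSups g).monotone hij)]
  exact iSup_le fun N => h N S subset_rfl hS

/-- Joint lower semicontinuity of `F_ψ(·|·)` with respect to setwise convergence
of both arguments, for convex lower semicontinuous nonnegative `ψ` on `[0,∞)`. -/
theorem entFun_lsc_setwise
    {Y : Type*} [MeasurableSpace Y]
    (ψ : ℝ → ℝ)
    (hψconv : ConvexOn ℝ (Set.Ici 0) ψ)
    (hψlsc : LowerSemicontinuousOn ψ (Set.Ici 0))
    (hψnonneg : ∀ r : ℝ, 0 ≤ r → 0 ≤ ψ r)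
    (ψinf : ℝ≥0∞)
    (hψinf : Tendsto (fun t : ℝ => ENNReal.ofReal (ψ t / t)) atTop (nhds ψinf))
    (μ ν : ℕ → Measure Y) (μlim νlim : Measure Y)
    [∀ n, IsFiniteMeasure (μ n)] [∀ n, IsFiniteMeasure (ν n)]
    [IsFiniteMeasure μlim] [IsFiniteMeasure νlim]
    (hμ : ∀ B : Set Y, MeasurableSet B →
      Tendsto (fun n => μ n B) atTop (nhds (μlim B)))
    (hν : ∀ B : Set Y, MeasurableSet B →
      Tendsto (fun n => ν n B) atTop (nhds (νlim B))) :
    entFun ψ ψinf μlim νlim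
      ≤ liminf (fun n => entFun ψ ψinf (μ n) (ν n)) atTop := by
  classical
  obtain ⟨a, b, hab, hsup⟩ := aux_affine_nat ψ hψconv hψlsc
  set m : ℕ → Set Y → ℝ≥0∞ := fun n B =>
    (∫⁻ y in B, ENNReal.ofReal (ψ (((μ n).rnDeriv (ν n) y).toReal)) ∂(ν n))
        + ψinf * ((μ n).singularPart (ν n)) B with hm
  set L : Set Y → ℝ≥0∞ := fun B => liminf (fun n => m n B) atTop with hLdef
  have hLadd : ∀ A B : Set Y, MeasurableSet A → MeasurableSet B → Disjoint A B →
      L A + L B ≤ L (A ∪ B) := by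
    intro A B hA hB hAB
    have h1 : ∀ n, m n (A ∪ B) = m n A + m n B := by
      intro n
      simp only [hm]
      rw [lintegral_union hB hAB, measure_union hAB hB, mul_add]
      ring
    simp only [hLdef, h1]
    rw [liminf_eq_iSup_iInf_of_nat, liminf_eq_iSup_iInf_of_nat, liminf_eq_iSup_iInf_of_nat]
    refine ENNReal.iSup_add_iSup_le fun i j => ?_
    refine le_iSup_of_le (max i j) (le_iInf₂ fun n hn => add_le_add ?_ ?_)
    · exact iInf₂_le n ((le_max_left i j).trans hn)
    · exact iInf₂_le n ((le_max_right i j).trans hn)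
  have hLaff : ∀ c d : ℝ, (∀ t : ℝ, 0 ≤ t → c * t + d ≤ ψ t) → ∀ B, MeasurableSet B →
      ENNReal.ofReal (c * μlim.real B + d * νlim.real B) ≤ L B := by
    intro c d hcd B hB
    have hT : Tendsto (fun n => ENNReal.ofReal (c * (μ n).real B + d * (ν n).real B)) atTop
        (nhds (ENNReal.ofReal (c * μlim.real B + d * νlim.real B))) := by
      refine ENNReal.tendsto_ofReal (Tendsto.add ?_ ?_)
      · exact ((ENNReal.tendsto_toReal (measure_ne_top _ _)).comp (hμ B hB)).const_mul c
      · exact ((ENNReal.tendsto_toReal (measure_ne_top _ _)).comp (hν B hB)).const_mul d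
    rw [← hT.liminf_eq]
    exact liminf_le_liminf (Eventually.of_forall fun n =>
      aux_affine_le ψ ψinf (μ n) (ν n) c d B hB hcd (aux_slope ψ ψinf hψinf c d hcd))
  have hLuniv : liminf (fun n => entFun ψ ψinf (μ n) (ν n)) atTop = L Set.univ := by
    simp [hLdef, hm, entFun]
  rw [hLuniv]
  have hsing := Measure.mutuallySingular_singularPart μlim νlim
  set S := hsing.nullSet with hSdef
  have hS : MeasurableSet S := hsing.measurableSet_nullSet
  have hS1 : (μlim.singularPart νlim) S = 0 := hsing.measure_nullSet
  have hS2 : νlim Sᶜ = 0 := hsing.measure_compl_nullSet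
  -- absolutely continuous part
  have hac : ∫⁻ y in S, ENNReal.ofReal (ψ ((μlim.rnDeriv νlim y).toReal)) ∂νlim ≤ L S := by
    refine (lintegral_mono fun y => hsup _ ENNReal.toReal_nonneg).trans ?_
    have hfm : Measurable fun y => (μlim.rnDeriv νlim y).toReal :=
      (Measure.measurable_rnDeriv _ _).ennreal_toReal
    have hgm : ∀ i, Measurable fun y => a i * (μlim.rnDeriv νlim y).toReal + b i :=
      fun i => (hfm.const_mul _).add_const _
    refine aux_sup νlim L hLadd S hS
      (fun i y => ENNReal.ofReal (a i * (μlim.rnDeriv νlim y).toReal + b i))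
      (fun i => (hgm i).ennreal_ofReal) ?_
    intro i B hBS hB
    set P := {y | 0 ≤ a i * (μlim.rnDeriv νlim y).toReal + b i} with hP
    have hPm : MeasurableSet P := measurableSet_le measurable_const (hgm i)
    have hint : Integrable (fun y => a i * (μlim.rnDeriv νlim y).toReal + b i) νlim :=
      (Measure.integrable_toReal_rnDeriv.const_mul _).add (integrable_const _)
    rw [← lintegral_inter_add_sdiff _ B hPm]
    have e2 : ∫⁻ y in B \ P, ENNReal.ofReal (a i * (μlim.rnDeriv νlim y).toReal + b i) ∂νlim
        = 0 := by
      rw [setLIntegral_congr_fun (g := fun _ => 0) (hB.diff hPm) fun y hy => ?_]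
      · simp
      · exact ENNReal.ofReal_of_nonpos (le_of_lt (not_le.1 hy.2))
    have hz : (μlim.singularPart νlim).real (B ∩ P) = 0 := by
      rw [measureReal_def, measure_mono_null (Set.inter_subset_left.trans hBS) hS1]
      simp
    have h3 := hLaff (a i) (b i) (hab i) (B ∩ P) (hB.inter hPm)
    rw [aux_decomp μlim νlim _ _ _ (hB.inter hPm), hz, mul_zero, add_zero,
      ofReal_integral_eq_lintegral_ofReal hint.restrict
        ((ae_restrict_iff' (hB.inter hPm)).2 (Eventually.of_forall fun y hy => hy.2))] at h3
    rw [e2, add_zero]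
    refine h3.trans ?_
    calc L (B ∩ P) ≤ L (B ∩ P) + L (B \ P) := le_self_add
      _ ≤ L ((B ∩ P) ∪ (B \ P)) := hLadd _ _ (hB.inter hPm) (hB.diff hPm)
            (Set.disjoint_sdiff_inter.symm)
      _ = L B := by rw [Set.inter_union_sdiff]
  have hsg : ψinf * (μlim.singularPart νlim) Sᶜ ≤ L Sᶜ := by
    refine ENNReal.mul_le_of_forall_lt fun c hc d hd => ?_
    refine (mul_le_mul_right hd.le c).trans ?_
    obtain ⟨e, he⟩ := aux_minorant ψ hψnonneg ψinf hψinf c hc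
    have h3 := hLaff _ e he Sᶜ hS.compl
    rw [aux_decomp μlim νlim _ _ _ hS.compl, Measure.restrict_eq_zero.2 hS2,
      integral_zero_measure, zero_add, ENNReal.ofReal_mul ENNReal.toReal_nonneg,
      ENNReal.ofReal_toReal hc.ne_top, ofReal_measureReal] at h3
    exact h3
  have hfin : entFun ψ ψinf μlim νlim
      = (∫⁻ y in S, ENNReal.ofReal (ψ ((μlim.rnDeriv νlim y).toReal)) ∂νlim)
        + ψinf * (μlim.singularPart νlim) Sᶜ := by
    unfold entFun
    rw [← lintegral_add_compl _ hS, Measure.restrict_eq_zero.2 hS2, lintegral_zero_measure,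
      add_zero, ← measure_add_measure_compl hS, hS1, zero_add]
  rw [hfin]
  calc _ ≤ L S + L Sᶜ := add_le_add hac hsg
    _ ≤ L (S ∪ Sᶜ) := hLadd _ _ hS hS.compl disjoint_compl_right
    _ = L Set.univ := by rw [Set.union_compl_self]
end
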